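/- For each m ∈ ℕ there is a constant c(m) > 0 such that for all d, n ∈ ℕ and every F ∈ 𝔉_d^s one has ρ_m(F^n, e(nF)) ≤ c(m) · n^{−1/2}. -/

import Mathlib

open MeasureTheory RealInnerProductSpace
open scoped ENNReal

noncomputable section

abbrev Euc (d : ℕ) := EuclideanSpace ℝ (Fin d)

/-- Convolution of two measures on an additive structure. -/
def mconv {α : Type*} [MeasurableSpace α] [Add α] (μ ν : Measure α) : Measure α :=
  (μ.prod ν).map (fun p => p.1 + p.2)

/-- Convolution power `μ^{*n}`, with `μ^{*0}` the Dirac measure at `0`. -/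
def convPow {α : Type*} [MeasurableSpace α] [AddMonoid α] (μ : Measure α) : ℕ → Measure α
  | 0 => Measure.dirac 0
  | n + 1 => mconv (convPow μ n) μ

/-- Convolution product of a finite family of measures. -/
def convProd {α : Type*} [MeasurableSpace α] [AddMonoid α] :
    ∀ {n : ℕ}, (Fin n → Measure α) → Measure α
  | 0, _ => Measure.dirac 0
  | n + 1, G => mconv (convProd (fun i : Fin n => G i.castSucc)) (G (Fin.last n))

/-- The compound Poisson measure `e(a·μ) = e^{-a} ∑_k a^k μ^{*k}/k!`. -/
def cpois {α : Type*} [MeasurableSpace α] [AddMonoid α] (a : ℝ) (μ : Measure α) : Measure α :=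
  Measure.sum fun k : ℕ =>
    (ENNReal.ofReal (Real.exp (-a) * a ^ k / k.factorial)) • convPow μ k

/-- A measure is symmetric if it is invariant under `x ↦ -x`. -/
def IsSymmMeasure {d : ℕ} (μ : Measure (Euc d)) : Prop :=
  μ.map (fun x => -x) = μ

/-- Characteristic function of a measure on `ℝ^d`. -/
def charFn {d : ℕ} (μ : Measure (Euc d)) (t : Euc d) : ℂ :=
  ∫ x, Complex.exp ((⟪t, x⟫ : ℂ) * Complex.I) ∂μ

/-- Characteristic function of a measure on `ℝ`. -/
def charFn1 (μ : Measure ℝ) (t : ℝ) : ℂ :=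
  ∫ x, Complex.exp (((t * x : ℝ) : ℂ) * Complex.I) ∂μ

/-- Convex polyhedra determined by the directions `t 1, …, t m`. -/
def polyhedraOn {d m : ℕ} (t : Fin m → Euc d) : Set (Set (Euc d)) :=
  {X | ∃ a b : Fin m → EReal,
    X = {x | ∀ j, a j ≤ ((⟪x, t j⟫ : ℝ) : EReal) ∧ ((⟪x, t j⟫ : ℝ) : EReal) ≤ b j}}

/-- The collection `𝔛_m` of convex polyhedra determined by `m` pairs of parallel hyperplanes. -/
def polyhedra (d m : ℕ) : Set (Set (Euc d)) :=
  {X | ∃ t : Fin m → Euc d, X ∈ polyhedraOn t}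

/-- The distance `ρ_m(G,H) = sup_{X ∈ 𝔛_m} |G{X} - H{X}|`. -/
def rhoPoly {d : ℕ} (m : ℕ) (G H : Measure (Euc d)) : ℝ :=
  ⨆ X ∈ polyhedra d m, |(G X).toReal - (H X).toReal|

/-- The Lévy concentration function `Q(μ, b) = sup_x μ[x, x+b]`. -/
def concFn (μ : Measure ℝ) (b : ℝ) : ℝ :=
  ⨆ x : ℝ, (μ (Set.Icc x (x + b))).toReal

/-- `q(H, X) = inf_{‖t‖=1} Q(𝓛(⟨ξ,t⟩), λ{⟨x,t⟩ : x ∈ X})` where `H = 𝓛(ξ)`. -/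
def qFn {d : ℕ} (H : Measure (Euc d)) (X : Set (Euc d)) : ℝ :=
  ⨅ t ∈ {t : Euc d | ‖t‖ = 1},
    concFn (H.map fun x => ⟪x, t⟫) (volume ((fun x => ⟪x, t⟫) '' X)).toReal

/-- The uniform (Kolmogorov) distance on `ℝ^d`. -/
def kolmDist {d : ℕ} (G H : Measure (Euc d)) : ℝ :=
  ⨆ x : Euc d, |(G {y | ∀ i, y i ≤ x i}).toReal - (H {y | ∀ i, y i ≤ x i}).toReal|

/-- The uniform (Kolmogorov) distance on `ℝ`. -/
def kolmDist1 (G H : Measure ℝ) : ℝ :=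
  ⨆ x : ℝ, |(G (Set.Iic x)).toReal - (H (Set.Iic x)).toReal|

end

noncomputable section

namespace S9

abbrev EE (m : ℕ) := Fin m → ℝ

/-- bounded measurable functions -/
def BM (m : ℕ) : Submodule ℝ (EE m → ℝ) where
  carrier := {f | Measurable f ∧ ∃ C, ∀ x, |f x| ≤ C}
  add_mem' := by
    rintro f g ⟨hf, C, hC⟩ ⟨hg, D, hD⟩
    exact ⟨hf.add hg, C + D, fun x => (abs_add_le _ _).trans (add_le_add (hC x) (hD x))⟩
  zero_mem' := ⟨measurable_const, 0, fun x => by simp⟩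
  smul_mem' := by
    rintro c f ⟨hf, C, hC⟩
    refine ⟨hf.const_smul c, |c| * C, fun x => ?_⟩
    simp only [Pi.smul_apply, smul_eq_mul, abs_mul]
    exact mul_le_mul_of_nonneg_left (hC x) (abs_nonneg _)

variable {m : ℕ}

instance : CoeFun (BM m) (fun _ => EE m → ℝ) := ⟨fun f => f.1⟩

def Bd (f : BM m) (c : ℝ) : Prop := ∀ x, |f x| ≤ c

lemma bm_meas (f : BM m) : Measurable (f : EE m → ℝ) := f.2.1
lemma bm_exBd (f : BM m) : ∃ C, Bd f C := f.2.2

lemma bm_integrable_comp {Ω : Type*} [MeasurableSpace Ω] (f : BM m) (μ : Measure Ω)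
    [IsFiniteMeasure μ] {φ : Ω → EE m} (hφ : Measurable φ) :
    Integrable (fun z => f (φ z)) μ := by
  obtain ⟨C, hC⟩ := bm_exBd f
  exact Integrable.of_bound ((bm_meas f).comp hφ).aestronglyMeasurable C
    (Filter.Eventually.of_forall fun x => by simpa using hC (φ x))

lemma bm_intg (f : BM m) (μ : Measure (EE m)) [IsFiniteMeasure μ] (x : EE m) :
    Integrable (fun z => f (x + z)) μ :=
  bm_integrable_comp f μ (measurable_const_add x)

def T (μ : Measure (EE m)) [IsFiniteMeasure μ] : Module.End ℝ (BM m) where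
  toFun f := ⟨fun x => ∫ z, f (x + z) ∂μ, by
    refine ⟨?_, ?_⟩
    · have h : StronglyMeasurable (fun p : EE m × EE m => f (p.1 + p.2)) :=
        ((bm_meas f).comp measurable_add).stronglyMeasurable
      exact (h.integral_prod_right (ν := μ)).measurable
    · obtain ⟨C, hC⟩ := bm_exBd f
      refine ⟨C * μ.real Set.univ, fun x => ?_⟩
      have := norm_integral_le_of_norm_le_const (μ := μ) (f := fun z => f (x + z)) (C := C)
        (Filter.Eventually.of_forall fun z => by simpa using hC (x + z))
      simpa using this⟩
  map_add' f g := by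
    ext x
    exact integral_add (bm_intg f μ x) (bm_intg g μ x)
  map_smul' c f := by
    ext x
    exact integral_const_mul c _

lemma T_apply (μ : Measure (EE m)) [IsFiniteMeasure μ] (f : BM m) (x : EE m) :
    T μ f x = ∫ z, f (x + z) ∂μ := rfl

lemma T_comm (μ ν : Measure (EE m)) [IsFiniteMeasure μ] [IsFiniteMeasure ν] :
    Commute (T μ) (T ν) := by
  ext f x
  change ∫ z, ∫ w, f (x + z + w) ∂ν ∂μ = ∫ w, ∫ z, f (x + w + z) ∂μ ∂ν
  rw [integral_integral_swap]
  · simp only [add_right_comm]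
  · exact bm_integrable_comp f (μ.prod ν) (φ := fun p => x + p.1 + p.2) (by fun_prop)

instance (μ ν : Measure (EE m)) [IsFiniteMeasure μ] [IsFiniteMeasure ν] :
    IsFiniteMeasure (mconv μ ν) := by unfold mconv; infer_instance

instance (μ ν : Measure (EE m)) [IsProbabilityMeasure μ] [IsProbabilityMeasure ν] :
    IsProbabilityMeasure (mconv μ ν) := by
  unfold mconv; exact Measure.isProbabilityMeasure_map (by fun_prop)

instance (μ : Measure (EE m)) [IsProbabilityMeasure μ] (n : ℕ) :
    IsProbabilityMeasure (convPow μ n) := by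
  induction n with
  | zero => unfold convPow; infer_instance
  | succ n ih => unfold convPow; infer_instance

lemma T_mconv (μ ν : Measure (EE m)) [IsFiniteMeasure μ] [IsFiniteMeasure ν] :
    T (mconv μ ν) = T μ * T ν := by
  ext f x
  change ∫ z, f (x + z) ∂(mconv μ ν) = ∫ z, ∫ w, f (x + z + w) ∂ν ∂μ
  unfold mconv
  rw [integral_map (f := fun z => f (x + z)) (by fun_prop) ((bm_meas f).comp (measurable_const_add x)).aestronglyMeasurable,
    integral_prod]
  · simp only [add_assoc]
  · exact bm_integrable_comp f (μ.prod ν) (φ := fun p => x + (p.1 + p.2)) (by fun_prop)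

lemma T_dirac : T (Measure.dirac (0 : EE m)) = 1 := by
  ext f x
  simp [T_apply]

lemma T_convPow (μ : Measure (EE m)) [IsProbabilityMeasure μ] (n : ℕ) :
    T (convPow μ n) = T μ ^ n := by
  induction n with
  | zero => simpa [convPow] using T_dirac
  | succ n ih =>
    rw [pow_succ, ← ih, ← T_mconv]; rfl

lemma Bd.T {f : BM m} {c : ℝ} (h : Bd f c) (μ : Measure (EE m)) [IsProbabilityMeasure μ] :
    Bd (S9.T μ f) c := by
  intro x
  have := norm_integral_le_of_norm_le_const (μ := μ) (f := fun z => f (x + z)) (C := c)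
        (Filter.Eventually.of_forall fun z => by simpa using h (x + z))
  rw [T_apply]
  simpa using this

lemma Bd.Tpow {f : BM m} {c : ℝ} (h : Bd f c) (μ : Measure (EE m)) [IsProbabilityMeasure μ]
    (n : ℕ) : Bd ((S9.T μ ^ n) f) c := by
  rw [← T_convPow]; exact h.T _

lemma Bd.add {f g : BM m} {c d : ℝ} (h : Bd f c) (h' : Bd g d) : Bd (f + g) (c + d) :=
  fun x => (abs_add_le _ _).trans (add_le_add (h x) (h' x))

lemma Bd.sub {f g : BM m} {c d : ℝ} (h : Bd f c) (h' : Bd g d) : Bd (f - g) (c + d) :=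
  fun x => (abs_sub _ _).trans (add_le_add (h x) (h' x))

lemma Bd.mono {f : BM m} {c d : ℝ} (h : Bd f c) (h' : c ≤ d) : Bd f d :=
  fun x => (h x).trans h'

lemma Bd.smul {f : BM m} {c : ℝ} (h : Bd f c) (a : ℝ) : Bd (a • f) (|a| * c) := fun x => by
  change |a * f x| ≤ _
  rw [abs_mul]; exact mul_le_mul_of_nonneg_left (h x) (abs_nonneg a)

lemma Bd.nonneg {f : BM m} {c : ℝ} (h : Bd f c) : 0 ≤ c := (abs_nonneg _).trans (h 0)

lemma Bd.sum {ι : Type*} (s : Finset ι) {f : ι → BM m} {c : ι → ℝ} (h : ∀ i ∈ s, Bd (f i) (c i)) :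
    Bd (∑ i ∈ s, f i) (∑ i ∈ s, c i) := by
  classical
  induction s using Finset.induction_on with
  | empty => intro x; simp
  | insert a s ha ih =>
    rw [Finset.sum_insert ha, Finset.sum_insert ha]
    exact (h a (by simp)).add (ih fun i hi => h i (by simp [hi]))

end S9

namespace S9
variable {m : ℕ}

lemma exists_dens (F V : Measure (EE m)) [IsFiniteMeasure F] [IsFiniteMeasure V] {lam : ℝ}
    (hl : 0 < lam) (h : ENNReal.ofReal lam • F ≤ V) :
    ∃ ρ : EE m → ℝ, Measurable ρ ∧ (∀ z, 0 ≤ ρ z) ∧ (∀ z, ρ z ≤ lam⁻¹) ∧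
      ∀ k : EE m → ℝ, ∫ z, k z ∂F = ∫ z, ρ z * k z ∂V := by
  have hF : ∀ s, F s ≤ ENNReal.ofReal lam⁻¹ * V s := by
    intro s
    have h1 := h s
    rw [Measure.smul_apply, smul_eq_mul] at h1
    calc F s = ENNReal.ofReal lam⁻¹ * (ENNReal.ofReal lam * F s) := by
          rw [← mul_assoc, ← ENNReal.ofReal_mul (by positivity), inv_mul_cancel₀ hl.ne']; simp
      _ ≤ _ := by gcongr
  have hac : F ≪ V := by
    intro s hs
    have := hF s
    rw [hs, mul_zero] at this
    exact le_antisymm this bot_le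
  have hleb : F.HaveLebesgueDecomposition V := Measure.haveLebesgueDecomposition_of_sigmaFinite F V
  have hle : F.rnDeriv V ≤ᵐ[V] fun _ => ENNReal.ofReal lam⁻¹ := by
    refine ae_le_of_forall_setLIntegral_le_of_sigmaFinite (Measure.measurable_rnDeriv _ _) ?_
    intro s hs _
    rw [Measure.setLIntegral_rnDeriv hac]
    simpa using hF s
  refine ⟨fun z => min (F.rnDeriv V z).toReal lam⁻¹, ?_, ?_, fun z => min_le_right _ _, ?_⟩
  · exact (Measure.measurable_rnDeriv _ _).ennreal_toReal.min measurable_const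
  · intro z; positivity
  · intro k
    rw [← integral_rnDeriv_smul hac]
    refine integral_congr_ae ?_
    filter_upwards [hle] with z hz
    have : (F.rnDeriv V z).toReal ≤ lam⁻¹ := by
      have := ENNReal.toReal_mono ENNReal.ofReal_ne_top hz
      rwa [ENNReal.toReal_ofReal (by positivity)] at this
    simp [min_eq_left this]

/-- joint law of `(S_n, ∑ g(ω_j))` -/
def J (V : Measure (EE m)) (g : EE m → ℝ) : ℕ → Measure (EE m × ℝ)
  | 0 => Measure.dirac 0
  | n + 1 => ((J V g n).prod V).map (fun p => (p.1.1 + p.2, p.1.2 + g p.2))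

variable (V : Measure (EE m)) [IsProbabilityMeasure V] {g : EE m → ℝ}

lemma J_prob (hg : Measurable g) (n : ℕ) : IsProbabilityMeasure (J V g n) := by
  induction n with
  | zero => unfold J; infer_instance
  | succ n ih =>
    unfold J
    exact Measure.isProbabilityMeasure_map (by fun_prop)

lemma J_bd (hg : Measurable g) {G : ℝ} (hG : ∀ z, |g z| ≤ G) (n : ℕ) :
    ∀ᵐ p ∂(J V g n), |p.2| ≤ n * G := by
  induction n with
  | zero => unfold J; rw [ae_dirac_iff]; · simp
            exact measurableSet_le (by fun_prop) (by fun_prop)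
  | succ n ih =>
    have := J_prob V hg n
    unfold J
    rw [ae_map_iff (by fun_prop) (measurableSet_le (by fun_prop) (by fun_prop))]
    have h2 : ∀ᵐ p ∂((J V g n).prod V), |p.1.2| ≤ n * G :=
      Measure.quasiMeasurePreserving_fst.ae ih
    filter_upwards [h2] with p hp
    push_cast
    refine (abs_add_le _ _).trans ?_
    linarith [hG p.2]

lemma J_succ_integral (hg : Measurable g) (n : ℕ) {k : EE m × ℝ → ℝ} (hk : Measurable k) 
    {C : ℝ} (hC : ∀ᵐ p ∂(J V g (n+1)), |k p| ≤ C) :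
    ∫ p, k p ∂(J V g (n+1)) = ∫ p, ∫ z, k (p.1 + z, p.2 + g z) ∂V ∂(J V g n) := by
  have := J_prob V hg n
  have hJ : J V g (n+1) = ((J V g n).prod V).map (fun p => (p.1.1 + p.2, p.1.2 + g p.2)) := rfl
  rw [hJ] at hC ⊢
  rw [ae_map_iff (by fun_prop) (measurableSet_le (by fun_prop) (by fun_prop))] at hC
  rw [integral_map (by fun_prop) hk.aestronglyMeasurable, integral_prod]
  have hm : Measurable fun p : (EE m × ℝ) × EE m => k (p.1.1 + p.2, p.1.2 + g p.2) := by fun_prop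
  exact Integrable.of_bound hm.aestronglyMeasurable C hC

lemma int_of_bd {α : Type*} [MeasurableSpace α] {μ : Measure α} [IsFiniteMeasure μ] {k : α → ℝ}
    (hk : Measurable k) {C : ℝ} (hC : ∀ x, |k x| ≤ C) : Integrable k μ :=
  Integrable.of_bound hk.aestronglyMeasurable C (Filter.Eventually.of_forall hC)

lemma J_fun (hg : Measurable g) (n : ℕ) : ∀ (f : BM m) (x : EE m),
    ∫ p, f (x + p.1) ∂(J V g n) = (T V ^ n) f x := by
  induction n with
  | zero =>
    intro f x
    unfold J
    rw [integral_dirac]; simp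
  | succ n ih =>
    intro f x
    obtain ⟨C, hC⟩ := bm_exBd f
    rw [J_succ_integral V hg n (k := fun p => f (x + p.1)) ((bm_meas f).comp (by fun_prop : Measurable fun p : EE m × ℝ => x + p.1)) (C := C)
      (Filter.Eventually.of_forall fun p => hC _)]
    rw [pow_succ]
    change _ = (T V ^ n) (T V f) x
    rw [← ih]
    simp only [T_apply, add_assoc]

lemma J_snd (hg : Measurable g) {G : ℝ} (hG : ∀ z, |g z| ≤ G) (h0 : ∫ z, g z ∂V = 0) (n : ℕ) :
    ∫ p, p.2 ^ 2 ∂(J V g n) = n * ∫ z, g z ^ 2 ∂V ∧ ∫ p, p.2 ∂(J V g n) = 0 := by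
  have hGi : Integrable g V := int_of_bd hg hG
  have hG2 : Integrable (fun z => g z ^ 2) V := by
    refine int_of_bd (C := G ^ 2) (by fun_prop) fun x => ?_
    rw [abs_pow]; exact pow_le_pow_left₀ (abs_nonneg _) (hG x) 2
  induction n with
  | zero => unfold J; constructor <;> rw [integral_dirac] <;> simp
  | succ n ih =>
    have := J_prob V hg n
    have hb := J_bd V hg hG (n+1)
    have hb' := J_bd V hg hG n
    have i1 : Integrable (fun p : EE m × ℝ => p.2) (J V g n) :=
      Integrable.of_bound (by fun_prop) _ hb'
    have i2 : Integrable (fun p : EE m × ℝ => p.2 ^ 2) (J V g n) := by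
      refine Integrable.of_bound (by fun_prop) ((n * G) ^ 2) ?_
      filter_upwards [hb'] with p hp
      rw [Real.norm_eq_abs, abs_pow]; exact pow_le_pow_left₀ (abs_nonneg _) hp 2
    constructor
    · rw [J_succ_integral V hg n (k := fun p => p.2 ^ 2) (by fun_prop) (C := ((n + 1 : ℕ) * G) ^ 2)]
      · have : ∀ p : EE m × ℝ, ∫ z, (p.2 + g z) ^ 2 ∂V = p.2 ^ 2 + ∫ z, g z ^ 2 ∂V := by
          intro p
          have : ∀ z, (p.2 + g z) ^ 2 = (p.2 ^ 2 + (2 * p.2) * g z) + g z ^ 2 := fun z => by ring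
          simp only [this]
          rw [integral_add _ hG2, integral_add (integrable_const _) (hGi.const_mul _),
            integral_const_mul, h0]
          · simp
          · exact (integrable_const _).add (hGi.const_mul _)
        simp only [this]
        rw [integral_add i2 (integrable_const _), ih.1]
        simp; ring
      · filter_upwards [hb] with p hp
        rw [abs_pow]; exact pow_le_pow_left₀ (abs_nonneg _) hp 2
    · rw [J_succ_integral V hg n (k := fun p => p.2) (by fun_prop) hb]
      have : ∀ p : EE m × ℝ, ∫ z, (p.2 + g z) ∂V = p.2 := by
        intro p
        rw [integral_add (integrable_const _) hGi, h0]; simp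
      simp only [this]
      exact ih.2

lemma J_mul (hg : Measurable g) {G : ℝ} (hG : ∀ z, |g z| ≤ G) (n : ℕ) : ∀ (f : BM m) (x : EE m),
    ∫ p, p.2 * f (x + p.1) ∂(J V g (n + 1)) = (n + 1) * ∫ z, g z * (T V ^ n) f (x + z) ∂V := by
  have key : ∀ n, ∀ (f : BM m) (x : EE m), ∫ p, p.2 * f (x + p.1) ∂(J V g (n + 1))
      = ∫ p, p.2 * (T V f) (x + p.1) ∂(J V g n) + ∫ z, g z * (T V ^ n) f (x + z) ∂V := by
    intro n f x
    have := J_prob V hg n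
    have hfm := bm_meas f
    obtain ⟨C, hC⟩ := bm_exBd f
    have hC0 : 0 ≤ C := (abs_nonneg _).trans (hC 0)
    have hGi : Integrable g V := int_of_bd hg hG
    have hb := J_bd V hg hG (n+1)
    have hb' := J_bd V hg hG n
    rw [J_succ_integral V hg n (k := fun p => p.2 * f (x + p.1)) (by fun_prop)
      (C := ((n + 1 : ℕ) * G) * C)]
    · have i3 : ∀ p : EE m × ℝ, Integrable (fun z => g z * f (x + (p.1 + z))) V := by
        intro p
        refine int_of_bd (C := G * C) (by fun_prop) fun z => ?_
        rw [abs_mul]; exact mul_le_mul (hG z) (hC _) (abs_nonneg _) ((abs_nonneg _).trans (hG z))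
      have e1 : ∀ p : EE m × ℝ, ∫ z, (p.2 + g z) * f (x + (p.1 + z)) ∂V =
          p.2 * (T V f) (x + p.1) + ∫ z, g z * f (x + (p.1 + z)) ∂V := by
        intro p
        simp only [add_mul]
        rw [integral_add _ (i3 p), integral_const_mul, T_apply]
        · simp only [add_assoc]
        · exact (bm_integrable_comp f V (φ := fun z => x + (p.1 + z)) (by fun_prop)).const_mul _
      simp only [e1]
      have i4 : Integrable (fun q : (EE m × ℝ) × EE m => g q.2 * f (x + (q.1.1 + q.2)))
          ((J V g n).prod V) := by
        refine int_of_bd (C := G * C) (by fun_prop) fun z => ?_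
        rw [abs_mul]; exact mul_le_mul (hG _) (hC _) (abs_nonneg _) ((abs_nonneg _).trans (hG 0))
      rw [integral_add _ i4.integral_prod_left, integral_integral_swap i4]
      · congr 1
        refine integral_congr_ae (Filter.Eventually.of_forall fun z => ?_)
        simp only [integral_const_mul]
        rw [← J_fun V hg n]
        simp only [add_assoc, add_comm z]
      · refine Integrable.of_bound (C := n * G * C) ?_ ?_
        · have := bm_meas (T V f)
          fun_prop
        · filter_upwards [hb'] with p hp
          rw [Real.norm_eq_abs, abs_mul]
          exact mul_le_mul hp (Bd.T hC V _) (abs_nonneg _) ((abs_nonneg _).trans hp)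
    · filter_upwards [hb] with p hp
      rw [abs_mul]
      exact mul_le_mul hp (hC _) (abs_nonneg _) ((abs_nonneg _).trans hp)
  induction n with
  | zero =>
    intro f x
    rw [key]
    unfold J
    rw [integral_dirac]; simp
  | succ n ih =>
    intro f x
    rw [key, ih]
    rw [pow_succ]
    change _ + ∫ z, g z * ((T V ^ n) (T V f)) (x + z) ∂V = 
      _ * ∫ z, g z * ((T V ^ n) (T V f)) (x + z) ∂V
    push_cast; ring

/-- `|∫ k| ≤ √∫k²` -/
lemma abs_int_le_sqrt {α : Type*} [MeasurableSpace α] {μ : Measure α} [IsProbabilityMeasure μ]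
    {k : α → ℝ} (h1 : Integrable k μ) (h2 : Integrable (fun x => k x ^ 2) μ) :
    ∫ x, |k x| ∂μ ≤ √(∫ x, k x ^ 2 ∂μ) := by
  apply Real.le_sqrt_of_sq_le
  set a := ∫ x, |k x| ∂μ
  have : 0 ≤ ∫ x, (|k x| - a) ^ 2 ∂μ := integral_nonneg fun x => sq_nonneg _
  have e : ∀ x, (|k x| - a) ^ 2 = (k x ^ 2 - (2 * a) * |k x|) + a ^ 2 := fun x => by
    rw [← sq_abs (k x)]; ring
  simp only [e] at this
  rw [integral_add, integral_sub h2 (h1.abs.const_mul _), integral_const_mul] at this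
  · simp at this; nlinarith
  · exact h2.sub (h1.abs.const_mul _)
  · exact integrable_const _

lemma mecke0 (hg : Measurable g) {G : ℝ} (hG : ∀ z, |g z| ≤ G) (h0 : ∫ z, g z ∂V = 0) (n : ℕ)
    (f : BM m) {M : ℝ} (hf : Bd f M) (x : EE m) :
    |∫ z, g z * (T V ^ n) f (x + z) ∂V| ≤ M * √(∫ z, g z ^ 2 ∂V) / √(n + 1) := by
  have hM := hf.nonneg
  have := J_prob V hg (n+1)
  have hb := J_bd V hg hG (n+1)
  have i1 : Integrable (fun p : EE m × ℝ => p.2) (J V g (n+1)) :=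
    Integrable.of_bound (by fun_prop) _ hb
  have i2 : Integrable (fun p : EE m × ℝ => p.2 ^ 2) (J V g (n+1)) := by
    refine Integrable.of_bound (by fun_prop) (((n+1:ℕ) * G) ^ 2) ?_
    filter_upwards [hb] with p hp
    rw [Real.norm_eq_abs, abs_pow]; exact pow_le_pow_left₀ (abs_nonneg _) hp 2
  have h1 := J_mul V hg hG n f x
  have h2 : |∫ p, p.2 * f (x + p.1) ∂(J V g (n + 1))| ≤ M * √((n + 1 : ℕ) * ∫ z, g z ^ 2 ∂V) := by
    rw [← (J_snd V hg hG h0 (n+1)).1]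
    calc |∫ p, p.2 * f (x + p.1) ∂(J V g (n + 1))| ≤ ∫ p, M * |p.2| ∂(J V g (n + 1)) := by
          rw [← Real.norm_eq_abs]
          refine norm_integral_le_of_norm_le (i1.abs.const_mul _) ?_
          refine Filter.Eventually.of_forall fun p => ?_
          simp only [Real.norm_eq_abs, abs_mul]
          rw [mul_comm]; exact mul_le_mul_of_nonneg_right (hf _) (abs_nonneg _)
      _ ≤ _ := by
          rw [integral_const_mul]
          exact mul_le_mul_of_nonneg_left (abs_int_le_sqrt i1 i2) hM
  rw [h1, abs_mul, abs_of_nonneg (by positivity : (0:ℝ) ≤ n + 1)] at h2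
  rw [Real.sqrt_mul (by positivity)] at h2
  push_cast at h2
  have hs : √((n:ℝ) + 1) * √((n:ℝ) + 1) = n + 1 := Real.mul_self_sqrt (by positivity)
  have hp : 0 < √((n:ℝ) + 1) := by positivity
  rw [le_div_iff₀ hp]
  refine le_of_mul_le_mul_left ?_ hp
  calc _ = (√((n:ℝ) + 1) * √((n:ℝ) + 1)) * |∫ z, g z * (T V ^ n) f (x + z) ∂V| := by ring
    _ ≤ _ := by rw [hs]; linarith

/-- Lemma (M). -/
lemma mecke {F : Measure (EE m)} [IsFiniteMeasure F] {lam : ℝ}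
    (hl : 0 < lam) (h : ENNReal.ofReal lam • F ≤ V)
    (hg : Measurable g) {G : ℝ} (hG : ∀ z, |g z| ≤ G) (h0 : ∫ z, g z ∂F = 0) (n : ℕ)
    (f : BM m) {M : ℝ} (hf : Bd f M) (x : EE m) :
    |∫ z, g z * (T V ^ n) f (x + z) ∂F| ≤ M * √(∫ z, g z ^ 2 ∂F) / √(lam * (n + 1)) := by
  obtain ⟨ρ, hρ, hρ0, hρ1, hk⟩ := exists_dens F V hl h
  have hM := hf.nonneg
  rw [hk] at h0
  rw [hk, hk]
  have hG0 : 0 ≤ G := (abs_nonneg _).trans (hG 0)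
  have hbd : ∀ z, |ρ z * g z| ≤ lam⁻¹ * G := fun z => by
    rw [abs_mul, abs_of_nonneg (hρ0 z)]
    exact mul_le_mul (hρ1 z) (hG z) (abs_nonneg _) (by positivity)
  have hm := mecke0 V (g := fun z => ρ z * g z) (by fun_prop) hbd h0 n f hf x
  simp only [mul_assoc] at hm
  refine hm.trans ?_
  rw [Real.sqrt_mul hl.le, ← div_div]
  gcongr
  rw [le_div_iff₀ (by positivity), mul_assoc, ← Real.sqrt_mul (integral_nonneg fun z => sq_nonneg _)]
  gcongr
  rw [← integral_mul_const]
  have hb2 : ∀ z, g z ^ 2 ≤ G ^ 2 := fun z => by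
    rw [← sq_abs]; exact pow_le_pow_left₀ (abs_nonneg _) (hG z) 2
  refine integral_mono ?_ ?_ ?_
  · refine int_of_bd (C := (lam⁻¹ * G) ^ 2 * lam) (((hρ.mul hg).pow_const 2).mul_const lam) fun z => ?_
    rw [abs_mul, abs_pow, abs_of_pos hl]
    have := pow_le_pow_left₀ (abs_nonneg _) (hbd z) 2
    gcongr
  · refine int_of_bd (C := lam⁻¹ * G ^ 2) (by fun_prop) fun z => ?_
    rw [abs_of_nonneg (mul_nonneg (hρ0 z) (sq_nonneg _))]
    exact mul_le_mul (hρ1 z) (hb2 z) (sq_nonneg _) (by positivity)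
  · intro z
    have h3 : ρ z * lam ≤ 1 := by
      have := mul_le_mul_of_nonneg_right (hρ1 z) hl.le
      rwa [inv_mul_cancel₀ hl.ne'] at this
    have : (ρ z * g z) ^ 2 * lam = (ρ z * g z ^ 2) * (ρ z * lam) := by ring
    simp only [this]
    exact mul_le_of_le_one_right (mul_nonneg (hρ0 z) (sq_nonneg _)) h3

end S9

namespace S9
variable {m : ℕ}

def Sym (F : Measure (EE m)) : Prop := F.map (fun x => -x) = F

lemma Sym.integral {F : Measure (EE m)} (hF : Sym F) (k : EE m → ℝ) :
    ∫ z, k (-z) ∂F = ∫ z, k z ∂F := by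
  conv_rhs => rw [← hF]
  exact (integral_map_equiv (MeasurableEquiv.neg (EE m)) k).symm

lemma Sym.restrict {F : Measure (EE m)} (hF : Sym F) {A : Set (EE m)} (hA : MeasurableSet A)
    (hs : ∀ z, z ∈ A ↔ -z ∈ A) : Sym (F.restrict A) := by
  unfold Sym
  have : A = (fun x : EE m => -x) ⁻¹' A := by ext z; exact hs z
  conv_lhs => rw [this]
  rw [← Measure.restrict_map (by fun_prop) hA, hF]

/-- indicator -/
def ind (S : Set (EE m)) (hS : MeasurableSet S) : BM m :=
  ⟨S.indicator 1, measurable_one.indicator hS, 1, fun x => by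
    by_cases h : x ∈ S <;> simp [h]⟩

lemma ind_apply (S : Set (EE m)) (hS : MeasurableSet S) (x : EE m) :
    ind S hS x = S.indicator 1 x := rfl

lemma ind_bd (S : Set (EE m)) (hS : MeasurableSet S) : Bd (ind S hS) 1 := fun x => by
  rw [ind_apply]; by_cases h : x ∈ S <;> simp [h]

lemma Tpow_apply (V : Measure (EE m)) [IsProbabilityMeasure V] (n : ℕ) (f : BM m) (x : EE m) :
    (T V ^ n) f x = ∫ w, f (x + w) ∂(convPow V n) := by
  rw [← T_convPow, T_apply]

section
variable (V : Measure (EE m)) [IsProbabilityMeasure V] {F : Measure (EE m)} [IsProbabilityMeasure F]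
  {lam : ℝ}

lemma conc1 (hl : 0 < lam) (h : ENNReal.ofReal lam • F ≤ V) (hF : Sym F) (l : Fin m) {y : ℝ}
    (hy : 0 < y) {q : ℝ} (hq : 0 < q) (hqF : q ≤ F.real {z | y ≤ |z l|}) (n : ℕ) (b : ℝ) :
    (convPow V n).real {w | b - y < w l ∧ w l ≤ b + y} ≤ 2 / √(lam * q * (n + 1)) := by
  set W := convPow V n with hW
  set Q := F.real {z | y ≤ |z l|} with hQ
  have hQ0 : 0 < Q := hq.trans_le hqF
  set f : BM m := ind {x | x l ≤ b} (measurableSet_le (by fun_prop) (by fun_prop)) with hf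
  set g : EE m → ℝ := fun z => Set.indicator {z | y ≤ z l} 1 z - Set.indicator {z | z l ≤ -y} 1 z
    with hg
  have hS1 : MeasurableSet {z : EE m | y ≤ z l} := measurableSet_le (by fun_prop) (by fun_prop)
  have hS2 : MeasurableSet {z : EE m | z l ≤ -y} := measurableSet_le (by fun_prop) (by fun_prop)
  have hS3 : MeasurableSet {z : EE m | y ≤ |z l|} := measurableSet_le (by fun_prop) (by fun_prop)
  have hgm : Measurable g := (measurable_one.indicator hS1).sub (measurable_one.indicator hS2)
  have hcase : ∀ z, (y ≤ z l ∧ g z = 1) ∨ (z l ≤ -y ∧ g z = -1) ∨ (|z l| < y ∧ g z = 0) := by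
    intro z
    simp only [hg]
    by_cases h1 : y ≤ z l
    · left; refine ⟨h1, ?_⟩
      have h2 : ¬ z l ≤ -y := by linarith
      simp [h1, h2]
    · by_cases h2 : z l ≤ -y
      · right; left; refine ⟨h2, ?_⟩; simp [h1, h2]
      · right; right; refine ⟨abs_lt.2 ⟨by linarith, by linarith⟩, ?_⟩; simp [h1, h2]
  have hg1 : ∀ z, |g z| ≤ 1 := by
    intro z; rcases hcase z with h | h | h <;> simp [h.2]
  have hg0 : ∫ z, g z ∂F = 0 := by
    have h1 := hF.integral g
    have h2 : ∀ z, g (-z) = - g z := by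
      intro z
      simp only [hg]
      have e1 : (-z ∈ {z : EE m | y ≤ z l}) ↔ z ∈ {z : EE m | z l ≤ -y} := by
        simp only [Set.mem_ofPred_eq, Pi.neg_apply]; constructor <;> intro h <;> linarith
      have e2 : (-z ∈ {z : EE m | z l ≤ -y}) ↔ z ∈ {z : EE m | y ≤ z l} := by
        simp only [Set.mem_ofPred_eq, Pi.neg_apply]; constructor <;> intro h <;> linarith
      simp only [Set.indicator, e1, e2, Pi.one_apply]; ring
    simp only [h2, integral_neg] at h1
    linarith
  have hgsq : ∀ z, g z ^ 2 = Set.indicator {z | y ≤ |z l|} 1 z := by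
    intro z
    rcases hcase z with h | h | h
    · have : y ≤ |z l| := h.1.trans (le_abs_self _)
      simp [h.2, this]
    · have : y ≤ |z l| := by rw [le_abs]; right; linarith [h.1]
      simp [h.2, this]
    · have : ¬ y ≤ |z l| := not_le.2 h.1
      simp [h.2, this]
  have hgsqi : ∫ z, g z ^ 2 ∂F = Q := by
    simp only [hgsq]
    rw [integral_indicator_one hS3]
  have hm := mecke V hl h hgm hg1 hg0 n f (ind_bd _ _) 0
  rw [hgsqi, one_mul] at hm
  set e : EE m := Pi.single l y with he
  set Um := (T V ^ n) f (-e)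
  set Up := (T V ^ n) f e
  have hel : e l = y := by simp [he]
  have mono : ∀ x x' : EE m, x l ≤ x' l → (T V ^ n) f x' ≤ (T V ^ n) f x := by
    intro x x' hx
    rw [Tpow_apply, Tpow_apply]
    refine integral_mono (bm_intg f _ _) (bm_intg f _ _) fun w => ?_
    simp only [hf, ind_apply]
    by_cases h1 : (x' + w) l ≤ b
    · have h2 : (x + w) l ≤ b := by
        have : (x + w) l ≤ (x' + w) l := by simpa using hx
        linarith
      simp only [Set.indicator, Set.mem_ofPred_eq, h1, h2, if_true]; exact le_rfl
    · simp only [Set.indicator, Set.mem_ofPred_eq, h1, if_false]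
      split_ifs <;> simp
  have hpt : ∀ z, g z ^ 2 * ((Um - Up) / 2) - g z * ((Um + Up) / 2) ≤
      - (g z * (T V ^ n) f (0 + z)) := by
    intro z
    rw [zero_add]
    rcases hcase z with h | h | h
    · have := mono e z (by rw [hel]; exact h.1)
      rw [h.2]; simp only [Up] at *; linarith
    · have := mono z (-e) (by rw [Pi.neg_apply, hel]; exact h.1)
      rw [h.2]; simp only [Um] at *; linarith
    · rw [h.2]; simp
  have hgi : Integrable g F := int_of_bd hgm hg1
  have hg2i : Integrable (fun z => g z ^ 2) F := by
    refine int_of_bd (C := 1) (hgm.pow_const 2) fun z => ?_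
    rw [abs_pow]; exact pow_le_one₀ (abs_nonneg _) (hg1 z)
  have hgUi : Integrable (fun z => g z * (T V ^ n) f (0 + z)) F := by
    have hU := bm_meas ((T V ^ n) f)
    refine int_of_bd (C := 1 * 1) (by fun_prop) fun z => ?_
    rw [abs_mul]
    exact mul_le_mul (hg1 z) ((ind_bd _ _).Tpow V n _) (abs_nonneg _) zero_le_one
  have hInt0 := integral_mono ((hg2i.mul_const ((Um - Up) / 2)).sub (hgi.mul_const ((Um + Up) / 2)))
    hgUi.neg hpt
  have e1 : ∫ z, (g z ^ 2 * ((Um - Up) / 2) - g z * ((Um + Up) / 2)) ∂F = Q * ((Um - Up) / 2) := by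
    rw [integral_sub (hg2i.mul_const _) (hgi.mul_const _), integral_mul_const, integral_mul_const,
      hg0, hgsqi]; ring
  simp only [Pi.sub_apply, Pi.neg_apply, integral_neg] at hInt0
  rw [e1] at hInt0
  have hfin : (convPow V n).real {w | b - y < w l ∧ w l ≤ b + y} = Um - Up := by
    simp only [Um, Up]
    rw [Tpow_apply, Tpow_apply, ← integral_sub (bm_intg f _ _) (bm_intg f _ _),
      ← integral_indicator_one]
    · refine integral_congr_ae (Filter.Eventually.of_forall fun w => ?_)
      simp only [hf, ind_apply, Set.indicator, Set.mem_ofPred_eq, Pi.add_apply, Pi.neg_apply, hel,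
        Pi.one_apply]
      split_ifs <;> first | (exfalso; grind) | norm_num
    · have h1 : MeasurableSet {w : EE m | b - y < w l} :=
        measurableSet_lt (by fun_prop) (by fun_prop)
      have h2 : MeasurableSet {w : EE m | w l ≤ b + y} :=
        measurableSet_le (by fun_prop) (by fun_prop)
      exact h1.inter h2
  rw [hfin]
  have h3 : Q * ((Um - Up) / 2) ≤ √Q / √(lam * (n + 1)) :=
    hInt0.trans ((neg_le_abs _).trans hm)
  have h4 : Um - Up ≤ 2 / √(lam * Q * (n + 1)) := by
    have hsq : √Q * √Q = Q := Real.mul_self_sqrt hQ0.le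
    have hsp : 0 < √Q := Real.sqrt_pos.2 hQ0
    have : lam * Q * (n + 1) = Q * (lam * (n + 1)) := by ring
    rw [this, Real.sqrt_mul hQ0.le]
    have hN : 0 < √(lam * ((n:ℝ) + 1)) := by positivity
    rw [le_div_iff₀ (by positivity)]
    rw [le_div_iff₀ hN] at h3
    refine le_of_mul_le_mul_left ?_ hsp
    calc √Q * ((Um - Up) * (√Q * √(lam * ((n:ℝ) + 1))))
        = 2 * ((√Q * √Q) * ((Um - Up) / 2) * √(lam * ((n:ℝ) + 1))) := by ring
      _ ≤ _ := by rw [hsq]; linarith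
  refine h4.trans ?_
  gcongr

lemma conc2 (hl : 0 < lam) (h : ENNReal.ofReal lam • F ≤ V) (hF : Sym F) (l : Fin m) {y : ℝ}
    (hy : 0 < y) {q : ℝ} (hq : 0 < q) (hqF : q ≤ F.real {z | y ≤ |z l|}) (n : ℕ) (a : ℝ) {L : ℝ}
    (hL : 0 ≤ L) :
    (convPow V n).real {w | |w l - a| ≤ L} ≤ (L / y + 2) * (2 / √(lam * q * (n + 1))) := by
  set K := ⌊L / y⌋₊ + 2 with hK
  set W := convPow V n with hW
  have hsub : {w : EE m | |w l - a| ≤ L} ⊆ ⋃ k ∈ Finset.range K,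
      {w : EE m | (a - L + 2 * y * k) - y < w l ∧ w l ≤ (a - L + 2 * y * k) + y} := by
    intro w hw
    simp only [Set.mem_ofPred_eq, abs_le] at hw
    simp only [Set.mem_iUnion, Set.mem_ofPred_eq, Finset.mem_range, exists_prop]
    have hlt : L / y < ⌊L / y⌋₊ + 1 := Nat.lt_floor_add_one _
    have hLK : L < (⌊L / y⌋₊ + 1) * y := by rwa [div_lt_iff₀ hy] at hlt
    refine ⟨⌈(w l - (a - L) - y) / (2 * y)⌉₊, ?_, ?_, ?_⟩
    · rw [hK, Nat.lt_succ_iff]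
      apply Nat.ceil_le.2
      rw [div_le_iff₀ (by positivity)]
      push_cast
      nlinarith
    · by_cases h0 : 0 ≤ (w l - (a - L) - y) / (2 * y)
      · have := Nat.ceil_lt_add_one h0
        have h5 : (⌈(w l - (a - L) - y) / (2 * y)⌉₊ : ℝ) * (2 * y) <
          ((w l - (a - L) - y) / (2 * y) + 1) * (2 * y) := by gcongr
        rw [add_mul, div_mul_cancel₀ _ (by positivity)] at h5
        linarith
      · rw [Nat.ceil_eq_zero.2 (not_le.1 h0).le]
        simp; linarith
    · have := Nat.le_ceil ((w l - (a - L) - y) / (2 * y))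
      rw [div_le_iff₀ (by positivity)] at this
      linarith
  calc W.real {w | |w l - a| ≤ L} ≤ _ := measureReal_mono hsub (measure_ne_top W _)
    _ ≤ _ := measureReal_biUnion_finset_le _ _
    _ ≤ ∑ k ∈ Finset.range K, 2 / √(lam * q * (n + 1)) :=
        Finset.sum_le_sum fun k _ => conc1 V hl h hF l hy hq hqF n _
    _ ≤ _ := by
      rw [Finset.sum_const, Finset.card_range, nsmul_eq_mul]
      gcongr
      rw [hK]; push_cast
      gcongr
      exact Nat.floor_le (by positivity)
end
end S9

namespace S9
variable {m : ℕ}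

def box (a b : Fin m → ℝ) : Set (EE m) := {x | ∀ l, a l ≤ x l ∧ x l ≤ b l}

lemma measurableSet_box (a b : Fin m → ℝ) : MeasurableSet (box a b) := by
  have : box a b = Set.Icc a b := by
    ext x; simp only [box, Set.mem_ofPred_eq, Set.mem_Icc, Pi.le_def]; exact forall_and
  rw [this]; exact measurableSet_Icc

def boxI (a b : Fin m → ℝ) : BM m := ind (box a b) (measurableSet_box a b)

lemma boxI_bd (a b : Fin m → ℝ) : Bd (boxI a b) 1 := ind_bd _ _

/-- smoothing measure -/
def mu (K : Measure ℝ) (s : Fin m → ℝ) : Measure (EE m) :=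
  (Measure.pi (fun _ : Fin m => K)).map (fun r l => s l * r l)

lemma meas_scale (s : Fin m → ℝ) : Measurable (fun (r : Fin m → ℝ) (l : Fin m) => s l * r l) := by
  fun_prop

instance (K : Measure ℝ) [IsProbabilityMeasure K] (s : Fin m → ℝ) :
    IsProbabilityMeasure (mu K s) := by
  unfold mu; exact Measure.isProbabilityMeasure_map (meas_scale s).aemeasurable

lemma T_mu (K : Measure ℝ) [IsProbabilityMeasure K] (s : Fin m → ℝ) (f : BM m) (x : EE m) :
    T (mu K s) f x = ∫ r, f (x + fun l => s l * r l) ∂(Measure.pi (fun _ : Fin m => K)) := by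
  rw [T_apply]; unfold mu
  rw [integral_map (f := fun z => f (x + z)) (meas_scale s).aemeasurable
    ((bm_meas f).comp (measurable_const_add x)).aestronglyMeasurable]

section
variable (V : Measure (EE m)) [IsProbabilityMeasure V] {F : Measure (EE m)} [IsProbabilityMeasure F]
  {lam : ℝ}

lemma box_shift (a b : Fin m → ℝ) (W : Measure (EE m)) [IsProbabilityMeasure W] (x v : EE m) :
    |∫ w, (boxI a b (x + w) - boxI a b (x + w + v)) ∂W| ≤
    ∑ l, (W.real {w | v l ≠ 0 ∧ |w l - (a l - x l)| ≤ |v l|} +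
      W.real {w | v l ≠ 0 ∧ |w l - (b l - x l)| ≤ |v l|}) := by
  set A : Fin m → Set (EE m) := fun l => {w | v l ≠ 0 ∧ |w l - (a l - x l)| ≤ |v l|}
  set B : Fin m → Set (EE m) := fun l => {w | v l ≠ 0 ∧ |w l - (b l - x l)| ≤ |v l|}
  have hA : ∀ l, MeasurableSet (A l) := fun l => by
    have : MeasurableSet {w : EE m | |w l - (a l - x l)| ≤ |v l|} :=
      measurableSet_le (by fun_prop) (by fun_prop)
    exact (MeasurableSet.const _).inter this
  have hB : ∀ l, MeasurableSet (B l) := fun l => by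
    have : MeasurableSet {w : EE m | |w l - (b l - x l)| ≤ |v l|} :=
      measurableSet_le (by fun_prop) (by fun_prop)
    exact (MeasurableSet.const _).inter this
  have hpt : ∀ w, ‖boxI a b (x + w) - boxI a b (x + w + v)‖ ≤
      ∑ l, ((A l).indicator 1 w + (B l).indicator 1 w : ℝ) := by
    intro w
    have hnn : ∀ l, (0:ℝ) ≤ (A l).indicator 1 w + (B l).indicator 1 w := fun l =>
      add_nonneg (Set.indicator_nonneg (fun _ _ => zero_le_one) _)
        (Set.indicator_nonneg (fun _ _ => zero_le_one) _)
    by_cases hex : ∃ l, w ∈ A l ∨ w ∈ B l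
    · obtain ⟨l, hl⟩ := hex
      calc ‖boxI a b (x + w) - boxI a b (x + w + v)‖ ≤ 1 := by
            simp only [boxI, ind_apply, Set.indicator]
            split_ifs <;> simp
        _ ≤ (A l).indicator 1 w + (B l).indicator 1 w := by
            rcases hl with hl | hl
            · rw [Set.indicator_of_mem hl]
              have : (0:ℝ) ≤ (B l).indicator 1 w := Set.indicator_nonneg (fun _ _ => zero_le_one) _
              simpa using this
            · rw [Set.indicator_of_mem hl]
              have : (0:ℝ) ≤ (A l).indicator 1 w := Set.indicator_nonneg (fun _ _ => zero_le_one) _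
              simpa using this
        _ ≤ _ := Finset.single_le_sum (f := fun l => ((A l).indicator 1 w + (B l).indicator 1 w : ℝ))
            (fun l _ => hnn l) (Finset.mem_univ l)
    · push Not at hex
      have hiff : x + w ∈ box a b ↔ x + w + v ∈ box a b := by
        refine forall_congr' fun l => ?_
        have h1 := (hex l).1
        have h2 := (hex l).2
        simp only [A, B, Set.mem_ofPred_eq, not_and, not_le, Pi.add_apply] at h1 h2 ⊢
        by_cases hv : v l = 0
        · rw [hv, add_zero]
        · have h1 := h1 hv
          have h2 := h2 hv
          rw [lt_abs] at h1 h2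
          have g1 := neg_abs_le (v l)
          have g2 := le_abs_self (v l)
          constructor <;> rintro ⟨h3, h4⟩ <;> constructor <;> rcases h1 with h1 | h1 <;>
            rcases h2 with h2 | h2 <;> linarith
      have : boxI a b (x + w) = boxI a b (x + w + v) := by
        simp only [boxI, ind_apply, Set.indicator, Pi.one_apply]
        by_cases hc : x + w ∈ box a b
        · simp [hc, hiff.1 hc]
        · have hc' := mt hiff.2 hc
          simp [hc, hc']
      rw [this, sub_self, norm_zero]
      exact Finset.sum_nonneg fun l _ => hnn l
  have iA : ∀ l, Integrable ((A l).indicator (1 : EE m → ℝ)) W := fun l =>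
    (integrable_const (1:ℝ)).indicator (hA l)
  have iB : ∀ l, Integrable ((B l).indicator (1 : EE m → ℝ)) W := fun l =>
    (integrable_const (1:ℝ)).indicator (hB l)
  rw [← Real.norm_eq_abs]
  refine (norm_integral_le_of_norm_le (integrable_finsetSum _ fun l _ => (iA l).add (iB l))
    (Filter.Eventually.of_forall hpt)).trans ?_
  have e0 := integral_finsetSum (μ := W) Finset.univ fun l _ => (iA l).add (iB l)
  simp only [Pi.add_apply] at e0 ⊢
  rw [e0]
  refine Finset.sum_le_sum fun l _ => ?_
  rw [integral_add (iA l) (iB l), integral_indicator_one (hA l), integral_indicator_one (hB l)]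

lemma fine (hl : 0 < lam) (h : ENNReal.ofReal lam • F ≤ V) (hF : Sym F)
    (K : Measure ℝ) [IsProbabilityMeasure K] (hKi : Integrable (fun r => |r|) K)
    (Y : Fin m → ℝ) {q H : ℝ} (hq : 0 < q) (hH : 0 ≤ H)
    (hY : ∀ l, Y l = 0 ∨ (0 < Y l ∧ q ≤ F.real {z | Y l ≤ |z l|})) (n : ℕ) (a b : Fin m → ℝ) :
    Bd ((T V ^ n) (boxI a b - T (mu K (fun l => H * Y l)) (boxI a b)))
      (m * (4 * (H * ∫ r, |r| ∂K + 2)) / √(lam * q * (n + 1))) := by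
  intro x
  set W := convPow V n
  set s : Fin m → ℝ := fun l => H * Y l with hs
  set R := 1 / √(lam * q * (n + 1)) with hR
  have hR0 : 0 ≤ R := by positivity
  set PI := Measure.pi (fun _ : Fin m => K)
  have hmeas := bm_meas (boxI a b)
  have i1 : Integrable (fun p : EE m × (Fin m → ℝ) =>
      boxI a b (x + p.1) - boxI a b (x + p.1 + fun l => s l * p.2 l)) (W.prod PI) := by
    refine (bm_integrable_comp _ _ (φ := fun p : EE m × (Fin m → ℝ) => x + p.1) (by fun_prop)).sub
      (bm_integrable_comp _ _ (φ := fun p : EE m × (Fin m → ℝ) => x + p.1 + fun l => s l * p.2 l)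
        (by fun_prop))
  have e1 : (T V ^ n) (boxI a b - T (mu K s) (boxI a b)) x =
      ∫ r, ∫ w, (boxI a b (x + w) - boxI a b (x + w + fun l => s l * r l)) ∂W ∂PI := by
    rw [Tpow_apply, ← integral_integral_swap i1]
    refine integral_congr_ae (Filter.Eventually.of_forall fun w => ?_)
    change boxI a b (x + w) - T (mu K s) (boxI a b) (x + w) = _
    simp only
    rw [T_mu, integral_sub (integrable_const _)
      (bm_integrable_comp _ _ (φ := fun r : Fin m → ℝ => x + w + fun l => s l * r l) (by fun_prop))]
    simp
    rfl
  rw [e1]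
  have hpi : ∀ l, Integrable (fun r : Fin m → ℝ => |r l|) PI := fun l =>
    (measurePreserving_eval (fun _ : Fin m => K) l).integrable_comp_of_integrable hKi
  have hpi' : ∀ l, ∫ r : Fin m → ℝ, |r l| ∂PI = ∫ r, |r| ∂K := fun l => by
    have := integral_map (μ := PI) (φ := fun r : Fin m → ℝ => r l) (f := fun r : ℝ => |r|)
      (measurable_pi_apply l).aemeasurable (by fun_prop)
    rw [← this, (measurePreserving_eval (fun _ : Fin m => K) l).map_eq]
  have hin : ∀ r : Fin m → ℝ,
      ‖∫ w, (boxI a b (x + w) - boxI a b (x + w + fun l => s l * r l)) ∂W‖ ≤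
      ∑ l, 4 * (H * |r l| + 2) * R := by
    intro r
    refine (box_shift a b W x _).trans (Finset.sum_le_sum fun l _ => ?_)
    have key : ∀ c : ℝ, W.real {w | s l * r l ≠ 0 ∧ |w l - c| ≤ |s l * r l|} ≤
        (H * |r l| + 2) * (2 * R) := by
      intro c
      rcases hY l with h0 | ⟨h0, h1⟩
      · have : {w : EE m | s l * r l ≠ 0 ∧ |w l - c| ≤ |s l * r l|} = ∅ := by
          ext w; simp [hs, h0]
        rw [this]; simp; positivity
      · have h2 := conc2 V hl h hF l h0 hq h1 n c (L := |s l * r l|) (abs_nonneg _)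
        have h3 : |s l * r l| / Y l = H * |r l| := by
          rw [abs_mul, hs]; simp only [abs_mul, abs_of_pos h0, abs_of_nonneg hH]
          field_simp
        rw [h3] at h2
        calc _ ≤ W.real {w | |w l - c| ≤ |s l * r l|} :=
              measureReal_mono (fun w hw => hw.2) (measure_ne_top W _)
          _ ≤ _ := h2
          _ = _ := by rw [hR]; ring
    linarith [key (a l - x l), key (b l - x l)]
  have isum : ∀ l, Integrable (fun r : Fin m → ℝ => 4 * (H * |r l| + 2) * R) PI := fun l =>
    ((((hpi l).const_mul H).add (integrable_const _)).const_mul 4).mul_const R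
  rw [← Real.norm_eq_abs]
  refine (norm_integral_le_of_norm_le (integrable_finsetSum _ fun l _ => isum l)
    (Filter.Eventually.of_forall hin)).trans ?_
  rw [integral_finsetSum _ fun l _ => isum l]
  have : ∀ l : Fin m, ∫ r : Fin m → ℝ, 4 * (H * |r l| + 2) * R ∂PI =
      4 * (H * ∫ r, |r| ∂K + 2) * R := by
    intro l
    rw [integral_mul_const, integral_const_mul, integral_add ((hpi l).const_mul H)
      (integrable_const _), integral_const_mul, hpi']
    simp
  simp only [this]
  rw [Finset.sum_const, Finset.card_univ, Fintype.card_fin, nsmul_eq_mul, hR]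
  apply le_of_eq; ring
end
end S9

namespace S9
variable {m : ℕ}

abbrev Jt (m : ℕ) := (Fin m → ℕ) → BM m

def Der (s : Fin m → ℝ) (u : Jt m) : Prop :=
  ∀ (β : Fin m → ℕ) (x v : EE m), (∀ j, s j = 0 → v j = 0) → ∀ t : ℝ,
    HasDerivAt (fun t : ℝ => u β (x + t • v))
      (∑ j, v j / s j * u (β + Pi.single j 1) (x + t • v)) t

variable {s : Fin m → ℝ}

lemma Der.smul {u : Jt m} (hu : Der s u) (c : ℝ) : Der s (fun β => c • u β) := by
  intro β x v hv t
  have := (hu β x v hv t).const_mul c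
  refine this.congr_deriv ?_
  rw [Finset.mul_sum]
  refine Finset.sum_congr rfl fun j _ => ?_
  change _ = _ * (c * _)
  ring

lemma Der.add {u w : Jt m} (hu : Der s u) (hw : Der s w) : Der s (fun β => u β + w β) := by
  intro β x v hv t
  have := (hu β x v hv t).add (hw β x v hv t)
  refine this.congr_deriv ?_
  rw [← Finset.sum_add_distrib]
  refine Finset.sum_congr rfl fun j _ => ?_
  change _ = v j / s j * (u (β + Pi.single j 1) (x + t • v) + w (β + Pi.single j 1) (x + t • v))
  ring

lemma Der.sub {u w : Jt m} (hu : Der s u) (hw : Der s w) : Der s (fun β => u β - w β) := by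
  intro β x v hv t
  have := (hu β x v hv t).sub (hw β x v hv t)
  refine this.congr_deriv ?_
  rw [← Finset.sum_sub_distrib]
  refine Finset.sum_congr rfl fun j _ => ?_
  change _ = v j / s j * (u (β + Pi.single j 1) (x + t • v) - w (β + Pi.single j 1) (x + t • v))
  ring

lemma Der.zero : Der s (fun _ => (0 : BM m)) := by
  intro β x v hv t
  have h : ∀ x : EE m, (0 : BM m) x = 0 := fun x => rfl
  simp only [h, mul_zero, Finset.sum_const_zero]
  exact hasDerivAt_const _ _

lemma Der.sum {ι : Type*} (S : Finset ι) {u : ι → Jt m} (hu : ∀ i, Der s (u i)) :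
    Der s (fun β => ∑ i ∈ S, u i β) := by
  classical
  induction S using Finset.induction_on with
  | empty => simpa using Der.zero
  | insert a S ha ih => simp only [Finset.sum_insert ha]; exact (hu a).add ih

lemma Der.shift {u : Jt m} (hu : Der s u) (γ : Fin m → ℕ) : Der s (fun β => u (β + γ)) := by
  intro β x v hv t
  have := hu (β + γ) x v hv t
  simpa only [add_right_comm] using this

lemma Der.T {u : Jt m} (hu : Der s u) (μ : Measure (EE m)) [IsFiniteMeasure μ] :
    Der s (fun β => T μ (u β)) := by
  intro β x v hv t
  choose C hC using fun β => bm_exBd (u β)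
  have hm : ∀ β, Measurable (u β : EE m → ℝ) := fun β => bm_meas _
  have key := hasDerivAt_integral_of_dominated_loc_of_deriv_le (μ := μ)
    (F := fun (t : ℝ) (z : EE m) => u β (x + t • v + z))
    (F' := fun (t : ℝ) (z : EE m) => ∑ j, v j / s j * u (β + Pi.single j 1) (x + t • v + z))
    (x₀ := t) (s := Set.univ) (bound := fun _ => ∑ j, |v j / s j| * C (β + Pi.single j 1))
    Filter.univ_mem (Filter.Eventually.of_forall fun t =>
      ((hm β).comp (measurable_const_add _)).aestronglyMeasurable)
    (bm_intg _ _ _) ?_ ?_ (integrable_const _) ?_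
  · refine key.2.congr_deriv ?_
    rw [integral_finsetSum _ fun j _ => (bm_intg _ _ _).const_mul _]
    refine Finset.sum_congr rfl fun j _ => ?_
    rw [integral_const_mul, T_apply]
  · exact (Finset.measurable_sum _ fun j _ =>
      (((hm _).comp (measurable_const_add _)).const_mul _)).aestronglyMeasurable
  · refine Filter.Eventually.of_forall fun z t _ => ?_
    refine (norm_sum_le _ _).trans (Finset.sum_le_sum fun j _ => ?_)
    rw [norm_mul, Real.norm_eq_abs, Real.norm_eq_abs]
    exact mul_le_mul_of_nonneg_left (hC _ _) (abs_nonneg _)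
  · refine Filter.Eventually.of_forall fun z t _ => ?_
    have := hu β (x + z) v hv t
    simpa only [add_right_comm] using this

lemma Der.Tpow {u : Jt m} (hu : Der s u) (V : Measure (EE m)) [IsProbabilityMeasure V] (n : ℕ) :
    Der s (fun β => (S9.T V ^ n) (u β)) := by
  simp only [← T_convPow]; exact hu.T _

/-- rotated derivative -/
def dt (O : Fin m → Fin m → ℝ) (i : Fin m) (u : Jt m) : Jt m :=
  fun β => ∑ j, O j i • u (β + Pi.single j 1)

lemma Der.dt {u : Jt m} (hu : Der s u) (O : Fin m → Fin m → ℝ) (i : Fin m) :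
    Der s (dt O i u) :=
  Der.sum _ fun j => (hu.shift (Pi.single j 1)).smul (O j i)

lemma bm_sum_apply {ι : Type*} (S : Finset ι) (f : ι → BM m) (x : EE m) :
    (∑ i ∈ S, f i : BM m) x = ∑ i ∈ S, f i x := by
  rw [show ((∑ i ∈ S, f i : BM m) : EE m → ℝ) = ∑ i ∈ S, (f i : EE m → ℝ) from
    Submodule.coe_sum _ _ _, Finset.sum_apply]

lemma bm_smul_apply (c : ℝ) (f : BM m) (x : EE m) : (c • f) x = c * f x := rfl
lemma bm_sub_apply (f g : BM m) (x : EE m) : (f - g) x = f x - g x := rfl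
lemma bm_add_apply (f g : BM m) (x : EE m) : (f + g) x = f x + g x := rfl

lemma dt_apply (O : Fin m → Fin m → ℝ) (i : Fin m) (u : Jt m) (β : Fin m → ℕ) (x : EE m) :
    dt O i u β x = ∑ j, O j i * u (β + Pi.single j 1) x := by
  unfold dt; rw [bm_sum_apply]; rfl

lemma dt_map (O : Fin m → Fin m → ℝ) (i : Fin m) (u : Jt m) (L : Module.End ℝ (BM m)) :
    (fun β => L (dt O i u β)) = dt O i (fun β => L (u β)) := by
  funext β
  unfold dt
  simp only [map_sum, map_smul]

lemma dt_bd (O : Fin m → Fin m → ℝ) (hO : ∀ j i, |O j i| ≤ 1) (i : Fin m) {u : Jt m} {M : ℝ}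
    (hu : ∀ β, Bd (u β) M) (β : Fin m → ℕ) : Bd (dt O i u β) (m * M) := by
  have : Bd (dt O i u β) (∑ _j : Fin m, M) := by
    refine Bd.sum _ fun j _ => ((hu _).smul (O j i)).mono ?_
    exact mul_le_of_le_one_left (hu β).nonneg (hO j i)
  simpa using this

/-- diagonalisation of the covariance matrix. -/
lemma diag (ν : Measure (EE m)) (ξ : Fin m → EE m → ℝ)
    (hξ : ∀ j k, Integrable (fun z => ξ j z * ξ k z) ν) :
    ∃ (O : Fin m → Fin m → ℝ), (∀ j i, |O j i| ≤ 1) ∧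
      (∀ z j, ξ j z = ∑ i, O j i * ∑ k, O k i * ξ k z) ∧
      ∀ i k, i ≠ k → ∫ z, (∑ j, O j i * ξ j z) * (∑ j, O j k * ξ j z) ∂ν = 0 := by
  set A : Matrix (Fin m) (Fin m) ℝ := fun j k => ∫ z, ξ j z * ξ k z ∂ν with hA
  have hH : A.IsHermitian := by
    ext j k
    rw [Matrix.conjTranspose_apply, star_trivial]
    simp only [hA, mul_comm]
  set U := hH.eigenvectorUnitary with hU
  set O : Matrix (Fin m) (Fin m) ℝ := (U : Matrix (Fin m) (Fin m) ℝ) with hO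
  have h1 : O * star O = 1 := Unitary.mul_star_self_of_mem U.2
  have h1' : ∀ j k, ∑ i, O j i * O k i = if j = k then 1 else 0 := by
    intro j k
    have := congrFun (congrFun h1 j) k
    rw [Matrix.mul_apply, Matrix.one_apply] at this
    simpa [Matrix.star_apply] using this
  have h2 : star O * A * O = Matrix.diagonal hH.eigenvalues := by
    have := hH.conjStarAlgAut_star_eigenvectorUnitary
    rw [Unitary.conjStarAlgAut_apply] at this
    simpa using this
  refine ⟨O, ?_, ?_, ?_⟩
  · intro j i
    have := h1' j j
    simp only [if_true] at this
    have h3 : O j i * O j i ≤ ∑ i, O j i * O j i :=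
      Finset.single_le_sum (f := fun i => O j i * O j i) (fun i _ => mul_self_nonneg _)
        (Finset.mem_univ i)
    rw [this] at h3
    exact abs_le_one_iff_mul_self_le_one.2 h3
  · intro z j
    calc ξ j z = ∑ k, (if j = k then 1 else 0) * ξ k z := by simp
      _ = ∑ k, (∑ i, O j i * O k i) * ξ k z := by simp only [h1']
      _ = ∑ k, ∑ i, O j i * (O k i * ξ k z) := by simp only [Finset.sum_mul, mul_assoc]
      _ = _ := by rw [Finset.sum_comm]; simp only [Finset.mul_sum]
  · intro i k hik
    have h3 := congrFun (congrFun h2 i) k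
    rw [Matrix.diagonal_apply_ne _ hik] at h3
    rw [← h3]
    simp only [Matrix.mul_apply, Matrix.star_apply, star_trivial, Finset.sum_mul_sum]
    rw [integral_finsetSum _ fun j _ => integrable_finsetSum _ fun l _ => by
      have := (hξ j l).const_mul (O j i * O l k)
      refine this.congr (Filter.Eventually.of_forall fun z => ?_)
      simp only; ring]
    have : ∀ j, ∫ z, ∑ l, O j i * ξ j z * (O l k * ξ l z) ∂ν = ∑ l, O j i * A j l * O l k := by
      intro j
      rw [integral_finsetSum _ fun l _ => by
        have := (hξ j l).const_mul (O j i * O l k)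
        refine this.congr (Filter.Eventually.of_forall fun z => ?_)
        simp only; ring]
      refine Finset.sum_congr rfl fun l _ => ?_
      have : ∀ z, O j i * ξ j z * (O l k * ξ l z) = (O j i * O l k) * (ξ j z * ξ l z) :=
        fun z => by ring
      simp only [this, integral_const_mul, hA]
      ring
    simp only [this]
    rw [Finset.sum_comm]
    refine Finset.sum_congr rfl fun l _ => ?_
    rw [Finset.sum_mul]

/-- calculus -/
lemma mv0 {φ φ' : ℝ → ℝ} (h : ∀ t, HasDerivAt φ (φ' t) t) {ρ : ℝ} 
    (hb : ∀ t, |t| ≤ 1 → |φ' t| ≤ ρ) (t : ℝ) (ht : |t| ≤ 1) : |φ t - φ 0| ≤ ρ := by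
  have hρ : 0 ≤ ρ := (abs_nonneg _).trans (hb 0 (by simp))
  have := Convex.norm_image_sub_le_of_norm_hasDerivWithin_le (f := φ) (f' := φ')
    (s := Set.Icc (-1) 1) (C := ρ) (x := 0) (y := t) (fun x _ => (h x).hasDerivWithinAt)
    (fun x hx => hb x (abs_le.2 hx)) (convex_Icc _ _) (by simp) (abs_le.1 ht)
  simp only [sub_zero, Real.norm_eq_abs] at this
  exact this.trans (mul_le_of_le_one_right hρ ht)

lemma mv1 {φ φ' : ℝ → ℝ} (h : ∀ t, HasDerivAt φ (φ' t) t) {ρ : ℝ} 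
    (hb : ∀ t, |t| ≤ 1 → |φ' t - φ' 0| ≤ ρ) (t : ℝ) (ht : |t| ≤ 1) :
    |φ t - φ 0 - t * φ' 0| ≤ ρ := by
  have := mv0 (φ := fun t => φ t - t * φ' 0) (φ' := fun t => φ' t - φ' 0) (fun t => by
    have := (h t).sub ((hasDerivAt_id t).mul_const (φ' 0))
    rw [one_mul] at this
    exact this) hb t ht
  simp only [zero_mul, sub_zero] at this
  convert this using 2; ring

/-- Cauchy-Schwarz -/
lemma cs {α : Type*} [MeasurableSpace α] {μ : Measure α} {f g : α → ℝ}
    (hf : Integrable (fun x => f x ^ 2) μ) (hg : Integrable (fun x => g x ^ 2) μ)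
    (hfg : Integrable (fun x => |f x| * |g x|) μ) :
    ∫ x, |f x| * |g x| ∂μ ≤ √(∫ x, f x ^ 2 ∂μ) * √(∫ x, g x ^ 2 ∂μ) := by
  set a := ∫ x, f x ^ 2 ∂μ
  set b := ∫ x, g x ^ 2 ∂μ
  set c := ∫ x, |f x| * |g x| ∂μ
  have ha : 0 ≤ a := integral_nonneg fun x => sq_nonneg _
  have hb : 0 ≤ b := integral_nonneg fun x => sq_nonneg _
  have hc : 0 ≤ c := integral_nonneg fun x => by positivity
  have key : ∀ t : ℝ, 0 ≤ a * (t * t) + (- 2 * c) * t + b := by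
    intro t
    have h0 : 0 ≤ ∫ x, (t * |f x| - |g x|) ^ 2 ∂μ := integral_nonneg fun x => sq_nonneg _
    have e : ∀ x, (t * |f x| - |g x|) ^ 2 =
        (f x ^ 2 * (t * t) + (|f x| * |g x|) * (- 2 * t)) + g x ^ 2 := fun x => by
      rw [← sq_abs (f x), ← sq_abs (g x)]; ring
    simp only [e] at h0
    rw [integral_add (f := fun x => f x ^ 2 * (t * t) + (|f x| * |g x|) * (- 2 * t))
      ((hf.mul_const _).add (hfg.mul_const _)) hg,
      integral_add (hf.mul_const _) (hfg.mul_const _), integral_mul_const, integral_mul_const] at h0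
    linarith
  have hd := discrim_le_zero key
  rw [discrim] at hd
  rw [← Real.sqrt_mul ha]
  apply Real.le_sqrt_of_sq_le
  nlinarith
end S9

namespace S9
variable {m : ℕ}

def eta (s : Fin m → ℝ) (O : Fin m → Fin m → ℝ) (i : Fin m) (z : EE m) : ℝ :=
  ∑ j, O j i * (z j / s j)

/-- data for the coarse lemma -/
structure CD (F : Measure (EE m)) (A : Set (EE m)) (s : Fin m → ℝ) (h : ℝ)
    (O : Fin m → Fin m → ℝ) : Prop where
  sym : Sym F
  meas : MeasurableSet A
  symA : ∀ z, z ∈ A ↔ -z ∈ A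
  h0 : 0 ≤ h
  hm : m * m * h ≤ 1 / 2
  bd : ∀ z ∈ A, ∀ j, |z j / s j| ≤ h
  adm : ∀ z ∈ A, ∀ j, s j = 0 → z j = 0
  O1 : ∀ j i, |O j i| ≤ 1
  O2 : ∀ z j, z j / s j = ∑ i, O j i * eta s O i z
  O3 : ∀ i k, i ≠ k → ∫ z, eta s O i z * eta s O k z ∂(F.restrict A) = 0

variable {F V : Measure (EE m)} [IsProbabilityMeasure F] [IsProbabilityMeasure V]
  {A : Set (EE m)} {s : Fin m → ℝ} {h : ℝ} {O : Fin m → Fin m → ℝ}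

lemma eta_meas (i : Fin m) : Measurable (eta s O i) := by
  unfold eta; fun_prop

lemma eta_neg (i : Fin m) (z : EE m) : eta s O i (-z) = - eta s O i z := by
  unfold eta
  rw [← Finset.sum_neg_distrib]
  refine Finset.sum_congr rfl fun j _ => ?_
  simp only [Pi.neg_apply]; ring

lemma CD.eta_bd (C : CD F A s h O) {z : EE m} (hz : z ∈ A) (i : Fin m) :
    |eta s O i z| ≤ m * h := by
  calc |eta s O i z| ≤ ∑ j, |O j i * (z j / s j)| := Finset.abs_sum_le_sum_abs _ _
    _ ≤ ∑ _j : Fin m, h := by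
      refine Finset.sum_le_sum fun j _ => ?_
      rw [abs_mul]
      calc _ ≤ 1 * h := mul_le_mul (C.O1 j i) (C.bd z hz j) (abs_nonneg _) zero_le_one
        _ = h := one_mul h
    _ = _ := by simp

lemma CD.ae_mem (C : CD F A s h O) : ∀ᵐ z ∂(F.restrict A), z ∈ A := ae_restrict_mem C.meas

lemma CD.int2 (C : CD F A s h O) (i k : Fin m) :
    Integrable (fun z => |eta s O i z| * |eta s O k z|) (F.restrict A) := by
  have h1 := eta_meas (s := s) (O := O) i
  have h2 := eta_meas (s := s) (O := O) k
  refine Integrable.of_bound (C := (m * h) * (m * h)) (by fun_prop) ?_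
  filter_upwards [C.ae_mem] with z hz
  rw [norm_mul, Real.norm_eq_abs, Real.norm_eq_abs, abs_abs, abs_abs]
  exact mul_le_mul (C.eta_bd hz i) (C.eta_bd hz k) (abs_nonneg _)
    (mul_nonneg (Nat.cast_nonneg _) C.h0)

lemma CD.int2' (C : CD F A s h O) (i k : Fin m) :
    Integrable (fun z => eta s O i z * eta s O k z) (F.restrict A) := by
  have h1 := eta_meas (s := s) (O := O) i
  have h2 := eta_meas (s := s) (O := O) k
  refine (integrable_norm_iff (by fun_prop)).1 ?_
  simpa only [norm_mul, Real.norm_eq_abs] using C.int2 i k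

lemma CD.intsq (C : CD F A s h O) (i : Fin m) :
    Integrable (fun z => eta s O i z ^ 2) (F.restrict A) := by
  simpa only [sq] using C.int2' i i

def Lam (F : Measure (EE m)) (A : Set (EE m)) (s : Fin m → ℝ)
    (O : Fin m → Fin m → ℝ) (i : Fin m) : ℝ := ∫ z, eta s O i z ^ 2 ∂(F.restrict A)

lemma Lam_nonneg (i : Fin m) : 0 ≤ Lam F A s O i := integral_nonneg fun _ => sq_nonneg _

lemma CD.cs (C : CD F A s h O) (i k : Fin m) :
    ∫ z, |eta s O i z| * |eta s O k z| ∂(F.restrict A) ≤ √(Lam F A s O i) * √(Lam F A s O k) :=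
  S9.cs (C.intsq i) (C.intsq k) (C.int2 i k)

lemma CD.ae_zero (C : CD F A s h O) :
    ∀ᵐ z ∂(F.restrict A), ∀ i, Lam F A s O i = 0 → eta s O i z = 0 := by
  rw [ae_all_iff]
  intro i
  by_cases h0 : Lam F A s O i = 0
  · have := (integral_eq_zero_iff_of_nonneg (fun _ => sq_nonneg _) (C.intsq i)).1 h0
    filter_upwards [this] with z hz _
    simpa using hz
  · exact Filter.Eventually.of_forall fun z hz => absurd hz h0

lemma CD.rot_sum (C : CD F A s h O) (u : Jt m) (β : Fin m → ℕ) (z x : EE m) :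
    ∑ j, z j / s j * u (β + Pi.single j 1) x = ∑ k, eta s O k z * dt O k u β x := by
  simp only [dt_apply, Finset.mul_sum]
  rw [Finset.sum_comm]
  refine Finset.sum_congr rfl fun j _ => ?_
  rw [C.O2 z j, Finset.sum_mul]
  refine Finset.sum_congr rfl fun k _ => ?_
  ring

lemma CD.rot (C : CD F A s h O) {u : Jt m} (hu : Der s u) (β : Fin m → ℕ) {z : EE m} (hz : z ∈ A)
    (x : EE m) (t : ℝ) :
    HasDerivAt (fun t : ℝ => u β (x + t • z)) (∑ k, eta s O k z * dt O k u β (x + t • z)) t := by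
  rw [← C.rot_sum]
  exact hu β x z (C.adm z hz) t

/-- `ν`-a.e. bound: `|η_k a| ≤ |η_k| c/√Λ_k` when `√Λ_k |a| ≤ c`. -/
lemma div_bd {e a c L : ℝ} (hL : 0 ≤ L) (h0 : L = 0 → e = 0) (hc : √L * |a| ≤ c) :
    |e * a| ≤ |e| * (c / √L) := by
  by_cases hz : L = 0
  · rw [h0 hz]; simp
  · rw [abs_mul]
    refine mul_le_mul_of_nonneg_left ?_ (abs_nonneg _)
    rw [le_div_iff₀ (Real.sqrt_pos.2 (lt_of_le_of_ne hL (Ne.symm hz)))]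
    linarith

lemma sqrt_div_le {L c : ℝ} (hc : 0 ≤ c) : √L * (c / √L) ≤ c := by
  by_cases hz : √L = 0
  · rw [hz]; simpa using hc
  · rw [mul_div_cancel₀ _ hz]

lemma L1step {lam : ℝ} (hl : 0 < lam) (hV : ENNReal.ofReal lam • F ≤ V) (C : CD F A s h O)
    {u : Jt m} (hu : Der s u) {M : ℝ} (hb : ∀ β, Bd (u β) M) (n : ℕ) {ν : ℝ}
    (hν : ∀ i β x, √(Lam F A s O i) * |dt O i (fun β => (T V ^ n) (u β)) β x| ≤ ν) :
    ∀ i β x, √(Lam F A s O i) * |dt O i (fun β => (T V ^ n) (u β)) β x| ≤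
      M / √(lam * (n + 1)) + ν / 2 := by
  intro i β x
  set U : Jt m := fun β => (T V ^ n) (u β) with hU
  have hUD : Der s U := hu.Tpow V n
  have hM : 0 ≤ M := (hb β).nonneg
  have hν0 : 0 ≤ ν := le_trans (by positivity) (hν i β x)
  have hUm : Measurable (U β : EE m → ℝ) := bm_meas _
  set Kc := M / √(lam * (n + 1)) with hKc
  have hK0 : 0 ≤ Kc := by positivity
  by_cases hz : Lam F A s O i = 0
  · rw [hz]; simp; positivity
  have hLp : 0 < Lam F A s O i := lt_of_le_of_ne (Lam_nonneg i) (Ne.symm hz)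
  set e := eta s O with he
  have hem : ∀ k, Measurable (e k) := fun k => eta_meas k
  set N := F.restrict A with hN
  have hNs : Sym N := C.sym.restrict C.meas C.symA
  -- step 1 : mecke
  have g1 : ∫ z, A.indicator (e i) z ∂F = 0 := by
    rw [integral_indicator C.meas]
    have := hNs.integral (e i)
    simp only [he, eta_neg, integral_neg] at this
    simp only [he, hN] at this ⊢
    linarith
  have g2 : ∫ z, A.indicator (e i) z ^ 2 ∂F = Lam F A s O i := by
    have : ∀ z, A.indicator (e i) z ^ 2 = A.indicator (fun z => e i z ^ 2) z := fun z => by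
      by_cases hz : z ∈ A <;> simp [hz]
    simp only [this]
    rw [integral_indicator C.meas]; rfl
  have step1 : |∫ z, e i z * U β (x + z) ∂N| ≤ Kc * √(Lam F A s O i) := by
    have := mecke V hl hV (g := A.indicator (e i)) ((hem i).indicator C.meas) (G := m * h)
      (fun z => by
        by_cases hz : z ∈ A
        · rw [Set.indicator_of_mem hz]; exact C.eta_bd hz i
        · rw [Set.indicator_of_notMem hz, abs_zero]; exact mul_nonneg (Nat.cast_nonneg _) C.h0)
      g1 n (u β) (hb β) x
    rw [g2] at this
    have e2 : ∫ z, A.indicator (e i) z * (T V ^ n) (u β) (x + z) ∂F = 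
        ∫ z, e i z * U β (x + z) ∂N := by
      rw [hN, ← integral_indicator C.meas]
      refine integral_congr_ae (Filter.Eventually.of_forall fun z => ?_)
      by_cases hz : z ∈ A <;> simp [hz, hU]
    rw [e2] at this
    refine this.trans (le_of_eq ?_)
    rw [hKc]; ring
  -- integrability
  have hUb : ∀ y, |U β y| ≤ M := (hb β).Tpow V n
  have i1 : ∀ c : ℝ, Integrable (fun z => e i z * U β (x + c • z)) N := by
    intro c
    refine Integrable.of_bound (C := (m * h) * M) ?_ ?_
    · have := hem i; exact Measurable.aestronglyMeasurable (by fun_prop)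
    · filter_upwards [C.ae_mem] with z hz
      rw [norm_mul]
      exact mul_le_mul (C.eta_bd hz i) (hUb _) (abs_nonneg _)
        (mul_nonneg (Nat.cast_nonneg _) C.h0)
  have i1p : Integrable (fun z => e i z * U β (x + z)) N := by simpa using i1 1
  have i1m : Integrable (fun z => e i z * U β (x - z)) N := by
    simpa [sub_eq_add_neg] using i1 (-1)
  have step2 : 2 * ∫ z, e i z * U β (x + z) ∂N = 
      ∫ z, e i z * (U β (x + z) - U β (x - z)) ∂N := by
    have h1 := hNs.integral (fun z => e i z * U β (x + z))
    simp only [he, eta_neg, neg_mul, integral_neg, ← sub_eq_add_neg] at h1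
    simp only [mul_sub]
    rw [integral_sub i1p i1m, two_mul]
    simp only [he] at h1 ⊢
    linarith
  -- pointwise expansion
  set c : Fin m → ℝ := fun k => m * h * ν / √(Lam F A s O k) with hc
  have step3 : ∀ᵐ z ∂N, ‖e i z * (U β (x + z) - U β (x - z)) -
      2 * ∑ k, (e i z * e k z) * dt O k U β x‖ ≤ 2 * ∑ k, |e i z| * |e k z| * c k := by
    filter_upwards [C.ae_mem, C.ae_zero] with z hz hz0
    set φ : ℝ → ℝ := fun t => U β (x + t • z)
    set φ' : ℝ → ℝ := fun t => ∑ k, e k z * dt O k U β (x + t • z)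
    have hd : ∀ t, HasDerivAt φ (φ' t) t := fun t => C.rot hUD β hz x t
    have hρ : ∀ t, |t| ≤ 1 → |φ' t - φ' 0| ≤ ∑ k, |e k z| * c k := by
      intro t ht
      simp only [φ']
      rw [← Finset.sum_sub_distrib]
      refine (Finset.abs_sum_le_sum_abs _ _).trans (Finset.sum_le_sum fun k _ => ?_)
      rw [← mul_sub]
      refine div_bd (Lam_nonneg k) (hz0 k) ?_
      have hd2 : ∀ t, HasDerivAt (fun t : ℝ => √(Lam F A s O k) * dt O k U β (x + t • z))
          (√(Lam F A s O k) *
            ∑ j, z j / s j * dt O k U (β + Pi.single j 1) (x + t • z)) t :=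
        fun t => (hUD.dt O k β x z (C.adm z hz) t).const_mul _
      have hd3 := mv0 hd2 (ρ := m * h * ν) (fun t _ => by
        rw [Finset.mul_sum]
        refine (Finset.abs_sum_le_sum_abs _ _).trans ?_
        calc _ ≤ ∑ _j : Fin m, h * ν := by
              refine Finset.sum_le_sum fun j _ => ?_
              rw [mul_left_comm, abs_mul]
              refine mul_le_mul (C.bd z hz j) ?_ (abs_nonneg _) C.h0
              rw [abs_mul, abs_of_nonneg (Real.sqrt_nonneg _)]
              exact hν k _ _
          _ = _ := by simp [mul_assoc]) t ht
      simp only [zero_smul, add_zero] at hd3 ⊢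
      rw [← mul_sub, abs_mul, abs_of_nonneg (Real.sqrt_nonneg _)] at hd3
      exact hd3
    have m1 := mv1 hd hρ 1 (by simp)
    have m2 := mv1 hd hρ (-1) (by simp)
    have e1 : φ 1 = U β (x + z) := by simp [φ]
    have e2 : φ (-1) = U β (x - z) := by simp [φ, sub_eq_add_neg]
    have e3 : φ' 0 = ∑ k, e k z * dt O k U β x := by simp [φ']
    rw [e1] at m1
    rw [e2] at m2
    have m3 : |U β (x + z) - U β (x - z) - 2 * φ' 0| ≤ 2 * ∑ k, |e k z| * c k := by
      rw [abs_le] at m1 m2 ⊢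
      constructor <;> linarith [m1.1, m1.2, m2.1, m2.2]
    have e4 : e i z * (U β (x + z) - U β (x - z)) - 2 * ∑ k, (e i z * e k z) * dt O k U β x =
        e i z * (U β (x + z) - U β (x - z) - 2 * φ' 0) := by
      rw [e3]; simp only [mul_assoc]; rw [← Finset.mul_sum]; ring
    have e5 : 2 * ∑ k, |e i z| * |e k z| * c k = |e i z| * (2 * ∑ k, |e k z| * c k) := by
      simp only [mul_assoc]; rw [← Finset.mul_sum]; ring
    rw [e4, e5, Real.norm_eq_abs, abs_mul]
    exact mul_le_mul_of_nonneg_left m3 (abs_nonneg _)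
  have iR : Integrable (fun z => 2 * ∑ k, |e i z| * |e k z| * c k) N :=
    (integrable_finsetSum _ fun k _ => (C.int2 i k).mul_const _).const_mul 2
  have iS : Integrable (fun z => 2 * ∑ k, (e i z * e k z) * dt O k U β x) N :=
    (integrable_finsetSum _ fun k _ => (C.int2' i k).mul_const _).const_mul 2
  have iD : Integrable (fun z => e i z * (U β (x + z) - U β (x - z))) N := by
    simp only [mul_sub]; exact i1p.sub i1m
  have step4 := norm_integral_le_of_norm_le iR step3
  rw [integral_sub iD iS, ← step2, integral_const_mul, integral_const_mul,
    integral_finsetSum _ fun k _ => (C.int2' i k).mul_const _,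
    integral_finsetSum _ fun k _ => (C.int2 i k).mul_const _] at step4
  have e6 : ∑ k, ∫ z, e i z * e k z * dt O k U β x ∂N = Lam F A s O i * dt O i U β x := by
    rw [Finset.sum_eq_single i]
    · rw [integral_mul_const]; congr 1
      unfold Lam; simp only [sq, he]; rfl
    · intro k _ hk
      rw [integral_mul_const, C.O3 i k (Ne.symm hk), zero_mul]
    · simp
  rw [e6] at step4
  set SL := √(Lam F A s O i) with hSL
  have hSp : 0 < SL := Real.sqrt_pos.2 hLp
  have hSS : SL * SL = Lam F A s O i := Real.mul_self_sqrt hLp.le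
  have step5 : ∑ k, ∫ z, |e i z| * |e k z| * c k ∂N ≤ SL * (ν / 2) := by
    calc _ ≤ ∑ _k : Fin m, SL * (m * h * ν) := by
          refine Finset.sum_le_sum fun k _ => ?_
          rw [integral_mul_const]
          have hmhν : 0 ≤ m * h * ν := mul_nonneg (mul_nonneg (Nat.cast_nonneg _) C.h0) hν0
          calc _ ≤ (SL * √(Lam F A s O k)) * c k :=
                mul_le_mul_of_nonneg_right (C.cs i k) (by simp only [hc]; positivity)
            _ = SL * (√(Lam F A s O k) * (m * h * ν / √(Lam F A s O k))) := by simp only [hc]; ring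
            _ ≤ _ := mul_le_mul_of_nonneg_left (sqrt_div_le hmhν) hSp.le
      _ = SL * ((m * m * h) * ν) := by simp; ring
      _ ≤ SL * (1 / 2 * ν) := by gcongr; exact C.hm
      _ = _ := by ring
  rw [← hSS, Real.norm_eq_abs, abs_le] at step4
  rw [abs_le] at step1
  have : SL * (SL * |dt O i U β x|) ≤ SL * (Kc + ν / 2) := by
    rcases abs_cases (dt O i U β x) with ⟨h1, _⟩ | ⟨h1, _⟩ <;> rw [h1] <;> nlinarith
  exact le_of_mul_le_mul_left this hSp

lemma L1 {lam : ℝ} (hl : 0 < lam) (hV : ENNReal.ofReal lam • F ≤ V) (C : CD F A s h O)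
    {u : Jt m} (hu : Der s u) {M : ℝ} (hb : ∀ β, Bd (u β) M) (n : ℕ) (i : Fin m) (β : Fin m → ℕ) :
    Bd (√(Lam F A s O i) • dt O i (fun β => (T V ^ n) (u β)) β) (2 * M / √(lam * (n + 1))) := by
  set G : Fin m × (Fin m → ℕ) × EE m → ℝ := fun p =>
    √(Lam F A s O p.1) * |dt O p.1 (fun β => (T V ^ n) (u β)) p.2.1 p.2.2| with hG
  have hM : 0 ≤ M := (hb β).nonneg
  have hbd : BddAbove (Set.range G) := by
    refine ⟨∑ i, √(Lam F A s O i) * (m * M), ?_⟩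
    rintro _ ⟨⟨i, β, x⟩, rfl⟩
    simp only [hG]
    have h1 := dt_bd O C.O1 i (fun β => (hb β).Tpow V n) β x
    calc _ ≤ √(Lam F A s O i) * (m * M) := mul_le_mul_of_nonneg_left h1 (Real.sqrt_nonneg _)
      _ ≤ _ := Finset.single_le_sum (f := fun i => √(Lam F A s O i) * (m * M))
        (fun i _ => by positivity) (Finset.mem_univ i)
  set ν := sSup (Set.range G)
  have h1 := L1step hl hV C hu hb n (ν := ν) fun i β x =>
    le_csSup hbd ⟨(i, β, x), rfl⟩
  have h2 : ν ≤ M / √(lam * (n + 1)) + ν / 2 := by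
    refine csSup_le ⟨_, ⟨(i, β, 0), rfl⟩⟩ ?_
    rintro _ ⟨⟨i, β, x⟩, rfl⟩
    exact h1 i β x
  intro x
  rw [bm_smul_apply, abs_mul, abs_of_nonneg (Real.sqrt_nonneg _)]
  refine (le_csSup hbd ⟨(i, β, x), rfl⟩ : G (i, β, x) ≤ ν).trans ?_
  rw [mul_div_assoc]
  linarith

lemma L2 (C : CD F A s h O) {u : Jt m} (hu : Der s u) {N : ℝ}
    (hN : ∀ i k β x, √(Lam F A s O i) * √(Lam F A s O k) * |dt O k (dt O i u) β x| ≤ N)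
    (β : Fin m → ℕ) :
    Bd (T (F.restrict A) (u β) - F.real A • u β) (m * m * N) := by
  intro x
  rw [bm_sub_apply, bm_smul_apply, T_apply]
  by_cases hm0 : m = 0
  · subst hm0
    have : ∀ z : EE 0, u β (x + z) = u β x := fun z =>
      congrArg (u β : EE 0 → ℝ) (Subsingleton.elim (x + z) x)
    simp only [this]; rw [integral_const, measureReal_restrict_apply_univ, smul_eq_mul, sub_self]; simp
  have hmp : 0 < m := Nat.pos_of_ne_zero hm0
  have hN0 : 0 ≤ N := le_trans (by positivity) (hN ⟨0, hmp⟩ ⟨0, hmp⟩ β x)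
  set e := eta s O with he
  set NN := F.restrict A with hNN
  have hNs : Sym NN := C.sym.restrict C.meas C.symA
  set c : Fin m → Fin m → ℝ := fun i k => N / √(Lam F A s O i) / √(Lam F A s O k) with hc
  have ip := bm_intg (u β) NN x
  have im : Integrable (fun z => u β (x - z)) NN :=
    bm_integrable_comp (u β) NN (φ := fun z => x - z) (by fun_prop)
  have e0 : 2 * (∫ z, u β (x + z) ∂NN - F.real A * u β x) = 
      ∫ z, (u β (x + z) + u β (x - z) - 2 * u β x) ∂NN := by
    have h1 := hNs.integral (fun z => u β (x + z))
    simp only [← sub_eq_add_neg] at h1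
    rw [integral_sub (f := fun z => u β (x + z) + u β (x - z)) (ip.add im) (integrable_const _),
      integral_add ip im, h1, integral_const]
    simp only [hNN, measureReal_restrict_apply_univ, smul_eq_mul]
    ring
  have hpt : ∀ᵐ z ∂NN, ‖u β (x + z) + u β (x - z) - 2 * u β x‖ ≤
      2 * ∑ i, ∑ k, |e i z| * |e k z| * c i k := by
    filter_upwards [C.ae_mem, C.ae_zero] with z hz hz0
    set φ : ℝ → ℝ := fun t => u β (x + t • z)
    set φ' : ℝ → ℝ := fun t => ∑ k, e k z * dt O k u β (x + t • z)
    have hd : ∀ t, HasDerivAt φ (φ' t) t := fun t => C.rot hu β hz x t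
    have hd' : ∀ t, HasDerivAt φ'
        (∑ i, e i z * ∑ k, e k z * dt O k (dt O i u) β (x + t • z)) t := fun t => by
      have := HasDerivAt.fun_sum (u := Finset.univ) (A := fun i (t : ℝ) => e i z * dt O i u β (x + t • z))
        (A' := fun i => e i z * ∑ k, e k z * dt O k (dt O i u) β (x + t • z)) (x := t)
        fun i _ => ((C.rot (hu.dt O i) β hz x t).const_mul (e i z))
      exact this
    have hρ : ∀ t, |t| ≤ 1 → |φ' t - φ' 0| ≤ ∑ i, ∑ k, |e i z| * |e k z| * c i k := by
      refine mv0 hd' fun t _ => ?_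
      refine (Finset.abs_sum_le_sum_abs _ _).trans (Finset.sum_le_sum fun i _ => ?_)
      rw [Finset.mul_sum]
      refine (Finset.abs_sum_le_sum_abs _ _).trans (Finset.sum_le_sum fun k _ => ?_)
      rw [abs_mul, mul_assoc]
      by_cases hi : Lam F A s O i = 0
      · rw [he, hz0 i hi]; simp
      refine mul_le_mul_of_nonneg_left ?_ (abs_nonneg _)
      refine div_bd (Lam_nonneg k) (hz0 k) ?_
      rw [le_div_iff₀ (Real.sqrt_pos.2 (lt_of_le_of_ne (Lam_nonneg i) (Ne.symm hi)))]
      have := hN i k β (x + t • z)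
      linarith
    have m1 := mv1 hd hρ 1 (by simp)
    have m2 := mv1 hd hρ (-1) (by simp)
    have e1 : φ 1 = u β (x + z) := by simp [φ]
    have e2 : φ (-1) = u β (x - z) := by simp [φ, sub_eq_add_neg]
    have e3 : φ 0 = u β x := by simp [φ]
    rw [e1, e3] at m1
    rw [e2, e3] at m2
    rw [Real.norm_eq_abs]
    rw [abs_le] at m1 m2 ⊢
    constructor <;> linarith [m1.1, m1.2, m2.1, m2.2]
  have iR : Integrable (fun z => 2 * ∑ i, ∑ k, |e i z| * |e k z| * c i k) NN :=
    (integrable_finsetSum _ fun i _ => integrable_finsetSum _ fun k _ =>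
      (C.int2 i k).mul_const _).const_mul 2
  have st := norm_integral_le_of_norm_le iR hpt
  rw [← e0, integral_const_mul, integral_finsetSum _ fun i _ => integrable_finsetSum _ fun k _ =>
      (C.int2 i k).mul_const _] at st
  have hs : ∑ i, ∫ z, ∑ k, |e i z| * |e k z| * c i k ∂NN ≤ m * m * N := by
    calc _ ≤ ∑ _i : Fin m, ∑ _k : Fin m, N := by
          refine Finset.sum_le_sum fun i _ => ?_
          rw [integral_finsetSum _ fun k _ => (C.int2 i k).mul_const _]
          refine Finset.sum_le_sum fun k _ => ?_
          rw [integral_mul_const]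
          calc _ ≤ (√(Lam F A s O i) * √(Lam F A s O k)) * c i k :=
                mul_le_mul_of_nonneg_right (C.cs i k) (by simp only [hc]; positivity)
            _ = √(Lam F A s O i) * (√(Lam F A s O k) *
                  ((N / √(Lam F A s O i)) / √(Lam F A s O k))) := by simp only [hc]; ring
            _ ≤ √(Lam F A s O i) * (N / √(Lam F A s O i)) :=
                mul_le_mul_of_nonneg_left (sqrt_div_le (by positivity)) (Real.sqrt_nonneg _)
            _ ≤ N := sqrt_div_le hN0
      _ = _ := by simp; ring
  rw [Real.norm_eq_abs, abs_mul, abs_two] at st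
  linarith

/-- Coarse lemma. -/
lemma coarse {lam : ℝ} (hl : 0 < lam) (hV : ENNReal.ofReal lam • F ≤ V)
    (hF : Sym F) (hA : MeasurableSet A) (hs : ∀ z, z ∈ A ↔ -z ∈ A) (h0 : 0 ≤ h)
    (hm : m * m * h ≤ 1 / 2) (hbA : ∀ z ∈ A, ∀ j, |z j / s j| ≤ h)
    (had : ∀ z ∈ A, ∀ j, s j = 0 → z j = 0)
    {u : Jt m} (hu : Der s u) {M : ℝ} (hb : ∀ β, Bd (u β) M) (n : ℕ) (β : Fin m → ℕ) :
    Bd (T (F.restrict A) ((T V ^ (2 * n)) (u β)) - F.real A • (T V ^ (2 * n)) (u β))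
      (4 * (m * m) * M / (lam * (n + 1))) := by
  obtain ⟨O, O1, O2, O3⟩ := diag (F.restrict A) (fun j z => z j / s j) (fun j k => by
    refine Integrable.of_bound (C := h * h) (Measurable.aestronglyMeasurable (by fun_prop)) ?_
    filter_upwards [ae_restrict_mem hA] with z hz
    rw [norm_mul]
    exact mul_le_mul (hbA z hz j) (hbA z hz k) (abs_nonneg _) h0)
  have C : CD F A s h O := ⟨hF, hA, hs, h0, hm, hbA, had, O1, O2, O3⟩
  set L := Lam F A s O
  set R := √(lam * ((n:ℝ) + 1)) with hR
  have hRp : 0 < R := by positivity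
  have hRR : R * R = lam * (n + 1) := Real.mul_self_sqrt (by positivity)
  have key : ∀ i k β x, √(L i) * √(L k) * |dt O k (dt O i fun β => (T V ^ (2 * n)) (u β)) β x| ≤
      2 * (2 * M / R) / R := by
    intro i k β x
    set w : Jt m := fun β => √(L i) • dt O i (fun β => (T V ^ n) (u β)) β with hw
    have hwD : Der s w := ((hu.Tpow V n).dt O i).smul _
    have h1 := L1 hl hV C hwD (M := 2 * M / R) (fun β => L1 hl hV C hu hb n i β) n k β x
    have e1 : (fun β => (T V ^ n) (w β)) =
        fun β => √(L i) • dt O i (fun β => (T V ^ (2 * n)) (u β)) β := by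
      funext β
      simp only [hw, map_smul]
      congr 1
      have := congrFun (dt_map O i (fun β => (T V ^ n) (u β)) (T V ^ n)) β
      rw [this, two_mul, pow_add]; rfl
    rw [e1] at h1
    rw [bm_smul_apply, dt_apply] at h1
    simp only [bm_smul_apply] at h1
    have e2 : ∑ j, O j k * (√(L i) * dt O i (fun β => (T V ^ (2 * n)) (u β)) (β + Pi.single j 1) x)
        = √(L i) * dt O k (dt O i fun β => (T V ^ (2 * n)) (u β)) β x := by
      rw [dt_apply, Finset.mul_sum]
      refine Finset.sum_congr rfl fun j _ => ?_
      ring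
    rw [e2, abs_mul, abs_mul, abs_of_nonneg (Real.sqrt_nonneg _),
      abs_of_nonneg (Real.sqrt_nonneg _)] at h1
    refine le_trans (le_of_eq ?_) h1
    ring
  refine (L2 C (hu.Tpow V (2 * n)) key β).mono (le_of_eq ?_)
  rw [← hRR]; field_simp; ring
end S9

namespace S9
variable {m : ℕ}

def J1 (r : ℝ) (a : ℕ → ℝ → ℝ) : Prop :=
  (∀ k x, HasDerivAt (a k) (a (k + 1) x) x) ∧ ∀ k x, |a k x| ≤ r ^ k

lemma J1.iter {r : ℝ} {a : ℕ → ℝ → ℝ} (h : J1 r a) (k : ℕ) : iteratedDeriv k (a 0) = a k := by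
  induction k with
  | zero => simp
  | succ k ih =>
    rw [iteratedDeriv_succ, ih]; funext x; exact (h.1 k x).deriv

lemma J1.contDiff {r : ℝ} {a : ℕ → ℝ → ℝ} (h : J1 r a) : ContDiff ℝ (⊤ : ℕ∞) (a 0) := by
  refine contDiff_of_differentiable_iteratedDeriv fun k _ => ?_
  rw [h.iter]; exact fun x => (h.1 k x).differentiableAt

lemma J1.sq {r : ℝ} {a : ℕ → ℝ → ℝ} (h : J1 r a) :
    J1 (2 * r) (fun k => iteratedDeriv k (fun y => a 0 y * a 0 y)) := by
  have hc := h.contDiff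
  have hcc : ContDiff ℝ (⊤ : ℕ∞) (fun y => a 0 y * a 0 y) := hc.mul hc
  refine ⟨fun k x => ?_, fun k x => ?_⟩
  · have : Differentiable ℝ (iteratedDeriv k (fun y => a 0 y * a 0 y)) :=
      hcc.differentiable_iteratedDeriv k (by exact_mod_cast ENat.natCast_lt_top k)
    have h2 := (this x).hasDerivAt
    rw [← iteratedDeriv_succ] at h2
    exact h2
  · have h1 := norm_iteratedFDeriv_mul_le hc hc x (n := k) (by exact_mod_cast le_top)
    rw [norm_iteratedFDeriv_eq_norm_iteratedDeriv, Real.norm_eq_abs] at h1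
    refine h1.trans ?_
    rw [two_mul, add_pow]
    refine Finset.sum_le_sum fun i hi => ?_
    rw [norm_iteratedFDeriv_eq_norm_iteratedDeriv, norm_iteratedFDeriv_eq_norm_iteratedDeriv,
      h.iter, h.iter, Real.norm_eq_abs, Real.norm_eq_abs]
    have h2 := h.2 i x
    have h3 := h.2 (k - i) x
    have := mul_le_mul h2 h3 (abs_nonneg _) ((abs_nonneg _).trans h2)
    calc _ = (k.choose i : ℝ) * (|a i x| * |a (k - i) x|) := by ring
      _ ≤ (k.choose i : ℝ) * (r ^ i * r ^ (k - i)) := by gcongr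
      _ = _ := by ring

def Sx (k : ℕ) (x : ℝ) : ℝ :=
  ∫ w in Set.Ioc (0:ℝ) 1, (w / 4) ^ k * Real.cos (w / 4 * x + k * (Real.pi / 2))

lemma Sx_J1 : J1 (1 / 4) Sx := by
  have hb : ∀ (k : ℕ) (x : ℝ), ∀ᵐ w ∂(volume.restrict (Set.Ioc (0:ℝ) 1)),
      ‖(w / 4) ^ k * Real.cos (w / 4 * x + k * (Real.pi / 2))‖ ≤ (1 / 4) ^ k := by
    intro k x
    filter_upwards [ae_restrict_mem measurableSet_Ioc] with w hw
    rw [norm_mul, norm_pow, Real.norm_eq_abs, Real.norm_eq_abs]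
    calc _ ≤ (1 / 4 : ℝ) ^ k * 1 := by
          refine mul_le_mul ?_ (Real.abs_cos_le_one _) (abs_nonneg _) (by positivity)
          refine pow_le_pow_left₀ (abs_nonneg _) ?_ k
          rw [abs_of_nonneg (by linarith [hw.1])]; linarith [hw.2]
      _ = _ := by ring
  have hm : ∀ (k : ℕ) (x : ℝ), AEStronglyMeasurable
      (fun w : ℝ => (w / 4) ^ k * Real.cos (w / 4 * x + k * (Real.pi / 2)))
      (volume.restrict (Set.Ioc (0:ℝ) 1)) := fun k x =>
    (by fun_prop : Continuous _).aestronglyMeasurable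
  refine ⟨fun k x => ?_, fun k x => ?_⟩
  · have := hasDerivAt_integral_of_dominated_loc_of_deriv_le
      (μ := volume.restrict (Set.Ioc (0:ℝ) 1)) (x₀ := x) (s := Set.univ)
      (F := fun x w => (w / 4) ^ k * Real.cos (w / 4 * x + k * (Real.pi / 2)))
      (F' := fun x w => (w / 4) ^ (k + 1) * Real.cos (w / 4 * x + (k + 1 : ℕ) * (Real.pi / 2)))
      (bound := fun _ => (1 / 4) ^ (k + 1)) Filter.univ_mem
      (Filter.Eventually.of_forall fun y => hm k y)
      (Integrable.of_bound (hm k x) _ (hb k x)) (hm (k + 1) x)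
      (by
        filter_upwards [ae_restrict_mem measurableSet_Ioc] with w hw y _
        rw [norm_mul, norm_pow, Real.norm_eq_abs, Real.norm_eq_abs]
        calc _ ≤ (1 / 4 : ℝ) ^ (k + 1) * 1 := by
              refine mul_le_mul ?_ (Real.abs_cos_le_one _) (abs_nonneg _) (by positivity)
              refine pow_le_pow_left₀ (abs_nonneg _) ?_ _
              rw [abs_of_nonneg (by linarith [hw.1])]; linarith [hw.2]
          _ = _ := by ring)
      (integrable_const _)
      (by
        refine Filter.Eventually.of_forall fun w y _ => ?_
        have h1 : HasDerivAt (fun y : ℝ => w / 4 * y + k * (Real.pi / 2)) (w / 4) y := by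
          simpa using ((hasDerivAt_id y).const_mul (w / 4)).add_const (k * (Real.pi / 2))
        have h2 := (h1.cos).const_mul ((w / 4) ^ k)
        refine h2.congr_deriv ?_
        have : w / 4 * y + (k + 1 : ℕ) * (Real.pi / 2) = (w / 4 * y + k * (Real.pi / 2)) + Real.pi / 2 := by
          push_cast; ring
        rw [this, Real.cos_add_pi_div_two]; ring)
    exact this.2
  · have := norm_integral_le_of_norm_le_const (hb k x)
    simpa [Sx] using this

lemma Sx_decay (x : ℝ) : |x| * |Sx 0 x| ≤ 4 := by
  by_cases hx : x = 0
  · simp [hx]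
  have : Sx 0 x = 4 / x * Real.sin (x / 4) := by
    unfold Sx
    rw [← intervalIntegral.integral_of_le zero_le_one]
    have : ∀ w : ℝ, (w / 4) ^ 0 * Real.cos (w / 4 * x + (0 : ℕ) * (Real.pi / 2)) = Real.cos (w * (x / 4)) := by
      intro w; simp; congr 1; ring
    simp only [this]
    rw [intervalIntegral.integral_comp_mul_right (fun y => Real.cos y) (by positivity), integral_cos]
    simp
  rw [this, abs_mul, abs_div, ← mul_assoc, mul_div_cancel₀ _ (abs_pos.2 hx).ne']
  have := Real.abs_sin_le_one (x / 4)
  simpa using mul_le_mul_of_nonneg_left this (by norm_num : (0:ℝ) ≤ |4|)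

lemma Sx_zero : Sx 0 0 = 1 := by
  simp [Sx]

def kap (k : ℕ) : ℝ → ℝ := iteratedDeriv k (fun y => (Sx 0 y * Sx 0 y) * (Sx 0 y * Sx 0 y))

lemma kap_J1 : J1 1 kap := by
  have h := Sx_J1.sq.sq
  have e : (2 * (2 * (1 / 4)) : ℝ) = 1 := by norm_num
  rw [e] at h
  exact h

lemma kap0 (x : ℝ) : kap 0 x = (Sx 0 x) ^ 4 := by simp [kap]; ring

lemma kap_nonneg (x : ℝ) : 0 ≤ kap 0 x := by rw [kap0]; positivity

lemma kap_cont (k : ℕ) : Continuous (kap k) :=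
  continuous_iff_continuousAt.2 fun x => (kap_J1.1 k x).continuousAt

lemma kap_bd (x : ℝ) : kap 0 x * (1 + |x|) * (1 + x ^ 2) ≤ 1024 := by
  rw [kap0]
  have h1 : |Sx 0 x| ≤ 1 := by simpa using Sx_J1.2 0 x
  have h2 := Sx_decay x
  have e : (Sx 0 x) ^ 4 = |Sx 0 x| ^ 4 := by rw [← abs_pow]; rw [abs_of_nonneg (by positivity)]
  rw [e, ← sq_abs x]
  set a := |Sx 0 x|
  set y := |x|
  have ha : 0 ≤ a := abs_nonneg _
  have hy : 0 ≤ y := abs_nonneg _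
  have hya : 0 ≤ y * a := by positivity
  have h3 : y * a * a ≤ 4 := by nlinarith
  have h4 : (y * a) ^ 2 ≤ 16 := by nlinarith
  have h5 : (y * a) ^ 3 ≤ 64 := by nlinarith [pow_nonneg hya 2]
  have ha2 : a ^ 2 ≤ 1 := by nlinarith
  have ha3 : a ^ 3 ≤ 1 := by nlinarith
  have ha4 : a ^ 4 ≤ 1 := by nlinarith [pow_nonneg ha 3]
  have e1 : a ^ 4 * (1 + y) * (1 + y ^ 2) = a ^ 4 + a ^ 3 * (y * a) + a ^ 2 * (y * a) ^ 2 + a * (y * a) ^ 3 := by ring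
  rw [e1]
  nlinarith [mul_le_mul ha3 h2 hya zero_le_one, mul_le_mul ha2 h4 (pow_nonneg hya 2) zero_le_one,
    mul_le_mul h1 h5 (pow_nonneg hya 3) zero_le_one]

lemma kap_int1 : Integrable (fun x => kap 0 x * (1 + |x|)) := by
  refine (integrable_inv_one_add_sq.const_mul 1024).mono'
    ((kap_cont 0).mul (by fun_prop)).aestronglyMeasurable (Filter.Eventually.of_forall fun x => ?_)
  rw [Real.norm_of_nonneg (mul_nonneg (kap_nonneg x) (by positivity)), ← div_eq_mul_inv,
    le_div_iff₀ (by positivity)]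
  exact kap_bd x

lemma kap_int : Integrable (kap 0) := by
  refine kap_int1.mono' (kap_cont 0).aestronglyMeasurable (Filter.Eventually.of_forall fun x => ?_)
  rw [Real.norm_of_nonneg (kap_nonneg x)]
  have := mul_nonneg (kap_nonneg x) (abs_nonneg x)
  linarith

def Zk : ℝ := ∫ x, kap 0 x

lemma Zk_pos : 0 < Zk := by
  unfold Zk
  rw [integral_pos_iff_support_of_nonneg (fun x => kap_nonneg x) kap_int]
  refine IsOpen.measure_pos _ (isOpen_compl_singleton.preimage (kap_cont 0)) ⟨0, ?_⟩
  simp [kap0, Sx_zero]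

def Kk : Measure ℝ := volume.withDensity (fun x => ENNReal.ofReal (kap 0 x / Zk))

lemma Kk_meas : Measurable fun x => ENNReal.ofReal (kap 0 x / Zk) :=
  ((kap_cont 0).measurable.div_const _).ennreal_ofReal

instance : IsProbabilityMeasure Kk := by
  refine ⟨?_⟩
  unfold Kk
  rw [withDensity_apply _ MeasurableSet.univ, Measure.restrict_univ,
    ← ofReal_integral_eq_lintegral_ofReal (kap_int.div_const _)
      (Filter.Eventually.of_forall fun x => div_nonneg (kap_nonneg x) Zk_pos.le),
    integral_div]
  change ENNReal.ofReal (Zk / Zk) = 1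
  rw [div_self Zk_pos.ne', ENNReal.ofReal_one]

lemma Kk_abs : Integrable (fun r => |r|) Kk := by
  unfold Kk
  rw [integrable_withDensity_iff Kk_meas (Filter.Eventually.of_forall fun x => ENNReal.ofReal_lt_top)]
  refine (kap_int1.div_const Zk).mono' ?_ (Filter.Eventually.of_forall fun x => ?_)
  · exact (measurable_id.abs.mul Kk_meas.ennreal_toReal).aestronglyMeasurable
  · rw [ENNReal.toReal_ofReal (div_nonneg (kap_nonneg x) Zk_pos.le),
      Real.norm_of_nonneg (mul_nonneg (abs_nonneg x) (div_nonneg (kap_nonneg x) Zk_pos.le))]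
    rw [← mul_div_assoc]
    refine div_le_div_of_nonneg_right ?_ Zk_pos.le
    nlinarith [kap_nonneg x, abs_nonneg x]

lemma Kk_Icc {p q : ℝ} (h : p ≤ q) : Kk.real (Set.Icc p q) = ∫ x in p..q, kap 0 x / Zk := by
  unfold Kk Measure.real
  rw [withDensity_apply _ measurableSet_Icc,
    ← ofReal_integral_eq_lintegral_ofReal (kap_int.div_const _).integrableOn
      (Filter.Eventually.of_forall fun x => div_nonneg (kap_nonneg x) Zk_pos.le),
    ENNReal.toReal_ofReal (integral_nonneg fun x => div_nonneg (kap_nonneg x) Zk_pos.le),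
    integral_Icc_eq_integral_Ioc, intervalIntegral.integral_of_le h]

def oneJ (a b s : ℝ) : ℕ → ℝ → ℝ
  | 0, t => Kk.real {r | a ≤ t + s * r ∧ t + s * r ≤ b}
  | k + 1, t => if s = 0 then 0 else
      (-1) ^ (k + 1) * (kap k ((b - t) / s) - kap k ((a - t) / s)) / Zk

def M1 : ℝ := 1 + 2 / Zk

lemma M1_ge : 1 ≤ M1 := by
  have := Zk_pos
  unfold M1
  have : 0 < 2 / Zk := by positivity
  linarith

lemma oneJ_bd (a b s : ℝ) (k : ℕ) (t : ℝ) : |oneJ a b s k t| ≤ M1 := by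
  cases k with
  | zero =>
    unfold oneJ
    rw [abs_of_nonneg measureReal_nonneg]
    exact measureReal_le_one.trans M1_ge
  | succ k =>
    unfold oneJ
    have hz := Zk_pos
    split_ifs with hs
    · simpa using le_trans zero_le_one M1_ge
    · rw [abs_div, abs_mul, abs_pow, abs_neg, abs_one, one_pow, one_mul, abs_of_pos hz]
      have h1 := kap_J1.2 k ((b - t) / s)
      have h2 := kap_J1.2 k ((a - t) / s)
      rw [one_pow] at h1 h2
      have h3 : |kap k ((b - t) / s) - kap k ((a - t) / s)| ≤ 2 := by
        refine (abs_sub _ _).trans ?_; linarith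
      have : |kap k ((b - t) / s) - kap k ((a - t) / s)| / Zk ≤ 2 / Zk := by gcongr
      unfold M1; linarith

lemma oneJ_zero {a b s : ℝ} (hab : a ≤ b) (hs : 0 < s) (t : ℝ) :
    oneJ a b s 0 t = ∫ x in (a - t) / s..(b - t) / s, kap 0 x / Zk := by
  rw [← Kk_Icc (by gcongr)]
  unfold oneJ
  refine congrArg Kk.real ?_
  ext r
  simp only [Set.mem_ofPred_eq, Set.mem_Icc]
  rw [div_le_iff₀ hs, le_div_iff₀ hs]
  constructor <;> rintro ⟨h1, h2⟩ <;> constructor <;> linarith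

lemma oneJ_deriv {a b s : ℝ} (hab : a ≤ b) (hs : 0 < s) (k : ℕ) (t : ℝ) :
    HasDerivAt (oneJ a b s k) (oneJ a b s (k + 1) t / s) t := by
  have hd : ∀ c : ℝ, HasDerivAt (fun t => (c - t) / s) (-1 / s) t := fun c =>
    ((hasDerivAt_id t).const_sub c).div_const s
  cases k with
  | zero =>
    have e : oneJ a b s 0 = fun t => (∫ x in (0:ℝ)..(b - t) / s, kap 0 x / Zk) -
        ∫ x in (0:ℝ)..(a - t) / s, kap 0 x / Zk := by
      funext t
      rw [oneJ_zero hab hs, intervalIntegral.integral_interval_sub_left] <;>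
      exact ((kap_cont 0).div_const _).intervalIntegrable _ _
    rw [e]
    have hp : ∀ c : ℝ, HasDerivAt (fun t => ∫ x in (0:ℝ)..(c - t) / s, kap 0 x / Zk)
        (kap 0 ((c - t) / s) / Zk * (-1 / s)) t := fun c =>
      HasDerivAt.comp t (h₂ := fun u => ∫ x in (0:ℝ)..u, kap 0 x / Zk)
        (((kap_cont 0).div_const Zk).integral_hasStrictDerivAt 0 ((c - t) / s)).hasDerivAt (hd c)
    refine ((hp b).sub (hp a)).congr_deriv ?_
    simp only [oneJ, hs.ne', if_false]
    ring
  | succ k =>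
    have e : oneJ a b s (k + 1) = fun t =>
        (-1) ^ (k + 1) * (kap k ((b - t) / s) - kap k ((a - t) / s)) / Zk := by
      funext t; simp [oneJ, hs.ne']
    rw [e]
    have hp : ∀ c : ℝ, HasDerivAt (fun t => kap k ((c - t) / s))
        (kap (k + 1) ((c - t) / s) * (-1 / s)) t := fun c =>
      HasDerivAt.comp t (kap_J1.1 k ((c - t) / s)) (hd c)
    refine ((((hp b).sub (hp a)).const_mul ((-1) ^ (k + 1))).div_const Zk).congr_deriv ?_
    simp only [oneJ, hs.ne', if_false]
    ring

lemma oneJ_meas (a b s : ℝ) (k : ℕ) : Measurable (oneJ a b s k) := by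
  cases k with
  | zero =>
    unfold oneJ
    have hS : MeasurableSet {p : ℝ × ℝ | a ≤ p.1 + s * p.2 ∧ p.1 + s * p.2 ≤ b} :=
      measurableSet_Icc.preimage (f := fun p : ℝ × ℝ => p.1 + s * p.2) (by fun_prop)
    exact (measurable_measure_prodMk_left (ν := Kk) hS).ennreal_toReal
  | succ k =>
    unfold oneJ
    split_ifs
    · exact measurable_const
    · have := (kap_cont k).measurable
      fun_prop

def ker (a b s : Fin m → ℝ) : Jt m := fun β =>
  ⟨fun x => ∏ l, oneJ (a l) (b l) (s l) (β l) (x l), by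
    refine ⟨?_, M1 ^ m, fun x => ?_⟩
    · refine Finset.measurable_fun_prod _ fun l _ => ?_
      exact (oneJ_meas _ _ _ _).comp (measurable_pi_apply l)
    · rw [Finset.abs_prod]
      calc _ ≤ ∏ _l : Fin m, M1 := Finset.prod_le_prod (fun _ _ => abs_nonneg _)
            fun l _ => oneJ_bd _ _ _ _ _
        _ = M1 ^ m := by simp⟩

lemma ker_apply (a b s : Fin m → ℝ) (β : Fin m → ℕ) (x : EE m) :
    ker a b s β x = ∏ l, oneJ (a l) (b l) (s l) (β l) (x l) := rfl

lemma ker_bd (a b s : Fin m → ℝ) (β : Fin m → ℕ) : Bd (ker a b s β) (M1 ^ m) := by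
  intro x
  rw [ker_apply, Finset.abs_prod]
  calc _ ≤ ∏ _l : Fin m, M1 := Finset.prod_le_prod (fun _ _ => abs_nonneg _)
        fun l _ => oneJ_bd _ _ _ _ _
    _ = M1 ^ m := by simp

lemma ker_zero (a b s : Fin m → ℝ) : ker a b s 0 = T (mu Kk s) (boxI a b) := by
  ext x
  rw [T_mu, ker_apply]
  have : ∀ r : Fin m → ℝ, boxI a b (x + fun l => s l * r l) =
      ∏ l, ({r : ℝ | a l ≤ x l + s l * r ∧ x l + s l * r ≤ b l}.indicator 1 (r l) : ℝ) := by
    intro r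
    simp only [boxI, ind_apply]
    by_cases h : ∀ l, a l ≤ x l + s l * r l ∧ x l + s l * r l ≤ b l
    · rw [Set.indicator_of_mem (by exact h)]
      rw [Finset.prod_eq_one]
      · rfl
      · intro l _; rw [Set.indicator_of_mem (by exact h l)]; rfl
    · rw [Set.indicator_of_notMem (by exact h)]
      push Not at h
      obtain ⟨l, hl⟩ := h
      rw [Finset.prod_eq_zero (Finset.mem_univ l)]
      rw [Set.indicator_of_notMem]
      intro hh; exact absurd (hl hh.1) (not_lt.2 hh.2)
  simp only [this]
  rw [integral_fintype_prod_eq_prod (f := fun l r => ({r : ℝ | a l ≤ x l + s l * r ∧ x l + s l * r ≤ b l}.indicator 1 r : ℝ))]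
  refine Finset.prod_congr rfl fun l _ => ?_
  rw [integral_indicator_one]
  · rfl
  · exact measurableSet_Icc.preimage (f := fun r : ℝ => x l + s l * r) (by fun_prop)

lemma ker_der (a b s : Fin m → ℝ) (hab : ∀ l, a l ≤ b l) (hs : ∀ l, 0 ≤ s l) :
    Der s (ker a b s) := by
  intro β x v hv t
  simp only [ker_apply]
  have hf : ∀ l ∈ (Finset.univ : Finset (Fin m)), HasDerivAt
      (fun t : ℝ => oneJ (a l) (b l) (s l) (β l) ((x + t • v) l))
      (v l / s l * oneJ (a l) (b l) (s l) (β l + 1) ((x + t • v) l)) t := by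
    intro l _
    simp only [Pi.add_apply, Pi.smul_apply, smul_eq_mul]
    by_cases h0 : s l = 0
    · rw [hv l h0]; simpa using hasDerivAt_const t _
    · have hp : 0 < s l := lt_of_le_of_ne (hs l) (Ne.symm h0)
      have h1 : HasDerivAt (fun t : ℝ => x l + t * v l) (v l) t := by
        simpa using ((hasDerivAt_id t).mul_const (v l)).const_add (x l)
      refine (HasDerivAt.comp t (oneJ_deriv (hab l) hp (β l) (x l + t * v l)) h1).congr_deriv ?_
      ring
  refine (HasDerivAt.fun_finsetProd hf).congr_deriv ?_
  refine Finset.sum_congr rfl fun j _ => ?_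
  rw [← Finset.mul_prod_erase _ _ (Finset.mem_univ j), smul_eq_mul]
  have : ∏ l ∈ Finset.univ.erase j, oneJ (a l) (b l) (s l) ((β + Pi.single j 1 : Fin m → ℕ) l) ((x + t • v) l) =
      ∏ l ∈ Finset.univ.erase j, oneJ (a l) (b l) (s l) (β l) ((x + t • v) l) := by
    refine Finset.prod_congr rfl fun l hl => ?_
    rw [Pi.add_apply, Pi.single_eq_of_ne (Finset.ne_of_mem_erase hl), add_zero]
  rw [this, Pi.add_apply β, Pi.single_eq_same]
  ring
end S9

namespace S9
variable {m : ℕ}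

def qset (F : Measure (EE m)) (l : Fin m) (q : ℝ) : Set ℝ :=
  {y | 0 ≤ y ∧ F.real {z | y < |z l|} ≤ q}

def quant (F : Measure (EE m)) (l : Fin m) (q : ℝ) : ℝ := sInf (qset F l q)

section
variable (F : Measure (EE m)) [IsProbabilityMeasure F] (l : Fin m)

lemma tail_meas (y : ℝ) : MeasurableSet {z : EE m | y < |z l|} :=
  measurableSet_lt (by fun_prop) (by fun_prop)

lemma qset_bdd (q : ℝ) : BddBelow (qset F l q) := ⟨0, fun _ h => h.1⟩

lemma qset_ne {q : ℝ} (hq : 0 < q) : (qset F l q).Nonempty := by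
  have hant : Antitone (fun k : ℕ => {z : EE m | (k : ℝ) < |z l|}) := by
    intro i j hij z hz
    have : (i : ℝ) ≤ j := by exact_mod_cast hij
    exact lt_of_le_of_lt this hz
  have h := tendsto_measure_iInter_atTop (μ := F)
    (fun k : ℕ => (tail_meas l (k : ℝ)).nullMeasurableSet) hant ⟨0, measure_ne_top _ _⟩
  have he : ⋂ k : ℕ, {z : EE m | (k : ℝ) < |z l|} = ∅ := by
    ext z
    simp only [Set.mem_iInter, Set.mem_ofPred_eq, Set.mem_empty_iff_false, iff_false, not_forall, not_lt]
    exact exists_nat_ge _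
  rw [he, measure_empty] at h
  have h2 := h.eventually (gt_mem_nhds (by simpa using hq : (0 : ℝ≥0∞) < ENNReal.ofReal q))
  obtain ⟨k, hk⟩ := h2.exists
  refine ⟨k, Nat.cast_nonneg k, ?_⟩
  exact ENNReal.toReal_le_of_le_ofReal hq.le hk.le

lemma quant_nonneg {q : ℝ} (hq : 0 < q) : 0 ≤ quant F l q :=
  le_csInf (qset_ne F l hq) fun _ h => h.1

lemma quant_anti {q q' : ℝ} (hq : 0 < q) (h : q ≤ q') : quant F l q' ≤ quant F l q :=
  csInf_le_csInf (qset_bdd F l q') (qset_ne F l hq) fun _ hy => ⟨hy.1, hy.2.trans h⟩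

lemma quant_tail {q : ℝ} (hq : 0 < q) : F.real {z | quant F l q < |z l|} ≤ q := by
  set y := quant F l q with hy
  have hmono : Monotone (fun k : ℕ => {z : EE m | y + 1 / ((k : ℝ) + 1) < |z l|}) := by
    intro i j hij z hz
    have : 1 / ((j : ℝ) + 1) ≤ 1 / ((i : ℝ) + 1) := Nat.one_div_le_one_div hij
    have hz' : y + 1 / ((i : ℝ) + 1) < |z l| := hz
    change y + 1 / ((j : ℝ) + 1) < |z l|
    linarith
  have h := tendsto_measure_iUnion_atTop (μ := F) hmono
  have he : ⋃ k : ℕ, {z : EE m | y + 1 / ((k : ℝ) + 1) < |z l|} = {z | y < |z l|} := by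
    ext z
    simp only [Set.mem_iUnion, Set.mem_ofPred_eq]
    constructor
    · rintro ⟨k, hk⟩
      have : 0 < 1 / ((k : ℝ) + 1) := Nat.one_div_pos_of_nat
      linarith
    · intro hz
      obtain ⟨k, hk⟩ := exists_nat_one_div_lt (sub_pos.2 hz)
      exact ⟨k, by linarith⟩
  rw [he] at h
  refine ENNReal.toReal_le_of_le_ofReal hq.le (le_of_tendsto' h fun k => ?_)
  have hk : quant F l q < y + 1 / ((k : ℝ) + 1) := by
    have : 0 < 1 / ((k : ℝ) + 1) := Nat.one_div_pos_of_nat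
    linarith
  obtain ⟨w, hw, hwy⟩ := exists_lt_of_csInf_lt (qset_ne F l hq) hk
  have h3 : F {z : EE m | y + 1 / ((k : ℝ) + 1) < |z l|} ≤ F {z : EE m | w < |z l|} :=
    measure_mono fun z hz => lt_trans hwy hz
  refine h3.trans ?_
  have := hw.2
  rw [ENNReal.le_ofReal_iff_toReal_le (measure_ne_top _ _) hq.le]
  exact this

lemma quant_low {q : ℝ} (hq : 0 < q) :
    quant F l q = 0 ∨ (0 < quant F l q ∧ q ≤ F.real {z | quant F l q ≤ |z l|}) := by
  by_cases h0 : quant F l q = 0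
  · exact Or.inl h0
  right
  have hp : 0 < quant F l q := lt_of_le_of_ne (quant_nonneg F l hq) (Ne.symm h0)
  refine ⟨hp, ?_⟩
  set y := quant F l q with hy
  have hant : Antitone (fun k : ℕ => {z : EE m | y - y / ((k : ℝ) + 1) < |z l|}) := by
    intro i j hij z hz
    have : y / ((j : ℝ) + 1) ≤ y / ((i : ℝ) + 1) := by gcongr
    have hz' : y - y / ((j : ℝ) + 1) < |z l| := hz
    change y - y / ((i : ℝ) + 1) < |z l|
    linarith
  have h := tendsto_measure_iInter_atTop (μ := F)
    (fun k : ℕ => (tail_meas l (y - y / ((k : ℝ) + 1))).nullMeasurableSet) hant ⟨0, measure_ne_top _ _⟩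
  have he : ⋂ k : ℕ, {z : EE m | y - y / ((k : ℝ) + 1) < |z l|} = {z | y ≤ |z l|} := by
    ext z
    simp only [Set.mem_iInter, Set.mem_ofPred_eq]
    constructor
    · intro hz
      by_contra hc
      push Not at hc
      obtain ⟨k, hk⟩ := exists_nat_one_div_lt (div_pos (sub_pos.2 hc) hp)
      have := hz k
      rw [lt_div_iff₀ hp] at hk
      have e : 1 / ((k : ℝ) + 1) * y = y / ((k : ℝ) + 1) := by ring
      linarith
    · intro hz k
      have : 0 < y / ((k : ℝ) + 1) := by positivity
      linarith
  rw [he] at h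
  have h2 : ENNReal.ofReal q ≤ F {z | y ≤ |z l|} := by
    refine ge_of_tendsto' h fun k => ?_
    have hlt : y - y / ((k : ℝ) + 1) < quant F l q := by
      have : 0 < y / ((k : ℝ) + 1) := by positivity
      linarith
    have hge : 0 ≤ y - y / ((k : ℝ) + 1) := by
      rw [sub_nonneg, div_le_iff₀ (by positivity)]
      nlinarith [Nat.cast_nonneg (α := ℝ) k]
    have hn := notMem_of_lt_csInf hlt (qset_bdd F l q)
    simp only [qset, Set.mem_ofPred_eq, not_and, not_le] at hn
    exact (ENNReal.ofReal_le_iff_le_toReal (measure_ne_top _ _)).2 (hn hge).le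
  exact (ENNReal.ofReal_le_iff_le_toReal (measure_ne_top _ _)).1 h2
end

/-- number of thresholds exceeded -/
def cnt (y : ℕ → ℝ) (N : ℕ) (t : ℝ) : ℕ := ∑ i ∈ Finset.range N, if y i < t then 1 else 0

lemma cnt_meas (y : ℕ → ℝ) (N : ℕ) : Measurable (cnt y N) := by
  unfold cnt
  refine Finset.measurable_fun_sum _ fun i _ => ?_
  exact Measurable.ite measurableSet_Ioi measurable_const measurable_const

lemma cnt_le (y : ℕ → ℝ) (N : ℕ) (t : ℝ) : cnt y N t ≤ N := by
  unfold cnt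
  calc _ ≤ ∑ i ∈ Finset.range N, 1 := Finset.sum_le_sum fun i _ => by split_ifs <;> simp
    _ = N := by simp

lemma cnt_eq (y : ℕ → ℝ) (N : ℕ) (t : ℝ) :
    cnt y N t = ((Finset.range N).filter fun i => y i < t).card := by
  unfold cnt; rw [Finset.card_filter]

lemma cnt_up {y : ℕ → ℝ} (hy : Monotone y) {N : ℕ} {t : ℝ} (h : cnt y N t < N) :
    t ≤ y (cnt y N t) := by
  by_contra hc
  push Not at hc
  set k := cnt y N t with hk
  have : Finset.range (k + 1) ⊆ (Finset.range N).filter fun i => y i < t := by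
    intro i hi
    simp only [Finset.mem_range, Finset.mem_filter] at hi ⊢
    exact ⟨by omega, lt_of_le_of_lt (hy (by omega)) hc⟩
  have := Finset.card_le_card this
  rw [← cnt_eq, Finset.card_range] at this
  omega

lemma cnt_low {y : ℕ → ℝ} (hy : Monotone y) {N : ℕ} {t : ℝ} {k : ℕ} (h : cnt y N t = k + 1) :
    y k < t := by
  by_contra hc
  push Not at hc
  have : ((Finset.range N).filter fun i => y i < t) ⊆ Finset.range k := by
    intro i hi
    simp only [Finset.mem_range, Finset.mem_filter] at hi ⊢
    by_contra hik
    exact absurd hi.2 (not_lt.2 (hc.trans (hy (by omega))))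
  have := Finset.card_le_card this
  rw [← cnt_eq, Finset.card_range, h] at this
  omega

lemma cells (hm : 0 < m) (F : Measure (EE m)) [IsProbabilityMeasure F] (N : ℕ) (hN : 0 < N) :
    ∃ (A : (Fin m → Fin (N + 1)) → Set (EE m)) (Y : (Fin m → Fin (N + 1)) → Fin m → ℝ),
    (∀ f, MeasurableSet (A f)) ∧ (∀ f z, z ∈ A f ↔ -z ∈ A f) ∧
    (∀ z, ∃ c, ∀ f, z ∈ A f ↔ f = c) ∧ 1 / 2 ≤ F.real (A 0) ∧
    (∀ f l, F.real (A f) ≤ 2 * (1 / 2) ^ (f l : ℕ)) ∧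
    (∀ f l, 0 ≤ Y f l) ∧
    (∀ f, (∀ l, (f l : ℕ) < N) → (∀ z ∈ A f, ∀ l, |z l| ≤ Y f l) ∧
      (∀ z ∈ A 0, ∀ l, |z l| ≤ Y f l) ∧
      (∀ l, Y f l = 0 ∨ (0 < Y f l ∧ F.real (A f) / (4 * m) ≤ F.real {z | Y f l ≤ |z l|}))) := by
  have hm' : (0:ℝ) < m := by exact_mod_cast hm
  set q : ℕ → ℝ := fun i => (1 / 2) ^ i / (2 * m) with hq
  have hqp : ∀ i, 0 < q i := fun i => by simp only [hq]; positivity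
  have hqa : ∀ i j, i ≤ j → q j ≤ q i := by
    intro i j hij
    simp only [hq]
    have : (1 / 2 : ℝ) ^ j ≤ (1 / 2) ^ i := pow_le_pow_of_le_one (by norm_num) (by norm_num) hij
    gcongr
  set y : Fin m → ℕ → ℝ := fun l i => quant F l (q i) with hy
  have hym : ∀ l, Monotone (y l) := fun l i j hij => quant_anti F l (hqp j) (hqa i j hij)
  set cc : EE m → Fin m → Fin (N + 1) := fun z l =>
    ⟨cnt (y l) N |z l|, Nat.lt_succ_of_le (cnt_le _ _ _)⟩ with hcc
  set A : (Fin m → Fin (N + 1)) → Set (EE m) := fun f => {z | cc z = f} with hA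
  have hmem : ∀ f z, z ∈ A f → ∀ l, cnt (y l) N |z l| = f l := by
    intro f z hz l
    have : cc z = f := hz
    rw [← this]
  have hbase : ∀ f l, F.real (A f) ≤ 2 * (1 / 2) ^ (f l : ℕ) := by
    intro f l
    rcases Nat.eq_zero_or_pos (f l : ℕ) with h0 | hp
    · rw [h0]; refine measureReal_le_one.trans (by norm_num)
    · obtain ⟨k, hk⟩ : ∃ k, (f l : ℕ) = k + 1 := ⟨f l - 1, by omega⟩
      have h1 : F.real (A f) ≤ F.real {z | y l k < |z l|} :=
        measureReal_mono (fun z hz => cnt_low (hym l) ((hmem f z hz l).trans hk))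
      refine h1.trans ((quant_tail F l (hqp k)).trans ?_)
      rw [hk]
      simp only [hq]
      rw [pow_succ, div_le_iff₀ (by positivity)]
      have h1m : (1:ℝ) ≤ m := by exact_mod_cast hm
      have : (0:ℝ) ≤ (1 / 2) ^ k := by positivity
      nlinarith
  refine ⟨A, fun f l => y l (f l), ?_, ?_, ?_, ?_, hbase, fun f l => quant_nonneg F l (hqp _), ?_⟩
  · intro f
    have : A f = ⋂ l, {z : EE m | cnt (y l) N |z l| = f l} := by
      ext z
      simp only [Set.mem_iInter, Set.mem_ofPred_eq]
      constructor
      · exact hmem f z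
      · intro h; change cc z = f; funext l; exact Fin.ext (h l)
    rw [this]
    refine MeasurableSet.iInter fun l => ?_
    exact ((cnt_meas (y l) N).comp (by fun_prop : Measurable fun z : EE m => |z l|))
      (measurableSet_singleton (f l : ℕ))
  · intro f z
    have : cc (-z) = cc z := by
      funext l; simp only [hcc, Pi.neg_apply, abs_neg]
    change cc z = f ↔ cc (-z) = f
    rw [this]
  · intro z
    exact ⟨cc z, fun f => eq_comm⟩
  · have h0 : (A 0)ᶜ ⊆ ⋃ l, {z : EE m | y l 0 < |z l|} := by
      intro z hz
      by_contra hc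
      simp only [Set.mem_iUnion, Set.mem_ofPred_eq, not_exists, not_lt] at hc
      refine hz ?_
      change cc z = 0
      funext l
      refine Fin.ext ?_
      change cnt (y l) N |z l| = 0
      by_contra hne
      obtain ⟨k, hk⟩ : ∃ k, cnt (y l) N |z l| = k + 1 := ⟨cnt (y l) N |z l| - 1, by omega⟩
      have := cnt_low (hym l) hk
      exact absurd (hc l) (not_le.2 (lt_of_le_of_lt (hym l (Nat.zero_le k)) this))
    have hAm : MeasurableSet (A 0) := by
      have : A 0 = ⋂ l, {z : EE m | cnt (y l) N |z l| = 0} := by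
        ext z
        simp only [Set.mem_iInter, Set.mem_ofPred_eq]
        constructor
        · intro hz l; exact hmem 0 z hz l
        · intro h; change cc z = 0; funext l; exact Fin.ext (h l)
      rw [this]
      refine MeasurableSet.iInter fun l => ?_
      exact ((cnt_meas (y l) N).comp (by fun_prop : Measurable fun z : EE m => |z l|))
        (measurableSet_singleton (0 : ℕ))
    have h1 : F.real (A 0)ᶜ ≤ ∑ l : Fin m, q 0 :=
      (measureReal_mono h0).trans ((measureReal_iUnion_fintype_le _).trans
        (Finset.sum_le_sum fun l _ => quant_tail F l (hqp 0)))
    rw [probReal_compl_eq_one_sub hAm] at h1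
    have e : ∑ _l : Fin m, q 0 = 1 / 2 := by
      simp only [hq, Finset.sum_const, Finset.card_univ, Fintype.card_fin, nsmul_eq_mul]
      field_simp
    linarith
  · intro f hf
    refine ⟨?_, ?_, ?_⟩
    · intro z hz l
      have h1 := hmem f z hz l
      have := cnt_up (hym l) (t := |z l|) (N := N) (by rw [h1]; exact hf l)
      rwa [h1] at this
    · intro z hz l
      have h1 := hmem 0 z hz l
      have := cnt_up (hym l) (t := |z l|) (N := N) (by rw [h1]; exact hN)
      rw [h1] at this
      exact this.trans (hym l (Nat.zero_le _))
    · intro l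
      rcases quant_low F l (hqp (f l)) with h | ⟨h1, h2⟩
      · exact Or.inl h
      · refine Or.inr ⟨h1, le_trans ?_ h2⟩
        simp only [hq]
        rw [div_le_div_iff₀ (by positivity) (by positivity)]
        have := hbase f l
        nlinarith

/-- ratio of the geometric weights -/
def rr (m : ℕ) : ℝ := (1 / 2 : ℝ) ^ (1 / (4 * m : ℝ))

def WW (m : ℕ) : ℝ := 2 * (1 - rr m)⁻¹ ^ m

lemma rr_pow (hm : 0 < m) : rr m ^ (4 * m) = 1 / 2 := by
  unfold rr
  rw [← Real.rpow_natCast, ← Real.rpow_mul (by norm_num)]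
  have : (m : ℝ) ≠ 0 := by exact_mod_cast hm.ne'
  rw [show (1 / (4 * m : ℝ)) * ((4 * m : ℕ) : ℝ) = 1 by push_cast; field_simp]
  simp

lemma rr_nonneg : 0 ≤ rr m := by unfold rr; positivity

lemma rr_lt (hm : 0 < m) : rr m < 1 := by
  by_contra h
  push Not at h
  have := one_le_pow₀ h (n := 4 * m)
  rw [rr_pow hm] at this
  norm_num at this

lemma sqrt4_le {p x : ℝ} (hx : 0 ≤ x) (h : p ≤ x ^ 4) : √(√p) ≤ x := by
  rw [Real.sqrt_le_left hx, Real.sqrt_le_left (by positivity)]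
  calc p ≤ x ^ 4 := h
    _ = _ := by ring

lemma weights (hm : 0 < m) (N : ℕ) (p : (Fin m → Fin (N + 1)) → ℝ)
    (hp : ∀ f l, p f ≤ 2 * (1 / 2) ^ (f l : ℕ)) : ∑ f, √(√(p f)) ≤ WW m := by
  have hr0 := rr_nonneg (m := m)
  have hr1 := rr_lt hm
  have h1 : ∀ f, √(√(p f)) ≤ 2 * ∏ l, rr m ^ (f l : ℕ) := by
    intro f
    have : Nonempty (Fin m) := ⟨⟨0, hm⟩⟩
    obtain ⟨L, hL⟩ := Finite.exists_max f
    have hs : ∑ l, (f l : ℕ) ≤ m * (f L : ℕ) := by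
      calc _ ≤ ∑ _l : Fin m, (f L : ℕ) := Finset.sum_le_sum fun l _ => hL l
        _ = _ := by simp
    rw [Finset.prod_pow_eq_pow_sum]
    have h2 : rr m ^ (m * (f L : ℕ)) ≤ rr m ^ ∑ l, (f l : ℕ) :=
      pow_le_pow_of_le_one hr0 hr1.le hs
    refine le_trans (sqrt4_le (x := 2 * rr m ^ (m * (f L : ℕ))) (by positivity) ?_) (by linarith)
    refine (hp f L).trans ?_
    rw [mul_pow, ← pow_mul, show m * (f L : ℕ) * 4 = 4 * m * (f L : ℕ) by ring, pow_mul, rr_pow hm]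
    have : (0:ℝ) ≤ (1 / 2) ^ (f L : ℕ) := by positivity
    linarith
  refine (Finset.sum_le_sum fun f _ => h1 f).trans ?_
  rw [← Finset.mul_sum]
  have h2 : ∑ f : Fin m → Fin (N + 1), ∏ l, rr m ^ (f l : ℕ) = ∏ _l : Fin m, ∑ k : Fin (N + 1), rr m ^ (k : ℕ) := by
    rw [Finset.prod_univ_sum]; simp
  rw [h2, Finset.prod_const, Finset.card_univ, Fintype.card_fin]
  unfold WW
  have h3 : ∑ k : Fin (N + 1), rr m ^ (k : ℕ) ≤ (1 - rr m)⁻¹ := by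
    rw [Fin.sum_univ_eq_sum_range (fun k => rr m ^ k), ← tsum_geometric_of_lt_one hr0 hr1]
    exact (summable_geometric_of_lt_one hr0 hr1).sum_le_tsum _ (fun _ _ => by positivity)
  have h4 : 0 ≤ ∑ k : Fin (N + 1), rr m ^ (k : ℕ) := Finset.sum_nonneg fun _ _ => by positivity
  gcongr
end S9

namespace S9
variable {m : ℕ}

def dl (F : Measure (EE m)) [IsFiniteMeasure F] (A Z : Set (EE m)) : Module.End ℝ (BM m) :=
  T (F.restrict A) - (F.real A / F.real Z) • T (F.restrict Z)

def dz (F : Measure (EE m)) [IsFiniteMeasure F] (Z : Set (EE m)) : Module.End ℝ (BM m) :=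
  (1 / F.real Z) • T (F.restrict Z) - 1

lemma capp {L L' : Module.End ℝ (BM m)} (h : Commute L L') (f : BM m) : L (L' f) = L' (L f) :=
  congrArg (fun (P : Module.End ℝ (BM m)) => P f) h.eq

lemma csub {L L' Q : Module.End ℝ (BM m)} (h : Commute L Q) (h' : Commute L' Q) :
    Commute (L - L') Q := by
  refine LinearMap.ext fun f => ?_
  change L (Q f) - L' (Q f) = Q (L f - L' f)
  rw [map_sub, capp h, capp h']

def Gd (L : Module.End ℝ (BM m)) : Prop :=
  ∀ (μ : Measure (EE m)) [IsFiniteMeasure μ], Commute L (T μ)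

lemma Gd_T (μ : Measure (EE m)) [IsFiniteMeasure μ] : Gd (T μ) := fun ν _ => T_comm μ ν
lemma Gd.sub {L L' : Module.End ℝ (BM m)} (h : Gd L) (h' : Gd L') : Gd (L - L') :=
  fun ν _ => csub (h ν) (h' ν)
lemma Gd.smul {L : Module.End ℝ (BM m)} (h : Gd L) (c : ℝ) : Gd (c • L) :=
  fun ν _ => (h ν).smul_left c
lemma Gd_one : Gd (1 : Module.End ℝ (BM m)) := fun _ _ => Commute.one_left _

lemma Gd_dl (F : Measure (EE m)) [IsFiniteMeasure F] (A Z : Set (EE m)) : Gd (dl F A Z) :=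
  (Gd_T _).sub ((Gd_T _).smul _)
lemma Gd_dz (F : Measure (EE m)) [IsFiniteMeasure F] (Z : Set (EE m)) : Gd (dz F Z) :=
  ((Gd_T _).smul _).sub Gd_one

lemma Gd.dl {L : Module.End ℝ (BM m)} (h : Gd L) (F : Measure (EE m)) [IsFiniteMeasure F]
    (A Z : Set (EE m)) : Commute L (dl F A Z) :=
  (csub (h _).symm ((h _).smul_right _).symm).symm
lemma Gd.dz {L : Module.End ℝ (BM m)} (h : Gd L) (F : Measure (EE m)) [IsFiniteMeasure F]
    (Z : Set (EE m)) : Commute L (dz F Z) :=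
  (csub ((h _).smul_right _).symm (Commute.one_left _)).symm

section
variable {F V : Measure (EE m)} [IsProbabilityMeasure F] [IsProbabilityMeasure V] {lam : ℝ}

lemma dl_apply (A Z : Set (EE m)) (f : BM m) (x : EE m) : dl F A Z f x =
    ∫ z in A, f (x + z) ∂F - F.real A / F.real Z * ∫ z in Z, f (x + z) ∂F := rfl

lemma rest_bd (A : Set (EE m)) {f : BM m} {M : ℝ} (hf : Bd f M) (x : EE m) :
    |∫ z in A, f (x + z) ∂F| ≤ F.real A * M := by
  have := norm_integral_le_of_norm_le_const (μ := F.restrict A) (f := fun z => f (x + z)) (C := M)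
    (Filter.Eventually.of_forall fun z => by simpa using hf (x + z))
  rw [measureReal_restrict_apply_univ, mul_comm] at this
  exact this

lemma dl_triv (A : Set (EE m)) {Z : Set (EE m)} (hZ : 1 / 2 ≤ F.real Z) {f : BM m} {M : ℝ} (hf : Bd f M) :
    Bd (dl F A Z f) (2 * F.real A * M) := by
  intro x
  have hZp : 0 < F.real Z := by linarith
  rw [dl_apply]
  refine (abs_sub _ _).trans ?_
  rw [abs_mul, abs_of_nonneg (div_nonneg measureReal_nonneg hZp.le)]
  have h1 := rest_bd (F := F) A hf x
  have h2 := rest_bd (F := F) Z hf x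
  have h3 := mul_le_mul_of_nonneg_left h2 (div_nonneg (measureReal_nonneg (μ := F) (s := A)) hZp.le)
  have e : F.real A / F.real Z * (F.real Z * M) = F.real A * M := by field_simp
  rw [e] at h3
  linarith

lemma tv (hl : 0 < lam) (hV : ENNReal.ofReal lam • F ≤ V) {A Z : Set (EE m)} (hA : MeasurableSet A)
    (hZm : MeasurableSet Z) (hZ : 1 / 2 ≤ F.real Z) {f : BM m} {M : ℝ} (hf : Bd f M) (n : ℕ) :
    Bd (dl F A Z ((T V ^ n) f)) (M * √(6 * F.real A) / √(lam * (n + 1))) := by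
  intro x
  have hM := hf.nonneg
  have hZp : 0 < F.real Z := by linarith
  set c := F.real A / F.real Z with hc
  have hp0 : 0 ≤ F.real A := measureReal_nonneg
  have hp1 : F.real A ≤ 1 := measureReal_le_one
  have hc0 : 0 ≤ c := div_nonneg hp0 hZp.le
  have hcZ : c * F.real Z = F.real A := by rw [hc]; field_simp
  have hc2 : c ≤ 2 := by rw [hc, div_le_iff₀ hZp]; linarith
  set g : EE m → ℝ := fun z => A.indicator 1 z - c * Z.indicator 1 z with hg
  have hiA : ∀ z, (0:ℝ) ≤ A.indicator 1 z ∧ A.indicator (1 : EE m → ℝ) z ≤ 1 := fun z =>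
    ⟨Set.indicator_nonneg (fun _ _ => zero_le_one) _, Set.indicator_le_self' (fun _ _ => zero_le_one) _⟩
  have hiZ : ∀ z, (0:ℝ) ≤ Z.indicator 1 z ∧ Z.indicator (1 : EE m → ℝ) z ≤ 1 := fun z =>
    ⟨Set.indicator_nonneg (fun _ _ => zero_le_one) _, Set.indicator_le_self' (fun _ _ => zero_le_one) _⟩
  have iA : Integrable (A.indicator (1 : EE m → ℝ)) F := (integrable_const (1:ℝ)).indicator hA
  have iZ : Integrable (Z.indicator (1 : EE m → ℝ)) F := (integrable_const (1:ℝ)).indicator hZm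
  have hgm : Measurable g := (measurable_one.indicator hA).sub ((measurable_one.indicator hZm).const_mul c)
  have hgb : ∀ z, |g z| ≤ 1 + c := by
    intro z
    rw [abs_le]
    have h1 := hiA z
    have h2 := hiZ z
    constructor <;> simp only [hg] <;> nlinarith
  have hg0 : ∫ z, g z ∂F = 0 := by
    simp only [hg]
    rw [integral_sub iA (iZ.const_mul c), integral_const_mul, integral_indicator_one hA,
      integral_indicator_one hZm, hcZ, sub_self]
  have key := mecke V hl hV hgm hgb hg0 n f hf x
  have e1 : dl F A Z ((T V ^ n) f) x = ∫ z, g z * (T V ^ n) f (x + z) ∂F := by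
    rw [dl_apply, ← integral_indicator hA, ← integral_indicator hZm, ← hc, ← integral_const_mul,
      ← integral_sub]
    · refine integral_congr_ae (Filter.Eventually.of_forall fun z => ?_)
      simp only [hg, Set.indicator]
      split_ifs <;> simp <;> ring
    · exact (bm_intg ((T V ^ n) f) F x).indicator hA
    · exact ((bm_intg ((T V ^ n) f) F x).indicator hZm).const_mul c
  rw [e1]
  refine key.trans ?_
  have h6 : ∫ z, g z ^ 2 ∂F ≤ 6 * F.real A := by
    have hle : ∫ z, g z ^ 2 ∂F ≤ ∫ z, (2 * A.indicator 1 z + 2 * c ^ 2 * Z.indicator 1 z) ∂F := by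
      refine integral_mono_of_nonneg (Filter.Eventually.of_forall fun z => sq_nonneg _)
        ((iA.const_mul 2).add (iZ.const_mul (2 * c ^ 2))) (Filter.Eventually.of_forall fun z => ?_)
      simp only [hg, Set.indicator, Pi.one_apply]
      split_ifs <;> nlinarith [sq_nonneg (1 + c), sq_nonneg c]
    refine hle.trans ?_
    rw [integral_add (iA.const_mul 2) (iZ.const_mul (2 * c ^ 2)), integral_const_mul, integral_const_mul,
      integral_indicator_one hA, integral_indicator_one hZm]
    have : 2 * c ^ 2 * F.real Z = 2 * c * F.real A := by rw [← hcZ]; ring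
    rw [this]
    nlinarith
  gcongr

lemma tv2 (hl : 0 < lam) (hV : ENNReal.ofReal lam • F ≤ V) {A Z : Set (EE m)} (hA : MeasurableSet A)
    (hZm : MeasurableSet Z) (hZ : 1 / 2 ≤ F.real Z) {f : BM m} {M : ℝ} (hf : Bd f M) (n : ℕ) :
    Bd (dl F A Z ((T V ^ (2 * n)) f)) (M * √(6 * F.real A) / √(lam * (n + 1))) := by
  refine (tv hl hV hA hZm hZ hf (2 * n)).mono ?_
  have hM := hf.nonneg
  have hs : √(lam * (n + 1)) ≤ √(lam * ((2 * n : ℕ) + 1)) := by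
    apply Real.sqrt_le_sqrt
    push_cast
    nlinarith [Nat.cast_nonneg (α := ℝ) n]
  have : 0 < √(lam * (n + 1)) := by positivity
  gcongr

def HH (m : ℕ) : ℝ := 2 * (m * m)

def CK (m : ℕ) : ℝ :=
  m * (4 * (HH m * ∫ r, |r| ∂Kk + 2)) * √(24 * m) + 12 * (m * m) * M1 ^ m + 4

lemma scale_bd (hm : 0 < m) {A : Set (EE m)} {Y : Fin m → ℝ} (hAY : ∀ z ∈ A, ∀ l, |z l| ≤ Y l) :
    ∀ z ∈ A, ∀ j, |z j / (HH m * Y j)| ≤ 1 / HH m := by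
  intro z hz j
  have hm' : (0:ℝ) < m := by exact_mod_cast hm
  have hH : 0 < HH m := by unfold HH; positivity
  have h1 := hAY z hz j
  have hY0 : 0 ≤ Y j := (abs_nonneg _).trans h1
  rcases hY0.eq_or_lt with h0 | hp
  · rw [← h0]; simp [hH.le]
  · rw [abs_div, abs_of_pos (mul_pos hH hp), div_le_div_iff₀ (mul_pos hH hp) hH]
    nlinarith

lemma coarse2 (hm : 0 < m) (hl : 0 < lam) (hV : ENNReal.ofReal lam • F ≤ V) (hF : Sym F)
    {A : Set (EE m)} (hA : MeasurableSet A) (hs : ∀ z, z ∈ A ↔ -z ∈ A) {Y : Fin m → ℝ}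
    (hAY : ∀ z ∈ A, ∀ l, |z l| ≤ Y l) 
    {u : Jt m} (hu : Der (fun l => HH m * Y l) u) {M : ℝ} (hb : ∀ β, Bd (u β) M) (n : ℕ) (β : Fin m → ℕ) :
    Bd (T (F.restrict A) ((T V ^ (2 * n)) (u β)) - F.real A • (T V ^ (2 * n)) (u β))
      (4 * (m * m) * M / (lam * (n + 1))) := by
  have hm' : (0:ℝ) < m := by exact_mod_cast hm
  have hH : 0 < HH m := by unfold HH; positivity
  refine coarse (h := 1 / HH m) hl hV hF hA hs (by positivity) ?_ (scale_bd hm hAY) ?_ hu hb n β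
  · unfold HH; refine le_of_eq ?_; field_simp
  · intro z hz j hj
    have : Y j = 0 := by
      rcases mul_eq_zero.1 hj with h | h
      · exact absurd h hH.ne'
      · exact h
    have h1 := hAY z hz j
    rw [this] at h1
    exact abs_nonpos_iff.1 h1

lemma dzj (hm : 0 < m) (hl : 0 < lam) (hV : ENNReal.ofReal lam • F ≤ V) (hF : Sym F)
    {Z : Set (EE m)} (hA : MeasurableSet Z) (hs : ∀ z, z ∈ Z ↔ -z ∈ Z) (hZ : 1 / 2 ≤ F.real Z)
    {Y : Fin m → ℝ} (hAY : ∀ z ∈ Z, ∀ l, |z l| ≤ Y l) 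
    {u : Jt m} (hu : Der (fun l => HH m * Y l) u) {M : ℝ} (hb : ∀ β, Bd (u β) M) (n : ℕ) (β : Fin m → ℕ) :
    Bd (dz F Z ((T V ^ (2 * n)) (u β))) (8 * (m * m) * M / (lam * (n + 1))) := by
  have hZp : 0 < F.real Z := by linarith
  have h1 := coarse2 hm hl hV hF hA hs hAY hu hb n β
  have hM := (hb 0).nonneg
  have e : dz F Z ((T V ^ (2 * n)) (u β)) = (1 / F.real Z) • 
      (T (F.restrict Z) ((T V ^ (2 * n)) (u β)) - F.real Z • (T V ^ (2 * n)) (u β)) := by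
    rw [smul_sub, smul_smul, one_div_mul_cancel hZp.ne', one_smul]; rfl
  rw [e]
  refine (h1.smul _).mono ?_
  rw [abs_of_pos (by positivity)]
  have h2 : 1 / F.real Z ≤ 2 := by rw [div_le_iff₀ hZp]; linarith
  calc _ ≤ 2 * (4 * (m * m) * M / (lam * (n + 1))) := by gcongr
    _ = _ := by ring

lemma kolm (hm : 0 < m) (hl : 0 < lam) (hV : ENNReal.ofReal lam • F ≤ V) (hF : Sym F)
    {A Z : Set (EE m)} (hA : MeasurableSet A) (hZm : MeasurableSet Z) (hZ : 1 / 2 ≤ F.real Z)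
    (hsA : ∀ z, z ∈ A ↔ -z ∈ A) (hsZ : ∀ z, z ∈ Z ↔ -z ∈ Z) {Y : Fin m → ℝ} (hY0 : ∀ l, 0 ≤ Y l)
    (hAY : ∀ z ∈ A, ∀ l, |z l| ≤ Y l) (hZY : ∀ z ∈ Z, ∀ l, |z l| ≤ Y l)
    (hY : ∀ l, Y l = 0 ∨ (0 < Y l ∧ F.real A / (4 * m) ≤ F.real {z | Y l ≤ |z l|}))
    (n : ℕ) (a b : Fin m → ℝ) (hab : ∀ l, a l ≤ b l) :
    Bd (dl F A Z ((T V ^ (2 * n)) (boxI a b))) (CK m / (lam * (n + 1))) := by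
  have hm' : (0:ℝ) < m := by exact_mod_cast hm
  have hH : 0 < HH m := by unfold HH; positivity
  have hZp : 0 < F.real Z := by linarith
  have hM1 := M1_ge
  have hk1 : 0 ≤ ∫ r, |r| ∂Kk := integral_nonneg fun r => abs_nonneg r
  have hL : 0 < lam * (n + 1) := by positivity
  have hCK : 0 ≤ CK m := by unfold CK; positivity
  rcases (measureReal_nonneg (μ := F) (s := A)).eq_or_lt with h0 | hp
  · refine (tv2 hl hV hA hZm hZ (boxI_bd a b) n).mono ?_
    rw [← h0]; simp; positivity
  set p := F.real A with hpdef
  have hp1 : p ≤ 1 := measureReal_le_one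
  set s : Fin m → ℝ := fun l => HH m * Y l with hs
  set φ := T (mu Kk s) (boxI a b) with hφ
  have h1 := fine V hl hV hF Kk Kk_abs Y (q := p / (4 * m)) (H := HH m) (by positivity) hH.le hY n a b
  have h2 := tv hl hV hA hZm hZ h1 n
  have hder : Der s (ker a b s) := ker_der a b s hab fun l => mul_nonneg hH.le (hY0 l)
  have h3 := coarse2 hm hl hV hF hA hsA hAY hder (ker_bd a b s) n 0
  have h4 := coarse2 hm hl hV hF hZm hsZ hZY hder (ker_bd a b s) n 0
  rw [ker_zero] at h3 h4
  have e : dl F A Z ((T V ^ (2 * n)) (boxI a b)) =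
      dl F A Z ((T V ^ n) ((T V ^ n) (boxI a b - φ))) +
      ((T (F.restrict A) ((T V ^ (2 * n)) φ) - F.real A • (T V ^ (2 * n)) φ) -
      (F.real A / F.real Z) • (T (F.restrict Z) ((T V ^ (2 * n)) φ) - F.real Z • (T V ^ (2 * n)) φ)) := by
    have e1 : (T V ^ n) ((T V ^ n) (boxI a b - φ)) = (T V ^ (2 * n)) (boxI a b) - (T V ^ (2 * n)) φ := by
      rw [← Module.End.mul_apply, ← pow_add, ← two_mul, map_sub]
    rw [e1, map_sub, smul_sub, smul_smul, div_mul_cancel₀ _ hZp.ne']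
    simp only [dl, LinearMap.sub_apply, LinearMap.smul_apply]
    abel
  rw [e]
  refine (h2.add (h3.sub (h4.smul _))).mono ?_
  rw [abs_of_nonneg (div_nonneg hp.le hZp.le)]
  have hc2 : p / F.real Z ≤ 2 := by rw [div_le_iff₀ hZp]; linarith
  have b1 : p / F.real Z * (4 * (m * m) * M1 ^ m / (lam * (n + 1))) ≤
      2 * (4 * (m * m) * M1 ^ m / (lam * (n + 1))) := by gcongr
  set c := m * (4 * (HH m * ∫ r, |r| ∂Kk + 2)) with hc
  have b2 : c / √(lam * (p / (4 * m)) * (n + 1)) * √(6 * p) / √(lam * (n + 1)) =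
      c * √(24 * m) / (lam * (n + 1)) := by
    have e1 : √(6 * p) = √(24 * m) * √(p / (4 * m)) := by
      rw [← Real.sqrt_mul (by positivity)]; congr 1; field_simp; norm_num
    have e2 : √(lam * (p / (4 * m)) * (n + 1)) = √(p / (4 * m)) * √(lam * (n + 1)) := by
      rw [← Real.sqrt_mul (by positivity)]; congr 1; ring
    have e3 : √(lam * (n + 1)) * √(lam * (n + 1)) = lam * (n + 1) := Real.mul_self_sqrt hL.le
    have p1 : 0 < √(p / (4 * m)) := by positivity
    have p2 : 0 < √(lam * (n + 1)) := by positivity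
    rw [e1, e2, show c * √(24 * m) / (lam * (n + 1)) =
      c * √(24 * m) / (√(lam * (n + 1)) * √(lam * (n + 1))) by rw [e3]]
    generalize √(lam * (n + 1)) = R at *
    generalize √(p / (4 * m)) = Q at *
    field_simp
  rw [b2]
  have b3 : CK m / (lam * (n + 1)) = c * √(24 * m) / (lam * (n + 1)) +
      (4 * (m * m) * M1 ^ m / (lam * (n + 1)) + 2 * (4 * (m * m) * M1 ^ m / (lam * (n + 1)))) +
      4 / (lam * (n + 1)) := by
    unfold CK; rw [← hc]; ring
  have b4 : 0 ≤ 4 / (lam * (n + 1)) := by positivity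
  linarith
end
end S9

namespace S9
variable {m : ℕ}

section
variable {F V : Measure (EE m)} [IsProbabilityMeasure F] [IsProbabilityMeasure V] {lam : ℝ}

lemma decomp {ι : Type*} [Fintype ι] (A : ι → Set (EE m)) (hA : ∀ i, MeasurableSet (A i))
    (hpart : ∀ z, ∃ c, ∀ f, z ∈ A f ↔ f = c) (Z : Set (EE m)) :
    T F - 1 = dz F Z + ∑ i, dl F (A i) Z := by
  have hU : ⋃ i, A i = Set.univ := by
    ext z; obtain ⟨c, hc⟩ := hpart z
    simp only [Set.mem_iUnion, Set.mem_univ, iff_true]; exact ⟨c, (hc c).2 rfl⟩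
  have hD : Pairwise (Function.onFun Disjoint A) := by
    intro i j hij
    refine Set.disjoint_left.2 fun z hi hj => hij ?_
    obtain ⟨c, hc⟩ := hpart z
    rw [(hc i).1 hi, (hc j).1 hj]
  have h1 : ∑ i, F.real (A i) = 1 := by
    have := integral_iUnion_fintype (μ := F) (f := fun _ => (1:ℝ)) hA hD
      (fun i => (integrable_const (1:ℝ)).integrableOn)
    rw [hU] at this
    simpa using this.symm
  refine LinearMap.ext fun f => ?_
  ext x
  have h2 : T F f x = ∑ i, ∫ z in A i, f (x + z) ∂F := by
    rw [T_apply, ← integral_iUnion_fintype hA hD (fun i => (bm_intg f F x).integrableOn), hU,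
      Measure.restrict_univ]
  have e1 : (T F - 1) f x = T F f x - f x := rfl
  have e2 : (dz F Z + ∑ i, dl F (A i) Z) f x = (1 / F.real Z * ∫ z in Z, f (x + z) ∂F - f x) +
      ∑ i, dl F (A i) Z f x := by
    rw [LinearMap.add_apply, LinearMap.sum_apply, bm_add_apply, bm_sum_apply]; rfl
  change (T F - 1) f x = (dz F Z + ∑ i, dl F (A i) Z) f x
  rw [e1, e2, h2]
  simp only [dl_apply]
  rw [Finset.sum_sub_distrib, ← Finset.sum_mul, ← Finset.sum_div, h1]
  ring

lemma min_sqrt {x a b : ℝ} (hx : 0 ≤ x) (ha : x ≤ √a) (hb : x ≤ √b) : x ≤ √(√a) * √(√b) := by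
  rw [← Real.sqrt_mul (Real.sqrt_nonneg _)]
  refine Real.le_sqrt_of_sq_le ?_
  rw [sq]
  exact mul_le_mul ha hb hx (Real.sqrt_nonneg _)

lemma sq_smul {p c : ℝ} (hp : 0 ≤ p) (hp1 : p ≤ 1) (hc : 0 ≤ c) : c * √p ≤ c * √(√p) := by
  refine mul_le_mul_of_nonneg_left (Real.sqrt_le_sqrt ?_) hc
  refine Real.le_sqrt_of_sq_le ?_
  nlinarith
end

def CZ (m : ℕ) : ℝ := 8 * (m * m) * M1 ^ m

theorem D2 (hm : 0 < m) {lam : ℝ} (hl : 0 < lam) (hl1 : lam ≤ 1) : ∃ C : ℝ, 0 ≤ C ∧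
    ∀ (F : Measure (EE m)) [IsProbabilityMeasure F], Sym F → ∀ n : ℕ, ∃ Y : Fin m → ℝ,
      (∀ l, Y l = 0 ∨ (0 < Y l ∧ 1 / (8 * m) ≤ F.real {z | Y l ≤ |z l|})) ∧
      ∀ (V : Measure (EE m)) [IsProbabilityMeasure V], ENNReal.ofReal lam • F ≤ V →
        ∀ a b : Fin m → ℝ, (∀ l, a l ≤ b l) →
        Bd ((T F - 1) ((T F - 1) ((T V ^ (4 * n)) (T (mu Kk fun l => HH m * Y l) (boxI a b)))))
          (C / ((n + 1) * √(n + 1))) := by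
  have hm' : (0:ℝ) < m := by exact_mod_cast hm
  have hM1 := M1_ge
  have hM1p : 0 ≤ M1 ^ m := by positivity
  have hk1 : 0 ≤ ∫ r, |r| ∂Kk := integral_nonneg fun r => abs_nonneg r
  have hH : 0 < HH m := by unfold HH; positivity
  have hCK4 : 4 ≤ CK m := by unfold CK; linarith [show 0 ≤ m * (4 * (HH m * ∫ r, |r| ∂Kk + 2)) * √(24 * m) + 12 * (m * m) * M1 ^ m by positivity]
  have hCZ : 0 ≤ CZ m := by unfold CZ; positivity
  have hW : 0 ≤ WW m := by
    have := rr_lt hm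
    unfold WW
    have : 0 ≤ (1 - rr m)⁻¹ := inv_nonneg.2 (by linarith)
    positivity
  set CC := 8 * (m * m) * CZ m / √lam + 2 * (CZ m * √6 * WW m) + CK m * √6 * (WW m * WW m) with hCC
  have hCC0 : 0 ≤ CC := by positivity
  refine ⟨CC / (lam * √lam), by positivity, ?_⟩
  intro F _ hF n
  obtain ⟨A, Y, hAm, hAs, hpart, hZ, hp2, hY0, hgood⟩ := cells hm F (n + 1) (Nat.succ_pos n)
  set Z := A 0 with hZdef
  have h0good := hgood 0 (fun l => by simp)
  refine ⟨Y 0, fun l => ?_, ?_⟩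
  · rcases h0good.2.2 l with h | ⟨h1, h2⟩
    · exact Or.inl h
    · refine Or.inr ⟨h1, le_trans ?_ h2⟩
      rw [div_le_div_iff₀ (by positivity) (by positivity)]
      nlinarith
  intro V _ hV a b hab
  set s : Fin m → ℝ := fun l => HH m * Y 0 l with hs
  set φ := T (mu Kk s) (boxI a b) with hφ
  set L := lam * ((n : ℝ) + 1) with hL
  have hLp : 0 < L := by positivity
  set R := √L with hR
  have hRp : 0 < R := by positivity
  have hRR : R * R = L := Real.mul_self_sqrt hLp.le
  set p := fun f => F.real (A f) with hp
  have hp0 : ∀ f, 0 ≤ p f := fun f => measureReal_nonneg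
  have hp1 : ∀ f, p f ≤ 1 := fun f => measureReal_le_one
  -- Kolmogorov-type bounds
  have kol : ∀ f, Bd (dl F (A f) Z ((T V ^ (2 * n)) φ)) (CK m / L) := by
    intro f
    have hbox : Bd (dl F (A f) Z ((T V ^ (2 * n)) (boxI a b))) (CK m / L) := by
      by_cases hf : ∀ l, (f l : ℕ) < n + 1
      · obtain ⟨g1, g2, g3⟩ := hgood f hf
        exact kolm hm hl hV hF (hAm f) (hAm 0) hZ (hAs f) (hAs 0) (hY0 f) g1 g2 g3 n a b hab
      · push Not at hf
        obtain ⟨l, hfl⟩ := hf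
        have hfl' : (f l : ℕ) = n + 1 := le_antisymm (Nat.lt_succ_iff.1 (f l).2) hfl
        refine (dl_triv (A f) hZ ((boxI_bd a b).Tpow V (2 * n))).mono ?_
        have h1 := hp2 f l
        rw [hfl'] at h1
        have h2 : (1 / 2 : ℝ) ^ (n + 1) ≤ 1 / (n + 1) := by
          rw [one_div_pow]
          refine one_div_le_one_div_of_le (by positivity) ?_
          have := (Nat.lt_two_pow_self (n := n + 1)).le
          exact_mod_cast this
        have h3 : 4 * (1 / ((n : ℝ) + 1)) ≤ CK m / L := by
          rw [mul_one_div, div_le_div_iff₀ (by positivity) hLp, hL]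
          have : (4 : ℝ) * lam ≤ CK m * 1 := mul_le_mul hCK4 hl1 hl.le (by linarith)
          nlinarith [Nat.cast_nonneg (α := ℝ) n]
        linarith
    have hcm : Commute (dl F (A f) Z * T V ^ (2 * n)) (T (mu Kk s)) :=
      (Gd_dl F (A f) Z (mu Kk s)).mul_left ((T_comm V (mu Kk s)).pow_left _)
    have : dl F (A f) Z ((T V ^ (2 * n)) φ) =
        T (mu Kk s) (dl F (A f) Z ((T V ^ (2 * n)) (boxI a b))) := capp hcm (boxI a b)
    rw [this]
    exact hbox.T _
  have hder : Der s (ker a b s) := ker_der a b s hab fun l => mul_nonneg hH.le (hY0 0 l)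
  have hz1 : ∀ β, Bd (dz F Z ((T V ^ (2 * n)) (ker a b s β))) (CZ m / L) := fun β =>
    dzj hm hl hV hF (hAm 0) (hAs 0) hZ h0good.1 hder (ker_bd a b s) n β
  have hder2 : Der s (fun β => dz F Z ((T V ^ (2 * n)) (ker a b s β))) :=
    (((hder.Tpow V (2 * n)).T (F.restrict Z)).smul (1 / F.real Z)).sub (hder.Tpow V (2 * n))
  have hz2 := dzj hm hl hV hF (hAm 0) (hAs 0) hZ h0good.1 hder2 hz1 n 0
  have hz10 := hz1 0
  rw [ker_zero] at hz2 hz10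
  have sp : (T V ^ (4 * n)) φ = (T V ^ (2 * n)) ((T V ^ (2 * n)) φ) := by
    rw [show 4 * n = 2 * n + 2 * n by ring, pow_add]; rfl
  have cV : ∀ {P : Module.End ℝ (BM m)}, Gd P → ∀ f, P ((T V ^ (2 * n)) f) = (T V ^ (2 * n)) (P f) :=
    fun hP f => capp ((hP V).pow_right _) f
  set u := (T V ^ (4 * n)) φ with hu
  -- the three kinds of products
  have t1 : Bd (dz F Z (dz F Z u)) (8 * (m * m) * (CZ m / L) / L) := by
    have : dz F Z (dz F Z u) = dz F Z ((T V ^ (2 * n)) (dz F Z ((T V ^ (2 * n)) φ))) := by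
      rw [sp, cV (Gd_dz F Z)]
    rw [this]; exact hz2
  have t2 : ∀ f, Bd (dl F (A f) Z (dz F Z u)) (CZ m * √6 / (L * R) * √(√(p f))) := by
    intro f
    have : dl F (A f) Z (dz F Z u) = dl F (A f) Z ((T V ^ (2 * n)) (dz F Z ((T V ^ (2 * n)) φ))) := by
      rw [sp, cV (Gd_dz F Z)]
    rw [this]
    refine (tv2 hl hV (hAm f) (hAm 0) hZ hz10 n).mono ?_
    refine le_trans (le_of_eq ?_) (sq_smul (hp0 f) (hp1 f) (by positivity))
    rw [Real.sqrt_mul (by norm_num)]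
    change CZ m / L * (√6 * √(p f)) / R = _
    field_simp
  have t3' : ∀ f f', Bd (dl F (A f) Z (dl F (A f') Z u)) (CK m * √6 / (L * R) * √(p f)) := by
    intro f f'
    have : dl F (A f) Z (dl F (A f') Z u) =
        dl F (A f) Z ((T V ^ (2 * n)) (dl F (A f') Z ((T V ^ (2 * n)) φ))) := by
      rw [sp, cV (Gd_dl F (A f') Z)]
    rw [this]
    refine (tv2 hl hV (hAm f) (hAm 0) hZ (kol f') n).mono (le_of_eq ?_)
    rw [Real.sqrt_mul (by norm_num)]
    change CK m / L * (√6 * √(p f)) / R = _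
    field_simp
  have hcp : 0 < CK m * √6 / (L * R) := by
    have : 0 < CK m := by linarith
    positivity
  have t3 : ∀ f f', Bd (dl F (A f) Z (dl F (A f') Z u))
      (CK m * √6 / (L * R) * (√(√(p f)) * √(√(p f')))) := by
    intro f f' x
    have h1 := t3' f f' x
    have h2 := t3' f' f x
    rw [capp ((Gd_dl F (A f') Z).dl F (A f) Z)] at h2
    rw [← div_le_iff₀' hcp] at h1 h2 ⊢
    exact min_sqrt (by positivity) h1 h2
  have hsum := weights hm (n + 1) p hp2
  have hdec := decomp (F := F) A hAm hpart Z
  set S := ∑ f, dl F (A f) Z with hS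
  have eD : (T F - 1) ((T F - 1) u) =
      dz F Z (dz F Z u) + (S (dz F Z u) + S (dz F Z u)) + S (S u) := by
    have hc : dz F Z (S u) = S (dz F Z u) := by
      rw [hS, LinearMap.sum_apply, LinearMap.sum_apply, map_sum]
      exact Finset.sum_congr rfl fun f _ => capp ((Gd_dz F Z).dl F (A f) Z) u
    rw [hdec]
    simp only [LinearMap.add_apply, map_add, hc]
    abel
  have hw0 : 0 ≤ ∑ f, √(√(p f)) := Finset.sum_nonneg fun _ _ => by positivity
  have s2 : Bd (S (dz F Z u)) (CZ m * √6 / (L * R) * WW m) := by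
    rw [hS, LinearMap.sum_apply]
    refine (Bd.sum _ fun f _ => t2 f).mono ?_
    rw [← Finset.mul_sum]; gcongr
  have s3 : Bd (S (S u)) (CK m * √6 / (L * R) * (WW m * WW m)) := by
    have : S (S u) = ∑ f, ∑ f', dl F (A f) Z (dl F (A f') Z u) := by
      rw [hS, LinearMap.sum_apply]
      refine Finset.sum_congr rfl fun f _ => ?_
      rw [LinearMap.sum_apply, map_sum]
    rw [this]
    refine (Bd.sum _ fun f _ => Bd.sum _ fun f' _ => t3 f f').mono ?_
    simp only [← Finset.mul_sum]
    rw [← Finset.sum_mul]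
    gcongr
  rw [eD]
  refine ((t1.add (s2.add s2)).add s3).mono ?_
  have eLR : L * R = lam * √lam * ((n + 1) * √(n + 1)) := by
    rw [hR, hL, Real.sqrt_mul hl.le]; ring
  have eR : √lam ≤ R := by
    rw [hR, hL]; apply Real.sqrt_le_sqrt
    nlinarith [Nat.cast_nonneg (α := ℝ) n]
  rw [div_div, ← eLR]
  have f1 : 8 * (m * m) * (CZ m / L) / L ≤ 8 * (m * m) * CZ m / √lam / (L * R) := by
    have : 8 * (m * m) * (CZ m / L) / L = 8 * (m * m) * CZ m / R / (L * R) := by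
      rw [← hRR]; field_simp
    rw [this]
    gcongr
  have f2 : CC / (L * R) = 8 * (m * m) * CZ m / √lam / (L * R) +
      (CZ m * √6 / (L * R) * WW m + CZ m * √6 / (L * R) * WW m) +
      CK m * √6 / (L * R) * (WW m * WW m) := by
    rw [hCC]; ring
  linarith
end S9

namespace S9
variable {m : ℕ}

def pw (a : ℝ) (k : ℕ) : ℝ := Real.exp (-a) * a ^ k / k.factorial

lemma pw_nonneg {a : ℝ} (ha : 0 ≤ a) (k : ℕ) : 0 ≤ pw a k := by unfold pw; positivity

lemma pw_hasSum (a : ℝ) : HasSum (pw a) 1 := by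
  have h := (NormedSpace.expSeries_div_hasSum_exp (𝔸 := ℝ) a).mul_left (Real.exp (-a))
  rw [← Real.exp_eq_exp_ℝ, ← Real.exp_add, neg_add_cancel, Real.exp_zero] at h
  exact h.congr_fun fun k => by unfold pw; ring

lemma pw_one_succ (k : ℕ) : ((k + 1 : ℕ) : ℝ) * pw 1 (k + 1) = pw 1 k := by
  unfold pw
  rw [Nat.factorial_succ]; push_cast
  simp only [one_pow]
  field_simp

lemma pw_hasSum1 : HasSum (fun k : ℕ => (k : ℝ) * pw 1 k) 1 := by
  rw [← hasSum_nat_add_iff' 1]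
  simp only [Finset.range_one, Finset.sum_singleton, Nat.cast_zero, zero_mul, sub_zero]
  exact (pw_hasSum 1).congr_fun pw_one_succ

lemma pw_hasSum2 : HasSum (fun k : ℕ => (k : ℝ) * (k - 1) * pw 1 k) 1 := by
  rw [← hasSum_nat_add_iff' 1]
  simp only [Finset.range_one, Finset.sum_singleton, Nat.cast_zero, zero_mul, sub_zero]
  refine pw_hasSum1.congr_fun fun k => ?_
  rw [← pw_one_succ k]; push_cast; ring

lemma pw_conv (a b : ℝ) (n : ℕ) :
    ∑ p ∈ Finset.HasAntidiagonal.antidiagonal n, pw a p.1 * pw b p.2 = pw (a + b) n := by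
  unfold pw
  rw [(Commute.all a b).add_pow', Finset.mul_sum, Finset.sum_div]
  refine Finset.sum_congr rfl fun p hp => ?_
  have hp' : p.1 + p.2 = n := Finset.HasAntidiagonal.mem_antidiagonal.1 hp
  subst hp'
  have h := Nat.add_choose_mul_factorial_mul_factorial p.1 p.2
  have h' : ((p.1 + p.2).choose p.1 : ℝ) * p.1.factorial * p.2.factorial =
    (p.1 + p.2).factorial := by rw [Nat.choose_symm_add]; exact_mod_cast h
  rw [neg_add, Real.exp_add, nsmul_eq_mul, ← h']
  have : 0 < (p.1 + p.2).choose p.1 := Nat.choose_pos (Nat.le_add_right _ _)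
  have : ((p.1 + p.2).choose p.1 : ℝ) ≠ 0 := by positivity
  field_simp

section
variable (F : Measure (EE m)) [IsProbabilityMeasure F]

lemma pw_prob {α : Type*} [MeasurableSpace α] [AddMonoid α] (G : Measure α)
    (hG : ∀ k, IsProbabilityMeasure (convPow G k)) (n : ℕ) :
    IsProbabilityMeasure (cpois (n : ℝ) G) := by
  constructor
  unfold cpois
  rw [Measure.sum_apply _ MeasurableSet.univ]
  simp only [Measure.smul_apply, measure_univ, smul_eq_mul, mul_one]
  change ∑' k, ENNReal.ofReal (pw n k) = 1
  rw [← ENNReal.ofReal_tsum_of_nonneg (fun k => pw_nonneg (Nat.cast_nonneg n) k) (pw_hasSum _).summable,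
    (pw_hasSum _).tsum_eq, ENNReal.ofReal_one]

instance (n : ℕ) : IsProbabilityMeasure (cpois (n : ℝ) F) := pw_prob F (fun _ => inferInstance) n

lemma cpois_hasSum (n : ℕ) (f : BM m) (x : EE m) :
    HasSum (fun k => pw n k * ((T F ^ k) f x)) (T (cpois (n : ℝ) F) f x) := by
  have h := hasSum_integral_measure (f := fun z => f (x + z)) (bm_intg f (cpois (n : ℝ) F) x)
  refine h.congr_fun fun k => ?_
  change _ = ∫ z, f (x + z) ∂(ENNReal.ofReal (pw n k) • convPow F k)
  rw [integral_smul_measure, ENNReal.toReal_ofReal (pw_nonneg (Nat.cast_nonneg n) k), Tpow_apply]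
  rfl

lemma cpois_le : ENNReal.ofReal (Real.exp (-1)) • F ≤ cpois ((1 : ℕ) : ℝ) F := by
  have h1 : convPow F 1 = F := by
    change mconv (Measure.dirac 0) F = F
    unfold mconv
    rw [Measure.dirac_prod, Measure.map_map (by fun_prop) (by fun_prop)]
    convert Measure.map_id
    ext x; simp
  have := Measure.le_sum (fun k : ℕ =>
    (ENNReal.ofReal (Real.exp (-((1 : ℕ) : ℝ)) * ((1 : ℕ) : ℝ) ^ k / k.factorial)) • convPow F k) 1
  unfold cpois
  simpa [h1] using this

lemma cpois_zero : T (cpois ((0 : ℕ) : ℝ) F) = 1 := by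
  refine LinearMap.ext fun f => ?_
  ext x
  have h := cpois_hasSum F 0 f x
  have h2 : HasSum (fun k => pw (0 : ℕ) k * ((T F ^ k) f x)) (pw (0 : ℕ) 0 * ((T F ^ 0) f x)) :=
    hasSum_single 0 (fun k hk => by simp [pw, hk])
  refine (h.unique h2).trans ?_
  simp [pw]

lemma cpois_succ (n : ℕ) : T (cpois ((n + 1 : ℕ) : ℝ) F) = T (cpois (n : ℝ) F) * T (cpois ((1 : ℕ) : ℝ) F) := by
  refine LinearMap.ext fun f => ?_
  ext x
  obtain ⟨C, hC⟩ := bm_exBd f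
  set u : ℕ → ℝ := fun k => (T F ^ k) f x with hu
  have huC : ∀ k, |u k| ≤ C := fun k => hC.Tpow F k x
  set g : ℕ × ℕ → ℝ := fun p => pw n p.1 * pw (1 : ℕ) p.2 * u (p.1 + p.2) with hg
  have hs : Summable g := by
    have h1 : Summable fun p : ℕ × ℕ => pw n p.1 * pw (1 : ℕ) p.2 :=
      (pw_hasSum n).summable.mul_of_nonneg (pw_hasSum (1 : ℕ)).summable
        (fun k => pw_nonneg (Nat.cast_nonneg n) k) (fun k => pw_nonneg (Nat.cast_nonneg 1) k)
    refine Summable.of_norm_bounded (h1.mul_right C) fun p => ?_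
    have h2 : 0 ≤ pw n p.1 * pw (1 : ℕ) p.2 :=
      mul_nonneg (pw_nonneg (Nat.cast_nonneg n) _) (pw_nonneg (Nat.cast_nonneg 1) _)
    rw [hg, Real.norm_eq_abs, abs_mul, abs_of_nonneg h2]
    exact mul_le_mul_of_nonneg_left (huC _) h2
  have e1 : T (cpois (n : ℝ) F) (T (cpois ((1 : ℕ) : ℝ) F) f) x = ∑' p, g p := by
    rw [hs.tsum_prod, ← (cpois_hasSum F n _ x).tsum_eq]
    refine tsum_congr fun j => ?_
    have hc : (T F ^ j) (T (cpois ((1 : ℕ) : ℝ) F) f) = T (cpois ((1 : ℕ) : ℝ) F) ((T F ^ j) f) :=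
      capp ((T_comm F _).pow_left j) f
    rw [hc, ← (cpois_hasSum F 1 _ x).tsum_eq, ← tsum_mul_left]
    refine tsum_congr fun k => ?_
    simp only [hg, hu]
    rw [add_comm j k, pow_add]
    change _ = _ * ((T F ^ k) ((T F ^ j) f) x)
    ring
  have e2 : T (cpois ((n + 1 : ℕ) : ℝ) F) f x = ∑' p, g p := by
    rw [← (cpois_hasSum F (n + 1) _ x).tsum_eq, ← Finset.HasAntidiagonal.sigmaAntidiagonalEquivProd.tsum_eq]
    change _ = ∑' c, (g ∘ Finset.HasAntidiagonal.sigmaAntidiagonalEquivProd) c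
    rw [Summable.tsum_sigma' (fun k => (hasSum_fintype _).summable)
        ((Finset.HasAntidiagonal.sigmaAntidiagonalEquivProd.summable_iff (f := g)).2 hs)]
    refine tsum_congr fun k => ?_
    rw [tsum_fintype]
    have := pw_conv (n : ℝ) ((1 : ℕ) : ℝ) k
    rw [Nat.cast_add, ← this, Finset.sum_mul, ← Finset.sum_coe_sort]
    refine Finset.sum_congr rfl fun p _ => ?_
    have hp := Finset.HasAntidiagonal.mem_antidiagonal.1 p.2
    simp [hg, Finset.HasAntidiagonal.sigmaAntidiagonalEquivProd, hp, hu]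
  exact e2.trans e1.symm

lemma cpois_pow (n : ℕ) : T (cpois (n : ℝ) F) = T (cpois ((1 : ℕ) : ℝ) F) ^ n := by
  induction n with
  | zero => rw [cpois_zero, pow_zero]
  | succ n ih => rw [cpois_succ, ih, pow_succ]

lemma second {f : BM m} {c : ℝ} (h : Bd ((T F - 1) ((T F - 1) f)) c) (k : ℕ) :
    Bd ((T F ^ k) f - f - (k : ℝ) • (T F - 1) f) ((k : ℝ) * (k - 1) / 2 * c) := by
  induction k with
  | zero => intro x; simp
  | succ k ih =>
    have e : (T F ^ (k + 1)) f - f - ((k + 1 : ℕ) : ℝ) • (T F - 1) f =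
        T F ((T F ^ k) f - f - (k : ℝ) • (T F - 1) f) + (k : ℝ) • (T F - 1) ((T F - 1) f) := by
      have e1 : ∀ g, (T F - 1) g = T F g - g := fun g => rfl
      have e2 : (T F ^ (k + 1)) f = T F ((T F ^ k) f) := by rw [pow_succ']; rfl
      rw [e2, e1 ((T F - 1) f), map_sub, map_sub, map_smul, e1]
      push_cast
      rw [map_sub]
      module
    rw [e]
    refine ((ih.T F).add (h.smul _)).mono (le_of_eq ?_)
    rw [abs_of_nonneg (Nat.cast_nonneg k)]; push_cast; ring

lemma step {f : BM m} {c : ℝ} (h : Bd ((T F - 1) ((T F - 1) f)) c) :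
    Bd (T F f - T (cpois ((1 : ℕ) : ℝ) F) f) c := by
  intro x
  have hc := h.nonneg
  have h1 := cpois_hasSum F 1 f x
  have h2 := ((h1.sub ((pw_hasSum ((1 : ℕ) : ℝ)).mul_right (f x))).sub
    (pw_hasSum1.mul_right ((T F - 1) f x)))
  have h3 := pw_hasSum2.mul_right (c / 2)
  have e : T (cpois ((1 : ℕ) : ℝ) F) f x - 1 * f x - 1 * (T F - 1) f x =
      -((T F f - T (cpois ((1 : ℕ) : ℝ) F) f) x) := by
    change _ - 1 * f x - 1 * (T F f x - f x) = -(T F f x - _)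
    ring
  rw [e] at h2
  rw [← abs_neg, ← h2.tsum_eq]
  have h4 := tsum_of_norm_bounded (f := fun k : ℕ => pw ((1 : ℕ) : ℝ) k * (T F ^ k) f x -
    pw ((1 : ℕ) : ℝ) k * f x - (k : ℝ) * pw 1 k * (T F - 1) f x) h3 (fun k => ?_)
  · refine h4.trans (by linarith)
  · have := second F h k x
    have e2 : pw ((1 : ℕ) : ℝ) k * (T F ^ k) f x -
      pw ((1 : ℕ) : ℝ) k * f x - (k : ℝ) * pw 1 k * (T F - 1) f x =
      pw 1 k * (((T F ^ k) f - f - (k : ℝ) • (T F - 1) f) x) := by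
      change _ = pw 1 k * ((T F ^ k) f x - f x - (k : ℝ) * (T F - 1) f x)
      rw [Nat.cast_one]; ring
    rw [e2, Real.norm_eq_abs, abs_mul, abs_of_nonneg (pw_nonneg zero_le_one k)]
    refine (mul_le_mul_of_nonneg_left this (pw_nonneg zero_le_one k)).trans (le_of_eq ?_)
    ring
end
end S9

namespace S9
variable {m : ℕ}

lemma tele {P e : Module.End ℝ (BM m)} (h : Commute P e) (φ : BM m) {n : ℕ} {c : ℝ}
    (hb : ∀ i j, i + j + 1 = n → Bd ((P ^ i) ((e ^ j) (P φ - e φ))) c) :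
    Bd ((P ^ n) φ - (e ^ n) φ) (n * c) := by
  have hs := Finset.sum_range_sub (fun i => (P ^ i) ((e ^ (n - i)) φ)) n
  simp only [Nat.sub_self, pow_zero, Nat.sub_zero, Module.End.one_apply] at hs
  rw [← hs]
  have : (n : ℝ) * c = ∑ i ∈ Finset.range n, c := by simp
  rw [this]
  refine Bd.sum _ fun i hi => ?_
  have hi := Finset.mem_range.1 hi
  have h1 := hb i (n - (i + 1)) (by omega)
  convert h1 using 1
  have e1 : n - i = n - (i + 1) + 1 := by omega
  have e2 : P ((e ^ (n - (i + 1))) φ) = (e ^ (n - (i + 1))) (P φ) := capp (h.pow_right _) φ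
  rw [map_sub, map_sub, e1, pow_succ, pow_succ]
  change (P ^ i) (P _) - (P ^ i) ((e ^ _) (e φ)) = _
  rw [e2]

lemma T_ind (μ : Measure (EE m)) [IsProbabilityMeasure μ] (a b : Fin m → ℝ) :
    T μ (boxI a b) 0 = μ.real (box a b) := by
  rw [T_apply, ← integral_indicator_one (measurableSet_box a b)]
  simp only [zero_add]
  rfl

theorem boxes (hm : 0 < m) : ∃ C : ℝ, 0 ≤ C ∧ ∀ (F : Measure (EE m)) [IsProbabilityMeasure F],
    Sym F → ∀ n : ℕ, 0 < n → ∀ a b : Fin m → ℝ, (∀ l, a l ≤ b l) →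
    |(convPow F n).real (box a b) - (cpois (n : ℝ) F).real (box a b)| ≤ C / √n := by
  have hl : 0 < Real.exp (-1) := Real.exp_pos _
  have hl1 : Real.exp (-1) ≤ 1 := Real.exp_le_one_iff.2 (by norm_num)
  obtain ⟨C0, hC0, hD⟩ := D2 hm hl hl1
  set lam := Real.exp (-1)
  set Cf : ℝ := m * (4 * (HH m * ∫ r, |r| ∂Kk + 2)) with hCf
  set q : ℝ := 1 / (8 * m) with hq
  have hm' : (0 : ℝ) < m := by exact_mod_cast hm
  have hq0 : 0 < q := by positivity
  have hH : 0 ≤ HH m := by unfold HH; positivity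
  have hI : 0 ≤ ∫ r, |r| ∂Kk := integral_nonneg fun r => abs_nonneg r
  have hCf0 : 0 ≤ Cf := by positivity
  refine ⟨Cf / √(lam * q) + Cf / √(lam * q) + 24 * C0, by positivity, ?_⟩
  intro F _ hF n hn a b hab
  set r := (n - 1) / 8 with hr
  obtain ⟨Y, hY, hD⟩ := hD F hF r
  set E := cpois ((1 : ℕ) : ℝ) F with hE
  have hFF : ENNReal.ofReal lam • F ≤ F := by
    refine Measure.le_iff.2 fun s _ => ?_
    rw [Measure.smul_apply, smul_eq_mul]
    refine mul_le_of_le_one_left (zero_le) ?_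
    rw [← ENNReal.ofReal_one]; exact ENNReal.ofReal_le_ofReal hl1
  have hFE : ENNReal.ofReal lam • F ≤ E := cpois_le F
  set φ := T (mu Kk fun l => HH m * Y l) (boxI a b) with hφ
  set c := C0 / ((r + 1) * √(r + 1)) with hc
  have key : ∀ (V : Measure (EE m)) [IsProbabilityMeasure V], ENNReal.ofReal lam • F ≤ V →
      Bd ((T V ^ (4 * r)) (T F φ - T E φ)) c := by
    intro V _ hV
    have := step F (hD V hV a b hab)
    rw [map_sub, ← capp ((T_comm F V).pow_right _), ← capp ((T_comm E V).pow_right _)]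
    exact this
  have hcom : Commute (T F) (T E) := T_comm F E
  have ht : Bd ((T F ^ n) φ - (T E ^ n) φ) (n * c) := by
    refine tele hcom φ fun i j hij => ?_
    by_cases hi : 4 * r ≤ i
    · rw [show i = (i - 4 * r) + 4 * r by omega, pow_add]
      have := ((key F hFF).Tpow F (i - 4 * r)).Tpow E j
      rw [← capp (hcom.pow_pow (i - 4 * r) j), ← capp (hcom.pow_pow (4 * r) j)] at this
      exact this
    · have h4 : 4 * r ≤ j := by omega
      rw [show j = (j - 4 * r) + 4 * r by omega, pow_add]
      exact ((key E hFE).Tpow E (j - 4 * r)).Tpow F i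
  have hfin : ∀ (V : Measure (EE m)) [IsProbabilityMeasure V], ENNReal.ofReal lam • F ≤ V →
      Bd ((T V ^ n) (boxI a b - φ)) (Cf / √(lam * q) / √n) := by
    intro V _ hV
    refine (fine V hl hV hF Kk Kk_abs Y hq0 hH hY n a b).mono ?_
    rw [← hCf, div_div, ← Real.sqrt_mul (by positivity)]
    have : (0 : ℝ) < n := by exact_mod_cast hn
    gcongr
    linarith
  have e1 : (convPow F n).real (box a b) = (T F ^ n) (boxI a b) 0 := by
    rw [← T_convPow, T_ind]
  have e2 : (cpois (n : ℝ) F).real (box a b) = (T E ^ n) (boxI a b) 0 := by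
    rw [← cpois_pow, T_ind]
  have e3 : (T F ^ n) (boxI a b) - (T E ^ n) (boxI a b) =
      (T F ^ n) (boxI a b - φ) - (T E ^ n) (boxI a b - φ) + ((T F ^ n) φ - (T E ^ n) φ) := by
    rw [map_sub, map_sub]; abel
  have hB := ((hfin F hFF).sub (hfin E hFE)).add ht
  rw [← e3] at hB
  rw [e1, e2]
  refine (hB 0).trans ?_
  have hn' : (0 : ℝ) < n := by exact_mod_cast hn
  have hnr : (n : ℝ) ≤ 8 * (r + 1) := by
    have : n ≤ 8 * (r + 1) := by omega
    exact_mod_cast this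
  have hfinal : n * c ≤ 24 * C0 / √n := by
    have hs1 : 0 < √((r : ℝ) + 1) := Real.sqrt_pos.2 (by positivity)
    have hsn : 0 < √(n : ℝ) := Real.sqrt_pos.2 hn'
    have hs2 : √(n : ℝ) ≤ 3 * √((r : ℝ) + 1) := by
      refine Real.sqrt_le_iff.2 ⟨by positivity, ?_⟩
      rw [mul_pow, Real.sq_sqrt (by positivity)]
      linarith [Nat.cast_nonneg (α := ℝ) r]
    rw [hc, mul_div_assoc', div_le_div_iff₀ (by positivity) hsn]
    have : (n : ℝ) * √n ≤ 8 * (r + 1) * (3 * √((r : ℝ) + 1)) := by gcongr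
    nlinarith
  have : (Cf / √(lam * q) + Cf / √(lam * q) + 24 * C0) / √n =
      Cf / √(lam * q) / √n + Cf / √(lam * q) / √n + 24 * C0 / √n := by ring
  linarith
end S9

namespace S9
variable {m : ℕ}

lemma convPow_prob {d : ℕ} (F : Measure (Euc d)) [IsProbabilityMeasure F] (n : ℕ) :
    IsProbabilityMeasure (convPow F n) := by
  induction n with
  | zero => unfold convPow; infer_instance
  | succ n ih =>
    unfold convPow mconv
    exact Measure.isProbabilityMeasure_map (by fun_prop)

/-- the projection map -/
def LL {d : ℕ} (t : Fin m → Euc d) (x : Euc d) : EE m := fun j => ⟪x, t j⟫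

lemma LL_meas {d : ℕ} (t : Fin m → Euc d) : Measurable (LL t) := by
  unfold LL; fun_prop

lemma map_convPow {d : ℕ} (t : Fin m → Euc d) (F : Measure (Euc d)) [IsProbabilityMeasure F]
    (n : ℕ) : (convPow F n).map (LL t) = convPow (F.map (LL t)) n := by
  have hL := LL_meas t
  induction n with
  | zero =>
    unfold convPow
    rw [Measure.map_dirac' hL]
    congr 1
    ext j; simp [LL]
  | succ n ih =>
    have := convPow_prob F n
    change (mconv (convPow F n) F).map (LL t) = mconv (convPow (F.map (LL t)) n) (F.map (LL t))
    unfold mconv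
    rw [← ih, Measure.map_prod_map _ _ hL hL, Measure.map_map hL (by fun_prop),
      Measure.map_map (by fun_prop) (by fun_prop)]
    congr 1
    ext p j
    simp [LL, inner_add_left]

lemma map_cpois {d : ℕ} (t : Fin m → Euc d) (F : Measure (Euc d)) [IsProbabilityMeasure F]
    (a : ℝ) : (cpois a F).map (LL t) = cpois a (F.map (LL t)) := by
  unfold cpois
  rw [Measure.map_sum (LL_meas t).aemeasurable]
  congr 1
  funext k
  rw [Measure.map_smul, map_convPow]

lemma trunc_box (a b : Fin m → EReal) (N : ℕ) :
    ({y : EE m | ∀ j, a j ≤ (y j : EReal) ∧ (y j : EReal) ≤ b j} ∩ {y | ∀ j, |y j| ≤ N} = ∅) ∨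
    ∃ a' b' : Fin m → ℝ, (∀ l, a' l ≤ b' l) ∧
      {y : EE m | ∀ j, a j ≤ (y j : EReal) ∧ (y j : EReal) ≤ b j} ∩ {y | ∀ j, |y j| ≤ N} =
        box a' b' := by
  set A : Fin m → Set ℝ := fun j =>
    ((fun y : ℝ => (y : EReal)) ⁻¹' Set.Icc (a j) (b j)) ∩ Set.Icc (-(N : ℝ)) N with hA
  have hmem : ∀ y : EE m, y ∈ ({y : EE m | ∀ j, a j ≤ (y j : EReal) ∧ (y j : EReal) ≤ b j} ∩
      {y | ∀ j, |y j| ≤ N}) ↔ ∀ j, y j ∈ A j := by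
    intro y
    simp only [hA, Set.mem_inter_iff, Set.mem_ofPred_eq, Set.mem_preimage, Set.mem_Icc, abs_le,
      forall_and]
  by_cases hne : ∀ j, (A j).Nonempty
  · right
    have hI : ∀ j, A j = Set.Icc (sInf (A j)) (sSup (A j)) := by
      intro j
      refine eq_Icc_of_connected_compact ⟨hne j, Set.OrdConnected.isPreconnected ?_⟩ ?_
      · exact (Set.ordConnected_Icc.preimage_mono EReal.coe_strictMono.monotone).inter
          Set.ordConnected_Icc
      · exact isCompact_Icc.inter_left (isClosed_Icc.preimage continuous_coe_real_ereal)
    refine ⟨fun j => sInf (A j), fun j => sSup (A j), fun j => ?_, ?_⟩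
    · have := hne j
      rw [hI j] at this
      exact Set.nonempty_Icc.1 this
    · ext y
      rw [hmem]
      refine forall_congr' fun j => ?_
      conv_lhs => rw [hI j]
      exact Iff.rfl
  · left
    push Not at hne
    obtain ⟨j, hj⟩ := hne
    refine Set.eq_empty_of_forall_notMem fun y hy => ?_
    have := (hmem y).1 hy j
    rw [hj] at this
    exact this

theorem slabs (hm : 0 < m) : ∃ C : ℝ, 0 ≤ C ∧ ∀ (F : Measure (EE m)) [IsProbabilityMeasure F],
    Sym F → ∀ n : ℕ, 0 < n → ∀ a b : Fin m → EReal,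
    |(convPow F n).real {y : EE m | ∀ j, a j ≤ (y j : EReal) ∧ (y j : EReal) ≤ b j} -
      (cpois (n : ℝ) F).real {y : EE m | ∀ j, a j ≤ (y j : EReal) ∧ (y j : EReal) ≤ b j}| ≤
      C / √n := by
  obtain ⟨C, hC, h⟩ := boxes hm
  refine ⟨C, hC, fun F _ hF n hn a b => ?_⟩
  set S := {y : EE m | ∀ j, a j ≤ (y j : EReal) ∧ (y j : EReal) ≤ b j} with hS
  set U : ℕ → Set (EE m) := fun N => S ∩ {y | ∀ j, |y j| ≤ N} with hU
  have hmono : Monotone U := by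
    intro N N' hNN y hy
    exact ⟨hy.1, fun j => (hy.2 j).trans (by exact_mod_cast hNN)⟩
  have hun : ⋃ N, U N = S := by
    ext y
    simp only [Set.mem_iUnion]
    refine ⟨fun ⟨N, hy⟩ => hy.1, fun hy => ?_⟩
    obtain ⟨N, hN⟩ := exists_nat_ge (∑ j, |y j|)
    refine ⟨N, hy, fun j => le_trans ?_ hN⟩
    exact Finset.single_le_sum (f := fun j => |y j|) (fun i _ => abs_nonneg _) (Finset.mem_univ j)
  have hlim : ∀ (μ : Measure (EE m)) [IsProbabilityMeasure μ],
      Filter.Tendsto (fun N => μ.real (U N)) Filter.atTop (nhds (μ.real S)) := by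
    intro μ _
    have := tendsto_measure_iUnion_atTop (μ := μ) hmono
    rw [hun] at this
    exact (ENNReal.tendsto_toReal (measure_ne_top μ S)).comp this
  refine le_of_tendsto ((hlim (convPow F n)).sub (hlim (cpois (n : ℝ) F))).abs
    (Filter.Eventually.of_forall fun N => ?_)
  rcases trunc_box a b N with h0 | ⟨a', b', hab, h0⟩
  · have : U N = ∅ := h0
    rw [this]; simp; positivity
  · have : U N = box a' b' := h0
    rw [this]
    exact h F hF n hn a' b' hab

end S9
end

theorem stmt9 : ∃ C : ℕ → ℝ, (∀ m, 0 < C m) ∧ ∀ (d m n : ℕ), 0 < d → 0 < m → 0 < n →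
  ∀ F : Measure (Euc d), IsProbabilityMeasure F → IsSymmMeasure F →
    rhoPoly m (convPow F n) (cpois n F) ≤ C m / Real.sqrt n := by
  classical
  have key : ∀ m : ℕ, ∃ C : ℝ, 0 < C ∧ ∀ (d n : ℕ), 0 < m → 0 < n →
      ∀ F : Measure (Euc d), IsProbabilityMeasure F → IsSymmMeasure F →
      rhoPoly m (convPow F n) (cpois n F) ≤ C / Real.sqrt n := by
    intro m
    by_cases hm : 0 < m
    · obtain ⟨C, hC, h⟩ := S9.slabs hm
      refine ⟨C + 1, by linarith, fun d n _ hn F hP hF => ?_⟩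
      have hb : 0 ≤ (C + 1) / Real.sqrt n := by positivity
      unfold rhoPoly
      refine Real.iSup_le (fun X => Real.iSup_le (fun hX => ?_) hb) hb
      obtain ⟨t, a, b, rfl⟩ := hX
      have hL := S9.LL_meas t
      have hPm : IsProbabilityMeasure (F.map (S9.LL t)) :=
        Measure.isProbabilityMeasure_map hL.aemeasurable
      have hs : S9.Sym (F.map (S9.LL t)) := by
        unfold S9.Sym
        rw [Measure.map_map (by fun_prop) hL]
        conv_rhs => rw [← hF, Measure.map_map hL (by fun_prop)]
        congr 1
        ext x j
        simp [S9.LL]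
      have h1 := h (F.map (S9.LL t)) hs n hn a b
      have hms : MeasurableSet {y : S9.EE m | ∀ j, a j ≤ (y j : EReal) ∧ (y j : EReal) ≤ b j} := by
        rw [Set.ofPred_forall]
        refine MeasurableSet.iInter fun j => ?_
        have hmj : Measurable fun y : S9.EE m => (y j : EReal) :=
          measurable_coe_real_ereal.comp (measurable_pi_apply j)
        exact hmj measurableSet_Icc
      rw [← S9.map_convPow, ← S9.map_cpois, map_measureReal_apply hL hms,
        map_measureReal_apply hL hms] at h1
      refine le_trans h1 ?_
      gcongr
      linarith
    · exact ⟨1, one_pos, fun d n hm' => absurd hm' hm⟩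
  choose C hC h using key
  exact ⟨C, hC, fun d m n _ hm hn F hP hF => h m d n hm hn F hP hF⟩
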